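/- There exist only finitely many pairs of integers (q, a₁) with q ≥ 2 and a₁² ≤ 4q such that the pair (q, a₁) is ordinary (i.e., β is not a root of unity) and −aₙ = ⌊2·q^{n/2}⌋ for some integer n ≥ 13. -/

import Mathlib

/-!
Put `x = α ^ 2 / q`, so that `‖x‖ = 1`. For `n = 2 k` the equation says `(α ^ k + ᾱ ^ k) ^ 2 = 0`,
and `α / √q` is a root of unity. For odd `n` it forces `‖x - ω‖ ^ 4 * q ^ n ≤ 1` with
`ω = exp (2 π i m / n)` for some `m ≤ n`, and this bounds first `n` and then `q`.

* A nonzero value at `x` of an integer polynomial of degree `J` is at least `q ^ (-J)` in absolute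
  value, as `α` is an imaginary quadratic integer. The pigeonhole principle gives integers `c k j`,
  not all zero, with `∑ c k j * t.choose k * exp (2 π i j t / n)` small at all integers `t` of a
  long interval. At `t = r m + s n` the exponential is `ω ^ (j r)`; replacing `ω` by `x` leaves the
  sum so small that it vanishes. For large `n` this contradicts a zero estimate for exponential
  polynomials.

* For fixed `n = 2 d + 1`, the rational number `x + x⁻¹ = a ^ 2 / q - 2`, whose denominator divides
  `q`, approximates `2 cos (2 π m / n)`, an algebraic integer of degree at most `d`, with exponent
  about `(2 d + 1) / 4`. For `d ≥ 7` this exceeds Dyson's exponent `√(2 d)`; for `d = 6` it does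
  not, as `13 / 4 < √12`. There one takes auxiliary polynomials `A + c B` of index `t` at `(c, c)`
  with `B` of index `s < t`, and puts a third approximation `w` in the place of `c` in `A + c B`.
-/

open Polynomial

namespace OrdinaryPairs

/-! ### A zero estimate for exponential polynomials -/

section PolynomialMatrices

variable {R : Type*} [CommRing R]

lemma coeff_prod_sum_of_natDegree_le {ι : Type*} (s : Finset ι) (f : ι → R[X]) (d : ι → ℕ)
    (h : ∀ i ∈ s, (f i).natDegree ≤ d i) :
    (∏ i ∈ s, f i).coeff (∑ i ∈ s, d i) = ∏ i ∈ s, (f i).coeff (d i) := by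
  classical
  induction s using Finset.induction_on with
  | empty => simp
  | insert a s ha ih =>
    have hs : ∀ i ∈ s, (f i).natDegree ≤ d i := fun i hi => h i (Finset.mem_insert_of_mem hi)
    rw [Finset.prod_insert ha, Finset.sum_insert ha, Finset.prod_insert ha,
      coeff_mul_add_eq_of_natDegree_le (h a (Finset.mem_insert_self _ _))
        ((natDegree_prod_le _ _).trans (Finset.sum_le_sum hs)), ih hs]

variable {n : Type*} [Fintype n] [DecidableEq n]

lemma natDegree_det_le_sum (M : Matrix n n R[X]) (d : n → ℕ)
    (h : ∀ i j, (M i j).natDegree ≤ d j) : M.det.natDegree ≤ ∑ j, d j := by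
  rw [Matrix.det_apply]
  refine natDegree_sum_le_of_forall_le _ _ fun σ _ => (natDegree_smul_le _ _).trans ?_
  exact (natDegree_prod_le _ _).trans (Finset.sum_le_sum fun _ _ => h _ _)

lemma coeff_det_sum_of_natDegree_le (M : Matrix n n R[X]) (d : n → ℕ)
    (h : ∀ i j, (M i j).natDegree ≤ d j) :
    M.det.coeff (∑ j, d j) = (Matrix.of fun i j => (M i j).coeff (d j)).det := by
  rw [Matrix.det_apply, Matrix.det_apply, finsetSum_coeff]
  refine Finset.sum_congr rfl fun σ _ => ?_
  rw [coeff_smul, coeff_prod_sum_of_natDegree_le _ (fun i => M (σ i) i) d fun i _ => h _ _]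
  rfl

end PolynomialMatrices

section ExponentialZeroEstimate

variable {F : Type*} [Field F]

lemma pow_injective_of_not_isOfFinOrder {x : F} (hx : ¬ IsOfFinOrder x) (hx0 : x ≠ 0) :
    Function.Injective fun k : ℕ => x ^ k := by
  lift x to Fˣ using hx0.isUnit
  rw [Units.isOfFinOrder_val, ← injective_pow_iff_not_isOfFinOrder] at hx
  exact fun i j hij => hx (Units.ext (by simpa using hij))

/-- The matrix of the functions `t ↦ y j ^ r * p j (t)` and their translates under
`(r, t) ↦ (r + 1, t + u)`: row `i` holds the `i`-th translates, with `y j ^ r` factored out. -/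
noncomputable def translateMatrix {k : ℕ} (y : Fin k → F) (p : Fin k → F[X]) (u : F) :
    Matrix (Fin k) (Fin k) F[X] :=
  .of fun i j => C (y j ^ (i : ℕ)) * taylor (i * u) (p j)

lemma natDegree_translateMatrix_le {k : ℕ} (y : Fin k → F) (p : Fin k → F[X]) (u : F)
    (i j : Fin k) : (translateMatrix y p u i j).natDegree ≤ (p j).natDegree :=
  (natDegree_C_mul_le _ _).trans (natDegree_taylor _ _).le

-- The top coefficient is the product of the leading coefficients and a Vandermonde determinant.
lemma det_translateMatrix_ne_zero {k : ℕ} {y : Fin k → F} (hy : Function.Injective y)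
    {p : Fin k → F[X]} (hp : ∀ j, p j ≠ 0) (u : F) : (translateMatrix y p u).det ≠ 0 := by
  have hcoeff : (Matrix.of fun i j => (translateMatrix y p u i j).coeff (p j).natDegree) =
      .of fun i j => (p j).leadingCoeff * (Matrix.vandermonde y).transpose i j := by
    ext i j
    have htop := leadingCoeff_taylor ((i : ℕ) * u) (p j)
    rw [leadingCoeff, natDegree_taylor] at htop
    simp only [translateMatrix, Matrix.of_apply, coeff_C_mul, htop, Matrix.transpose_apply,
      Matrix.vandermonde_apply]
    exact mul_comm _ _
  intro hdet
  have htop := coeff_det_sum_of_natDegree_le _ _ (natDegree_translateMatrix_le y p u)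
  rw [hdet, coeff_zero, hcoeff, Matrix.det_mul_row, Matrix.det_transpose] at htop
  exact mul_ne_zero (Finset.prod_ne_zero_iff.2 fun j _ => leadingCoeff_ne_zero.2 (hp j))
    (Matrix.det_vandermonde_ne_zero_iff.2 hy) htop.symm

lemma eval_det_translateMatrix_eq_zero {k : ℕ} (hk : 0 < k) {y : Fin k → F} (hy : ∀ j, y j ≠ 0)
    (p : Fin k → F[X]) (u t : F) (r : ℕ)
    (h : ∀ i < k, ∑ j, (p j).eval (t + i * u) * y j ^ (r + i) = 0) :
    (translateMatrix y p u).det.eval t = 0 := by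
  rw [← coe_evalRingHom, RingHom.map_det, ← Matrix.exists_mulVec_eq_zero_iff]
  refine ⟨fun j => y j ^ r, fun h0 => pow_ne_zero r (hy ⟨0, hk⟩) (congrFun h0 ⟨0, hk⟩), ?_⟩
  ext i
  rw [Pi.zero_apply, ← h i i.2]
  rw [Matrix.mulVec, dotProduct]
  refine Finset.sum_congr rfl fun j _ => ?_
  simp only [translateMatrix, RingHom.mapMatrix_apply, Matrix.map_apply, Matrix.of_apply,
    coe_evalRingHom, eval_mul, eval_C, taylor_eval]
  ring

theorem exponentialPolynomial_zero_estimate {ι : Type*} [Fintype ι] {y : ι → F}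
    (hy : Function.Injective y) (hy0 : ∀ l, y l ≠ 0) {p : ι → F[X]} {K R S : ℕ} {u v : F}
    (hdeg : ∀ l, (p l).natDegree < K)
    (hinj : Set.InjOn (fun rs : ℕ × ℕ => rs.1 * u + rs.2 * v)
      (Finset.range R ×ˢ Finset.range S : Finset (ℕ × ℕ)))
    (hcard : K * Fintype.card ι ≤ R * S)
    (hzero : ∀ r < R + Fintype.card ι, ∀ s < S,
      ∑ l, (p l).eval (r * u + s * v) * y l ^ r = 0) :
    p = 0 := by
  classical
  by_contra hp
  obtain ⟨l₀, hl₀⟩ := Function.ne_iff.1 hp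
  let ι' := {l // p l ≠ 0}
  have hk0 : 0 < Fintype.card ι' := Fintype.card_pos_iff.2 ⟨⟨l₀, hl₀⟩⟩
  have hk : Fintype.card ι' ≤ Fintype.card ι := Fintype.card_subtype_le _
  let e : Fin (Fintype.card ι') ≃ ι' := (Fintype.equivFin ι').symm
  set M := translateMatrix (fun j => y (e j)) (fun j => p (e j)) u
  have he : Function.Injective fun j => (e j : ι) := Subtype.val_injective.comp e.injective
  have hsum : ∀ t : F, ∀ r : ℕ, ∑ j, (p (e j)).eval t * y (e j) ^ r =
      ∑ l, (p l).eval t * y l ^ r := fun t r => by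
    refine Fintype.sum_of_injective _ he _ _ (fun l hl => ?_) fun _ => rfl
    have hpl : p l = 0 := by
      by_contra h
      exact hl ⟨e.symm ⟨l, h⟩, congrArg Subtype.val (e.apply_symm_apply _)⟩
    rw [hpl, eval_zero, zero_mul]
  refine det_translateMatrix_ne_zero (hy.comp he) (fun j => (e j).2) u
    (eq_zero_of_natDegree_lt_card_of_eval_eq_zero' _
      ((Finset.range R ×ˢ Finset.range S).image fun rs : ℕ × ℕ => rs.1 * u + rs.2 * v) ?_ ?_)
  · rintro t ht
    obtain ⟨⟨r, s⟩, hrs, rfl⟩ := Finset.mem_image.1 ht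
    simp only [Finset.mem_product, Finset.mem_range] at hrs
    refine eval_det_translateMatrix_eq_zero hk0 (fun j => hy0 _) _ u _ r fun i hi => ?_
    rw [hsum, ← hzero (r + i) (by omega) s hrs.2]
    push_cast
    simp only [add_mul, add_right_comm]
  · rw [Finset.card_image_of_injOn hinj, Finset.card_product, Finset.card_range, Finset.card_range]
    calc M.det.natDegree
        ≤ ∑ j, (p (e j)).natDegree := natDegree_det_le_sum _ _ (natDegree_translateMatrix_le _ _ u)
      _ < ∑ _j : Fin (Fintype.card ι'), K :=
        Finset.sum_lt_sum_of_nonempty ⟨⟨0, hk0⟩, Finset.mem_univ _⟩ fun j _ => hdeg _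
      _ = K * Fintype.card ι' := by
        rw [Finset.sum_const, Finset.card_univ, Fintype.card_fin, smul_eq_mul, mul_comm]
      _ ≤ R * S := (Nat.mul_le_mul_left K hk).trans hcard

end ExponentialZeroEstimate

/-! ### Numbers close to a root of unity -/

section RingSeminorms

variable {R : Type*} [CommRing R] (N : RingSeminorm R)

lemma ringSeminorm_sum_le {ι : Type*} (s : Finset ι) (f : ι → R) :
    N (∑ i ∈ s, f i) ≤ ∑ i ∈ s, N (f i) :=
  Finset.le_sum_of_subadditive N (map_zero N).le (map_add_le_add N) s f

lemma ringSeminorm_prod_le {ι : Type*} (hone : N 1 ≤ 1) {s : Finset ι} {f : ι → R} {B : ι → ℝ}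
    (h : ∀ i ∈ s, N (f i) ≤ B i) : N (∏ i ∈ s, f i) ≤ ∏ i ∈ s, B i := by
  classical
  induction s using Finset.induction_on with
  | empty => simpa
  | insert a s ha ih =>
    rw [Finset.prod_insert ha, Finset.prod_insert ha]
    have hNa := h a (Finset.mem_insert_self _ _)
    exact (map_mul_le_mul N _ _).trans (mul_le_mul hNa
      (ih fun i hi => h i (Finset.mem_insert_of_mem hi)) (apply_nonneg N _)
      ((apply_nonneg N _).trans hNa))

lemma ringSeminorm_det_le {n : Type*} [Fintype n] [DecidableEq n] (hone : N 1 ≤ 1)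
    (M : Matrix n n R) {B : ℝ} (h : ∀ i j, N (M i j) ≤ B) :
    N M.det ≤ (Fintype.card n).factorial * B ^ Fintype.card n := by
  have hterm : ∀ σ : Equiv.Perm n,
      N (Equiv.Perm.sign σ • ∏ i, M (σ i) i) ≤ B ^ Fintype.card n := fun σ => by
    have hsign : N (Equiv.Perm.sign σ • ∏ i, M (σ i) i) = N (∏ i, M (σ i) i) := by
      rcases Int.units_eq_one_or (Equiv.Perm.sign σ) with hσ | hσ <;> simp [hσ]
    rw [hsign, ← Finset.card_univ, ← Finset.prod_const]
    exact ringSeminorm_prod_le N hone fun i _ => h _ _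
  rw [Matrix.det_apply]
  refine (ringSeminorm_sum_le N _ _).trans ((Finset.sum_le_sum fun σ _ => hterm σ).trans_eq ?_)
  rw [Finset.sum_const, Finset.card_univ, Fintype.card_perm, nsmul_eq_mul]

lemma sum_seminorm_coeff_eq_sum_range {p : R[X]} {n : ℕ} (h : p.natDegree < n) :
    (p.sum fun _ c => N c) = ∑ i ∈ Finset.range n, N (p.coeff i) :=
  sum_over_range' p (fun _ => map_zero N) n h

lemma sum_seminorm_coeff_add_le (p q : R[X]) :
    ((p + q).sum fun _ c => N c) ≤ (p.sum fun _ c => N c) + q.sum fun _ c => N c := by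
  have hdeg := natDegree_add_le p q
  rw [sum_seminorm_coeff_eq_sum_range N (Nat.lt_succ_of_le hdeg),
    sum_seminorm_coeff_eq_sum_range N (Nat.lt_succ_of_le (le_max_left p.natDegree q.natDegree)),
    sum_seminorm_coeff_eq_sum_range N (Nat.lt_succ_of_le (le_max_right p.natDegree q.natDegree)),
    ← Finset.sum_add_distrib]
  refine Finset.sum_le_sum fun i _ => ?_
  rw [coeff_add]
  exact map_add_le_add N _ _

lemma sum_seminorm_coeff_mul_le (p q : R[X]) :
    ((p * q).sum fun _ c => N c) ≤ (p.sum fun _ c => N c) * q.sum fun _ c => N c := by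
  let ℓ : R[X] → ℝ := fun f => f.sum fun _ c => N c
  have hℓ_zero : ℓ 0 = 0 := sum_zero_index _
  have hℓ_sum : ∀ (s : Finset ℕ) (f : ℕ → R[X]), ℓ (∑ i ∈ s, f i) ≤ ∑ i ∈ s, ℓ (f i) :=
    Finset.le_sum_of_subadditive ℓ hℓ_zero.le (sum_seminorm_coeff_add_le N)
  have hℓ_monomial : ∀ (i : ℕ) (c : R), ℓ (monomial i c) = N c :=
    fun i c => sum_monomial_index (f := fun _ c => N c) c (map_zero N)
  calc ℓ (p * q)
      = ℓ (∑ i ∈ p.support, ∑ j ∈ q.support, monomial (i + j) (p.coeff i * q.coeff j)) := by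
        rw [mul_eq_sum_sum]; rfl
    _ ≤ ∑ i ∈ p.support, ∑ j ∈ q.support, N (p.coeff i) * N (q.coeff j) := by
        refine (hℓ_sum _ _).trans (Finset.sum_le_sum fun i _ => ?_)
        refine (hℓ_sum _ _).trans (Finset.sum_le_sum fun j _ => ?_)
        rw [hℓ_monomial]
        exact map_mul_le_mul N _ _
    _ = ℓ p * ℓ q := Finset.sum_mul_sum _ _ _ _ |>.symm

/-- The `ℓ¹` seminorm on polynomials induced by a ring seminorm `N` on the coefficients: the sum
of the values of `N` at the coefficients. -/
noncomputable def l1Seminorm : RingSeminorm R[X] where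
  toFun p := p.sum fun _ c => N c
  map_zero' := sum_zero_index _
  add_le' := sum_seminorm_coeff_add_le N
  neg' p := by simp only [sum_def, support_neg, coeff_neg, map_neg_eq_map]
  mul_le' := sum_seminorm_coeff_mul_le N

lemma l1Seminorm_eq_sum_range {p : R[X]} {n : ℕ} (h : p.natDegree < n) :
    l1Seminorm N p = ∑ i ∈ Finset.range n, N (p.coeff i) :=
  sum_seminorm_coeff_eq_sum_range N h

lemma coeff_le_l1Seminorm (p : R[X]) (i : ℕ) : N (p.coeff i) ≤ l1Seminorm N p := by
  rw [l1Seminorm_eq_sum_range N (Nat.lt_succ_of_le (le_max_left p.natDegree i))]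
  exact Finset.single_le_sum (f := fun i => N (p.coeff i)) (fun i _ => apply_nonneg N _)
    (Finset.mem_range.2 (Nat.lt_succ_of_le (le_max_right _ _)))

lemma l1Seminorm_monomial (i : ℕ) (c : R) : l1Seminorm N (monomial i c) = N c :=
  sum_monomial_index (f := fun _ c => N c) c (map_zero N)

lemma l1Seminorm_C (c : R) : l1Seminorm N (C c) = N c := l1Seminorm_monomial N 0 c

lemma l1Seminorm_C_mul_X (c : R) : l1Seminorm N (C c * X) = N c := by
  rw [C_mul_X_eq_monomial, l1Seminorm_monomial]

lemma l1Seminorm_one : l1Seminorm N 1 = N 1 := l1Seminorm_C N 1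

end RingSeminorms

section Liouville

variable {q a : ℤ} {α : ℂ}

lemma exists_int_pow_eq_add_mul {A : Type*} [CommRing A] {x : A} (hx : x ^ 2 = a * x - q) (i : ℕ) :
    ∃ u v : ℤ, x ^ i = u + v * x := by
  induction i with
  | zero => exact ⟨1, 0, by simp⟩
  | succ i ih =>
    obtain ⟨u, v, huv⟩ := ih
    refine ⟨-(v * q), u + v * a, ?_⟩
    rw [pow_succ, huv]
    push_cast
    linear_combination (v : A) * hx

lemma sq_eq_of_conj (htrace : α + starRingEnd ℂ α = a) (hnorm : α * starRingEnd ℂ α = q) :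
    α ^ 2 = a * α - q := by
  rw [← htrace, ← hnorm]
  ring

-- The norm form of the quadratic order takes positive integer values.
lemma one_le_norm_int_add_int_mul (htrace : α + starRingEnd ℂ α = a)
    (hnorm : α * starRingEnd ℂ α = q) {u v : ℤ} (h0 : (u + v * α : ℂ) ≠ 0) :
    1 ≤ ‖(u + v * α : ℂ)‖ := by
  have hnormSq : Complex.normSq (u + v * α) = ((u ^ 2 + u * v * a + v ^ 2 * q : ℤ) : ℝ) := by
    have h : (Complex.normSq (u + v * α) : ℂ) = ((u ^ 2 + u * v * a + v ^ 2 * q : ℤ) : ℂ) := by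
      rw [← Complex.mul_conj]
      push_cast
      rw [map_add, map_mul, map_intCast, map_intCast, ← htrace, ← hnorm]
      ring
    exact_mod_cast h
  have hpos := Complex.normSq_pos.2 h0
  rw [hnormSq, Int.cast_pos] at hpos
  rw [← one_le_sq_iff₀ (norm_nonneg _), ← Complex.normSq_eq_norm_sq, hnormSq]
  exact_mod_cast hpos

lemma exists_int_aeval_mul_pow_eq (hα : α ^ 2 = a * α - q) (hq : q ≠ 0) {P : ℤ[X]} {J : ℕ}
    (hJ : P.natDegree ≤ J) :
    ∃ u v : ℤ, aeval (α ^ 2 / q) P * (q : ℂ) ^ J = u + v * α := by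
  have hterm : ∀ i ∈ Finset.range (P.natDegree + 1), ∃ u v : ℤ,
      (P.coeff i • (α ^ 2 / (q : ℂ)) ^ i) * (q : ℂ) ^ J = u + v * α := by
    intro i hi
    obtain ⟨u, v, huv⟩ := exists_int_pow_eq_add_mul hα (2 * i)
    refine ⟨P.coeff i * q ^ (J - i) * u, P.coeff i * q ^ (J - i) * v, ?_⟩
    have : (q : ℂ) ≠ 0 := Int.cast_ne_zero.2 hq
    rw [← Nat.sub_add_cancel ((Finset.mem_range_succ_iff.1 hi).trans hJ), pow_add, div_pow,
      ← pow_mul, huv, zsmul_eq_mul, Nat.sub_add_cancel ((Finset.mem_range_succ_iff.1 hi).trans hJ)]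
    push_cast
    field_simp
  choose! u v huv using hterm
  refine ⟨∑ i ∈ Finset.range (P.natDegree + 1), u i,
    ∑ i ∈ Finset.range (P.natDegree + 1), v i, ?_⟩
  rw [aeval_eq_sum_range, Finset.sum_mul, Finset.sum_congr rfl huv, Finset.sum_add_distrib,
    Int.cast_sum, Int.cast_sum, Finset.sum_mul]

theorem one_le_norm_aeval_mul_pow (htrace : α + starRingEnd ℂ α = a)
    (hnorm : α * starRingEnd ℂ α = q) (hq : 0 < q) {P : ℤ[X]} {J : ℕ} (hJ : P.natDegree ≤ J)
    (h0 : aeval (α ^ 2 / q) P ≠ 0) : 1 ≤ ‖aeval (α ^ 2 / q) P‖ * (q : ℝ) ^ J := by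
  obtain ⟨u, v, huv⟩ := exists_int_aeval_mul_pow_eq (sq_eq_of_conj htrace hnorm) hq.ne' hJ
  have hne : (u + v * α : ℂ) ≠ 0 :=
    huv ▸ mul_ne_zero h0 (pow_ne_zero _ (Int.cast_ne_zero.2 hq.ne'))
  calc 1 ≤ ‖(u + v * α : ℂ)‖ := one_le_norm_int_add_int_mul htrace hnorm hne
    _ = ‖aeval (α ^ 2 / q) P‖ * (q : ℝ) ^ J := by
      rw [← huv, norm_mul, norm_pow, Complex.norm_intCast, abs_of_pos (Int.cast_pos.2 hq)]

end Liouville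

section Pigeonhole

variable {ι φ : Type*} [Fintype ι] [Fintype φ]

lemma card_box_lt_card_box {A : ℕ} (hA : 1 ≤ A) {M N : ℕ} (hMN : 3 * M ≤ N) (hN : 0 < N) :
    (2 * A ^ 2 + 1) ^ M < (A + 1) ^ N := by
  rcases Nat.eq_zero_or_pos M with rfl | hM
  · exact Nat.one_lt_pow hN.ne' (by omega)
  · calc (2 * A ^ 2 + 1) ^ M < ((A + 1) ^ 3) ^ M := Nat.pow_lt_pow_left (by nlinarith) hM.ne'
      _ = (A + 1) ^ (3 * M) := (pow_mul _ _ _).symm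
      _ ≤ (A + 1) ^ N := Nat.pow_le_pow_right A.succ_pos hMN

lemma abs_linearForm_mul_div_le {a : ι → ℝ} {B : ℝ} (hB : 0 < B) (ha : ∑ i, |a i| ≤ B) {A : ℕ}
    {c : ι → ℕ} (hc : ∀ i, c i ≤ A) : |(∑ i, a i * c i) * (A / B)| ≤ (A : ℝ) ^ 2 := by
  have hlin : |∑ i, a i * c i| ≤ B * A :=
    calc |∑ i, a i * c i| ≤ ∑ i, |a i| * A := by
          refine (Finset.abs_sum_le_sum_abs _ _).trans (Finset.sum_le_sum fun i _ => ?_)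
          rw [abs_mul, Nat.abs_cast]
          exact mul_le_mul_of_nonneg_left (Nat.cast_le.2 (hc i)) (abs_nonneg _)
      _ ≤ B * A := by
          rw [← Finset.sum_mul]
          exact mul_le_mul_of_nonneg_right ha A.cast_nonneg
  have hAB : (0 : ℝ) ≤ A / B := by positivity
  calc |(∑ i, a i * c i) * (A / B)| ≤ B * A * (A / B) := by
        rw [abs_mul, abs_of_nonneg hAB]
        exact mul_le_mul_of_nonneg_right hlin hAB
    _ = (A : ℝ) ^ 2 := by field_simp

-- Pigeonhole on the integer parts of the linear forms, rescaled to have range `[-A², A²]`.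
theorem exists_int_ne_zero_forall_abs_sum_mul_le {a : φ → ι → ℝ} {B : ℝ} (hB : 0 < B)
    (ha : ∀ f, ∑ i, |a f i| ≤ B) {A : ℕ} (hA : 1 ≤ A)
    (hcard : 3 * Fintype.card φ ≤ Fintype.card ι) (hι : 0 < Fintype.card ι) :
    ∃ c : ι → ℤ, c ≠ 0 ∧ (∀ i, |c i| ≤ A) ∧ ∀ f, |∑ i, a f i * c i| ≤ B / A := by
  classical
  have hA0 : (0 : ℝ) < A := Nat.cast_pos.2 hA
  let box : Finset (ι → ℕ) := Fintype.piFinset fun _ => Finset.range (A + 1)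
  let cells : Finset (φ → ℤ) := Fintype.piFinset fun _ => Finset.Icc (-(A : ℤ) ^ 2) ((A : ℤ) ^ 2)
  let cell : (ι → ℕ) → φ → ℤ := fun c f => ⌊(∑ i, a f i * c i) * (A / B)⌋
  have hlt : cells.card < box.card := by
    have hIcc : ((A : ℤ) ^ 2 + 1 - -(A : ℤ) ^ 2).toNat = 2 * A ^ 2 + 1 := by
      rw [show (A : ℤ) ^ 2 + 1 - -(A : ℤ) ^ 2 = ((2 * A ^ 2 + 1 : ℕ) : ℤ) by push_cast; ring,
        Int.toNat_natCast]
    simp only [box, cells, Fintype.card_piFinset, Finset.card_range, Int.card_Icc,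
      Finset.prod_const, Finset.card_univ, hIcc]
    exact card_box_lt_card_box hA hcard hι
  have hmaps : ∀ c ∈ box, cell c ∈ cells := fun c hc => by
    simp only [box, cells, Fintype.mem_piFinset, Finset.mem_range_succ_iff, Finset.mem_Icc] at hc ⊢
    intro f
    obtain ⟨hlower, hupper⟩ := abs_le.1 (abs_linearForm_mul_div_le hB (ha f) hc)
    exact ⟨Int.le_floor.2 (by exact_mod_cast hlower),
      by exact_mod_cast (Int.floor_le _).trans hupper⟩
  obtain ⟨c, hc, c', hc', hne, heq⟩ := Finset.exists_ne_map_eq_of_card_lt_of_maps_to hlt hmaps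
  simp only [box, Fintype.mem_piFinset, Finset.mem_range] at hc hc'
  refine ⟨fun i => (c i : ℤ) - c' i, fun h => hne ?_, fun i => ?_, fun f => ?_⟩
  · ext i
    exact Int.ofNat_inj.1 (sub_eq_zero.1 (congrFun h i))
  · have := hc i
    have := hc' i
    simp only [abs_le]
    omega
  · have hfloor := Int.abs_sub_lt_one_of_floor_eq_floor (congrFun heq f)
    rw [← sub_mul, ← Finset.sum_sub_distrib, abs_mul, abs_of_pos (div_pos hA0 hB),
      ← mul_div_assoc, div_lt_one hB] at hfloor
    rw [le_div_iff₀ hA0]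
    simpa only [Int.cast_sub, Int.cast_natCast, mul_sub] using hfloor.le

lemma exists_int_ne_zero_forall_norm_sum_mul_le {a : φ → ι → ℂ} {B : ℝ} (hB : 0 < B)
    (ha : ∀ f i, ‖a f i‖ ≤ B) {A : ℕ} (hA : 1 ≤ A)
    (hcard : 6 * Fintype.card φ ≤ Fintype.card ι) (hι : 0 < Fintype.card ι) :
    ∃ c : ι → ℤ, c ≠ 0 ∧ (∀ i, |c i| ≤ A) ∧
      ∀ f, ‖∑ i, c i * a f i‖ ≤ 2 * (Fintype.card ι * B / A) := by
  let reIm : φ × Bool → ι → ℝ := fun f i => if f.2 then (a f.1 i).re else (a f.1 i).im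
  have hreIm : ∀ f, ∑ i, |reIm f i| ≤ Fintype.card ι * B := fun f => by
    rw [← nsmul_eq_mul]
    refine Finset.sum_le_card_nsmul _ _ _ fun i _ => ?_
    rcases f with ⟨f, _ | _⟩
    · exact (Complex.abs_im_le_norm _).trans (ha f i)
    · exact (Complex.abs_re_le_norm _).trans (ha f i)
  obtain ⟨c, hc0, hcA, hc⟩ := exists_int_ne_zero_forall_abs_sum_mul_le
    (mul_pos (Nat.cast_pos.2 hι) hB) hreIm hA
    (by rw [Fintype.card_prod, Fintype.card_bool]; omega) hι
  refine ⟨c, hc0, hcA, fun f => (Complex.norm_le_abs_re_add_abs_im _).trans ?_⟩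
  have hre : (∑ i, c i * a f i).re = ∑ i, reIm (f, true) i * c i := by
    rw [Complex.re_sum]
    exact Finset.sum_congr rfl fun i _ => by simp [reIm, mul_comm]
  have him : (∑ i, c i * a f i).im = ∑ i, reIm (f, false) i * c i := by
    rw [Complex.im_sum]
    exact Finset.sum_congr rfl fun i _ => by simp [reIm, mul_comm]
  rw [hre, him, two_mul]
  exact add_le_add (hc _) (hc _)

theorem exists_int_ne_zero_norm_sum_eval_le {G : ι → ℂ[X]} {m : ℕ} {B : ℝ} (hB : 0 < B)
    (hdeg : ∀ i, (G i).natDegree < m) (hG : ∀ i j, ‖(G i).coeff j‖ ≤ B) {A : ℕ} (hA : 1 ≤ A)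
    (hcard : 6 * m ≤ Fintype.card ι) (hι : 0 < Fintype.card ι) :
    ∃ c : ι → ℤ, c ≠ 0 ∧ (∀ i, |c i| ≤ A) ∧ ∀ u : ℂ, ‖u‖ ≤ 1 →
      ‖∑ i, c i * (G i).eval u‖ ≤ m * (2 * (Fintype.card ι * B / A)) := by
  obtain ⟨c, hc0, hcA, hc⟩ := exists_int_ne_zero_forall_norm_sum_mul_le
    (a := fun (j : Fin m) i => (G i).coeff j) hB (fun j i => hG i j) hA
    (by rwa [Fintype.card_fin]) hι
  refine ⟨c, hc0, hcA, fun u hu => ?_⟩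
  have hexpand : ∑ i, c i * (G i).eval u =
      ∑ j : Fin m, (∑ i, c i * (G i).coeff j) * u ^ (j : ℕ) := by
    simp_rw [fun i => eval_eq_sum_range' (hdeg i) u, ← Fin.sum_univ_eq_sum_range
      (fun j => (G _).coeff j * u ^ j), Finset.mul_sum, Finset.sum_mul, mul_assoc]
    exact Finset.sum_comm
  rw [hexpand]
  refine (norm_sum_le _ _).trans ((Finset.sum_le_card_nsmul _ _ _ fun j _ => ?_).trans_eq
    (by rw [Finset.card_univ, Fintype.card_fin, nsmul_eq_mul]))
  rw [norm_mul, norm_pow]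
  exact (mul_le_of_le_one_right (norm_nonneg _) (pow_le_one₀ (norm_nonneg u) hu)).trans (hc j)

end Pigeonhole

section BinomialAndExponential

lemma pow_div_factorial_le_three_pow (K k : ℕ) : (K : ℝ) ^ k / k.factorial ≤ 3 ^ K := by
  refine (Real.pow_div_factorial_le_exp _ K.cast_nonneg k).trans ?_
  rw [← Real.exp_one_pow]
  gcongr
  exact Real.exp_one_lt_three.le

lemma pow_div_factorial_le_of_le_mul {n K k : ℕ} (hn : 0 < n) (hk : k < K) {y : ℕ}
    (hy : y ≤ 3 * n * K) : (y : ℝ) ^ k / k.factorial ≤ (9 * n) ^ K := by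
  have hn' : (1 : ℝ) ≤ 3 * n := by
    have : (1 : ℝ) ≤ n := Nat.one_le_cast.2 hn
    linarith
  calc (y : ℝ) ^ k / k.factorial ≤ (3 * n * K) ^ k / k.factorial := by gcongr; exact_mod_cast hy
    _ = (3 * n) ^ k * ((K : ℝ) ^ k / k.factorial) := by rw [mul_pow _ (K : ℝ), mul_div_assoc]
    _ ≤ (3 * n) ^ K * 3 ^ K := by
        gcongr ?_ * ?_
        · exact pow_le_pow_right₀ hn' hk.le
        · exact pow_div_factorial_le_three_pow K k
    _ = (9 * n) ^ K := by rw [← mul_pow]; ring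

lemma choose_le_of_le_mul {n K k t : ℕ} (hn : 0 < n) (hk : k < K) (ht : t ≤ 3 * n * K) :
    (t.choose k : ℝ) ≤ (9 * n) ^ K :=
  (Nat.choose_le_pow_div k t).trans (pow_div_factorial_le_of_le_mul hn hk ht)

/-- The binomial coefficient polynomial `X.choose k` in the variable rescaled by `T`, so that
the integer points `0 ≤ t ≤ T` correspond to `t / T` in the unit disc. -/
noncomputable def scaledBinomial (T k : ℕ) : ℂ[X] :=
  C (1 / (k.factorial : ℂ)) * ∏ i ∈ Finset.range k, (C (T : ℂ) * X - C (i : ℂ))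

lemma eval_scaledBinomial {T : ℕ} (hT : T ≠ 0) (k t : ℕ) :
    (scaledBinomial T k).eval ((t : ℂ) / T) = t.choose k := by
  have hprod : (∏ i ∈ Finset.range k, (C (T : ℂ) * X - C (i : ℂ))).eval ((t : ℂ) / T) =
      (t.descFactorial k : ℂ) := by
    rw [eval_prod, ← descPochhammer_eval_eq_descFactorial, descPochhammer_eval_eq_prod_range]
    refine Finset.prod_congr rfl fun i _ => ?_
    rw [eval_sub, eval_mul, eval_C, eval_X, eval_C, mul_div_cancel₀ _ (Nat.cast_ne_zero.2 hT)]
  rw [scaledBinomial, eval_mul, eval_C, hprod, Nat.descFactorial_eq_factorial_mul_choose,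
    Nat.cast_mul, one_div, inv_mul_cancel_left₀ (Nat.cast_ne_zero.2 k.factorial_ne_zero)]

lemma natDegree_scaledBinomial_le (T k : ℕ) : (scaledBinomial T k).natDegree ≤ k := by
  refine (natDegree_C_mul_le _ _).trans ((natDegree_prod_le _ _).trans ?_)
  refine (Finset.sum_le_card_nsmul _ _ 1 fun i _ => ?_).trans (by simp)
  compute_degree

lemma l1Seminorm_scaledBinomial_le (T k : ℕ) :
    l1Seminorm (normRingSeminorm ℂ) (scaledBinomial T k) ≤ ((T + k : ℕ) : ℝ) ^ k / k.factorial := by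
  have hone : l1Seminorm (normRingSeminorm ℂ) (1 : ℂ[X]) ≤ 1 :=
    (l1Seminorm_one _).trans_le (norm_one (α := ℂ)).le
  have hfactorial : l1Seminorm (normRingSeminorm ℂ) (C (1 / (k.factorial : ℂ))) =
      (k.factorial : ℝ)⁻¹ := by
    rw [l1Seminorm_C]
    change ‖(1 / (k.factorial : ℂ))‖ = _
    rw [one_div, norm_inv, Complex.norm_natCast]
  rw [scaledBinomial, div_eq_inv_mul (((T + k : ℕ) : ℝ) ^ k), ← hfactorial]
  refine (map_mul_le_mul _ _ _).trans (mul_le_mul_of_nonneg_left ?_ (apply_nonneg _ _))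
  refine (ringSeminorm_prod_le _ hone (B := fun _ => ((T + k : ℕ) : ℝ)) fun i hi => ?_).trans_eq
    (by rw [Finset.prod_const, Finset.card_range])
  refine (map_sub_le_add _ _ _).trans ?_
  rw [l1Seminorm_C, l1Seminorm_C_mul_X]
  change ‖(T : ℂ)‖ + ‖(i : ℂ)‖ ≤ _
  rw [Complex.norm_natCast, Complex.norm_natCast, ← Nat.cast_add]
  exact Nat.cast_le.2 (Nat.add_le_add_left (Finset.mem_range.1 hi).le T)

/-- The Taylor polynomial of degree less than `J` of the function `u ↦ exp (z * u)` at `0`. -/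
noncomputable def truncatedExp (z : ℂ) (J : ℕ) : ℂ[X] :=
  ∑ j ∈ Finset.range J, monomial j (z ^ j / (j.factorial : ℂ))

lemma natDegree_truncatedExp_lt (z : ℂ) {J : ℕ} (hJ : 0 < J) : (truncatedExp z J).natDegree < J :=
  (natDegree_sum_le_of_forall_le (n := J - 1) _ _ fun _ hj => (natDegree_monomial_le _).trans
    (Nat.le_sub_one_of_lt (Finset.mem_range.1 hj))).trans_lt (Nat.sub_one_lt hJ.ne')

lemma l1Seminorm_truncatedExp_le (z : ℂ) (J : ℕ) :
    l1Seminorm (normRingSeminorm ℂ) (truncatedExp z J) ≤ Real.exp ‖z‖ := by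
  refine (ringSeminorm_sum_le _ _ _).trans
    (le_of_eq_of_le ?_ (Real.sum_le_exp_of_nonneg (norm_nonneg z) J))
  refine Finset.sum_congr rfl fun j _ => ?_
  rw [l1Seminorm_monomial]
  change ‖z ^ j / (j.factorial : ℂ)‖ = _
  rw [norm_div, norm_pow, Complex.norm_natCast]

lemma eval_truncatedExp (z u : ℂ) (J : ℕ) :
    (truncatedExp z J).eval u = ∑ j ∈ Finset.range J, (z * u) ^ j / (j.factorial : ℂ) := by
  rw [truncatedExp, eval_finsetSum]
  refine Finset.sum_congr rfl fun j _ => ?_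
  rw [eval_monomial, mul_pow, mul_div_right_comm]

lemma norm_exp_sub_eval_truncatedExp_le {z u : ℂ} {J : ℕ} {ρ : ℝ} (hρ : ρ ≤ 1)
    (hzu : 3 * ‖z * u‖ ≤ ρ * J) :
    ‖Complex.exp (z * u) - (truncatedExp z J).eval u‖ ≤ 2 * ρ ^ J := by
  have hhalf : ‖z * u‖ / (J.succ : ℝ) ≤ 1 / 2 := by
    rw [div_le_div_iff₀ (by positivity) (by norm_num), Nat.cast_succ]
    nlinarith [norm_nonneg (z * u), J.cast_nonneg (α := ℝ)]
  rw [eval_truncatedExp]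
  refine (Complex.exp_bound' hhalf).trans ?_
  rw [mul_comm]
  refine mul_le_mul_of_nonneg_left ?_ zero_le_two
  calc ‖z * u‖ ^ J / J.factorial ≤ (ρ * J / 3) ^ J / J.factorial := by
        gcongr
        linarith
    _ = (ρ / 3) ^ J * ((J : ℝ) ^ J / J.factorial) := by
        rw [mul_div_right_comm, mul_pow, mul_div_assoc]
    _ ≤ (ρ / 3) ^ J * 3 ^ J := by
        refine mul_le_mul_of_nonneg_left (pow_div_factorial_le_three_pow J J) ?_
        rcases J.eq_zero_or_pos with rfl | hJ
        · rw [pow_zero]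
          exact zero_le_one
        · have hρJ : 0 ≤ ρ * J := (by positivity : 0 ≤ 3 * ‖z * u‖).trans hzu
          have := nonneg_of_mul_nonneg_left hρJ (Nat.cast_pos.2 hJ)
          positivity
    _ = ρ ^ J := by rw [← mul_pow, div_mul_cancel₀ ρ three_ne_zero]

end BinomialAndExponential

section AuxiliaryFunction

lemma l1Seminorm_scaledBinomial_mul_truncatedExp_le {T k K n : ℕ} (hn : 0 < n) (hk : k < K)
    (hT : T + K ≤ 3 * n * K) {z : ℂ} (hz : ‖z‖ ≤ K) (J : ℕ) :
    l1Seminorm (normRingSeminorm ℂ) (scaledBinomial T k * truncatedExp z J) ≤ (27 * n) ^ K := by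
  have hexp : Real.exp ‖z‖ ≤ 3 ^ K := by
    rw [← Real.exp_log three_pos, ← Real.exp_nat_mul, Real.exp_le_exp]
    have hlog : 1 ≤ Real.log 3 := (Real.le_log_iff_exp_le three_pos).2 Real.exp_one_lt_three.le
    exact hz.trans (le_mul_of_one_le_right K.cast_nonneg hlog)
  calc l1Seminorm (normRingSeminorm ℂ) (scaledBinomial T k * truncatedExp z J)
      ≤ (9 * n) ^ K * 3 ^ K := by
        refine (map_mul_le_mul _ _ _).trans (mul_le_mul ?_
          ((l1Seminorm_truncatedExp_le _ _).trans hexp) (apply_nonneg _ _) (by positivity))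
        exact (l1Seminorm_scaledBinomial_le T k).trans
          (pow_div_factorial_le_of_le_mul hn hk (by omega))
    _ = (27 * n) ^ K := by rw [← mul_pow]; ring

lemma norm_exponent_le {S l : ℕ} (hl : l ≤ 60) :
    ‖(4 * Real.pi * Complex.I * l * S : ℂ)‖ ≤ 780 * S := by
  have hnorm : ‖(4 * Real.pi * Complex.I * l * S : ℂ)‖ = 4 * (Real.pi * l) * S := by
    simp only [norm_mul, Complex.norm_real, Complex.norm_I, Complex.norm_natCast,
      Complex.norm_ofNat, Real.norm_of_nonneg Real.pi_pos.le]
    ring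
  have hl' : (l : ℝ) ≤ 60 := by exact_mod_cast hl
  have hpil : Real.pi * l ≤ 3.15 * 60 :=
    mul_le_mul Real.pi_lt_d2.le hl' l.cast_nonneg (by norm_num)
  rw [hnorm]
  gcongr
  linarith

variable {D S n A K : ℕ}

lemma norm_exp_sub_eval_truncatedExp_exponent_le (hD : 780 ≤ D) (hS : 0 < S) (hn : 0 < n)
    (hK : K = D * S) {l t : ℕ} (hl : l ≤ 60) (ht : t ≤ 2 * S * n) :
    ‖Complex.exp (2 * Real.pi * Complex.I * l * t / n) -
      (truncatedExp (4 * Real.pi * Complex.I * l * S) (9 * K)).eval ((t : ℂ) / (2 * S * n : ℕ))‖ ≤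
      2 * (260 / D) ^ (9 * K) := by
  have hn' : (n : ℂ) ≠ 0 := Nat.cast_ne_zero.2 hn.ne'
  have hS' : (S : ℂ) ≠ 0 := Nat.cast_ne_zero.2 hS.ne'
  have hD' : (780 : ℝ) ≤ D := by exact_mod_cast hD
  have hexponent : 2 * Real.pi * Complex.I * l * t / n =
      4 * Real.pi * Complex.I * l * S * ((t : ℂ) / (2 * S * n : ℕ)) := by
    push_cast
    field_simp
    ring
  have hu : ‖(t : ℂ) / (2 * S * n : ℕ)‖ ≤ 1 := by
    rw [norm_div, Complex.norm_natCast, Complex.norm_natCast]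
    exact div_le_one_of_le₀ (Nat.cast_le.2 ht) (Nat.cast_nonneg _)
  rw [hexponent]
  refine norm_exp_sub_eval_truncatedExp_le (div_le_one_of_le₀ (by linarith) (by linarith)) ?_
  calc 3 * ‖4 * Real.pi * Complex.I * l * S * ((t : ℂ) / (2 * S * n : ℕ))‖ ≤ 3 * (780 * S) := by
        rw [norm_mul]
        gcongr ?_ * ?_
        exact (mul_le_of_le_one_right (norm_nonneg _) hu).trans (norm_exponent_le hl)
    _ = 260 / D * (9 * K : ℕ) := by
        rw [hK]
        push_cast
        field_simp
        norm_num

lemma norm_sum_mul_choose_mul_le {c : Fin K × Fin 60 → ℤ} (hc : ∀ i, |c i| ≤ A) (hn : 0 < n)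
    {t : ℕ} (ht : t ≤ 3 * n * K) {e : Fin 60 → ℂ} {δ : ℝ} (he : ∀ l, ‖e l‖ ≤ δ) :
    ‖∑ i, (c i : ℂ) * (t.choose i.1 : ℂ) * e i.2‖ ≤ A * (60 * K) * (9 * n) ^ K * δ := by
  refine (norm_sum_le _ _).trans ((Finset.sum_le_card_nsmul _ _ ((A : ℝ) * (9 * n) ^ K * δ)
    fun i _ => ?_).trans_eq ?_)
  · rw [norm_mul, norm_mul, Complex.norm_intCast, Complex.norm_natCast]
    exact mul_le_mul (mul_le_mul (by exact_mod_cast hc i) (choose_le_of_le_mul hn i.1.2 ht)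
      (by positivity) (by positivity)) (he _) (norm_nonneg _) (by positivity)
  · rw [Finset.card_univ, Fintype.card_prod, Fintype.card_fin, Fintype.card_fin, nsmul_eq_mul]
    push_cast
    ring

theorem exists_int_combination_choose_mul_exp_small (hD : 780 ≤ D) (hS : 0 < S) (hn : 0 < n)
    (hA : 1 ≤ A) (hK : K = D * S) :
    ∃ c : Fin K × Fin 60 → ℤ, c ≠ 0 ∧ (∀ i, |c i| ≤ A) ∧ ∀ t : ℕ, t ≤ 2 * S * n →
      ‖∑ i, (c i : ℂ) * (t.choose i.1 : ℂ) *
          Complex.exp (2 * Real.pi * Complex.I * (i.2 : ℕ) * t / n)‖ ≤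
        2 * (10 * K) * (60 * K) * (27 * n) ^ K / A
          + A * (60 * K) * (9 * n) ^ K * (2 * (260 / D) ^ (9 * K)) := by
  have hKS : 780 * S ≤ K := hK ▸ Nat.mul_le_mul_right S hD
  have hSn : 2 * S * n + K ≤ 3 * n * K := by nlinarith
  have hT : 2 * S * n ≠ 0 := by positivity
  let E : Fin 60 → ℂ[X] := fun l => truncatedExp (4 * Real.pi * Complex.I * (l : ℕ) * S) (9 * K)
  let G : Fin K × Fin 60 → ℂ[X] := fun i => scaledBinomial (2 * S * n) i.1 * E i.2
  have hGdeg : ∀ i, (G i).natDegree < 10 * K := fun i => by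
    have := natDegree_scaledBinomial_le (2 * S * n) i.1
    have : (E i.2).natDegree < 9 * K := natDegree_truncatedExp_lt _ (by omega)
    have := i.1.2
    exact natDegree_mul_le.trans_lt (by omega)
  obtain ⟨c, hc0, hcA, hc⟩ := exists_int_ne_zero_norm_sum_eval_le (G := G)
    (B := (27 * n) ^ K) (by positivity) hGdeg (fun i j => (coeff_le_l1Seminorm _ _ j).trans
      (l1Seminorm_scaledBinomial_mul_truncatedExp_le hn i.1.2 hSn
        ((norm_exponent_le i.2.2.le).trans (by exact_mod_cast hKS)) _)) hA
    (by simp only [Fintype.card_prod, Fintype.card_fin]; omega)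
    (by simp only [Fintype.card_prod, Fintype.card_fin]; omega)
  refine ⟨c, hc0, hcA, fun t ht => ?_⟩
  have hu : ‖(t : ℂ) / (2 * S * n : ℕ)‖ ≤ 1 := by
    rw [norm_div, Complex.norm_natCast, Complex.norm_natCast]
    exact div_le_one_of_le₀ (Nat.cast_le.2 ht) (Nat.cast_nonneg _)
  have hsplit : ∑ i : Fin K × Fin 60, (c i : ℂ) * (t.choose i.1 : ℂ) *
      Complex.exp (2 * Real.pi * Complex.I * (i.2 : ℕ) * t / n) =
      ∑ i, (c i : ℂ) * (G i).eval ((t : ℂ) / (2 * S * n : ℕ)) +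
      ∑ i : Fin K × Fin 60, (c i : ℂ) * (t.choose i.1 : ℂ) *
        (Complex.exp (2 * Real.pi * Complex.I * (i.2 : ℕ) * t / n) -
          (E i.2).eval ((t : ℂ) / (2 * S * n : ℕ))) := by
    rw [← Finset.sum_add_distrib]
    refine Finset.sum_congr rfl fun i _ => ?_
    simp only [G, eval_mul, eval_scaledBinomial hT]
    ring
  rw [hsplit]
  refine (norm_add_le _ _).trans (add_le_add ((hc _ hu).trans_eq ?_)
    (norm_sum_mul_choose_mul_le hcA hn (by omega) fun l =>
      norm_exp_sub_eval_truncatedExp_exponent_le hD hS hn hK l.2.le ht))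
  rw [Fintype.card_prod, Fintype.card_fin, Fintype.card_fin]
  push_cast
  ring

end AuxiliaryFunction

section ParameterEstimates

variable {D n Q l R S K : ℕ}

lemma exists_forall_mul_pow_eight_le_two_pow :
    ∃ D₀ : ℕ, 16 * 3981312 * 260 ^ 9 ≤ D₀ ∧
      ∀ D ≥ D₀, 8 * 3981312 * (D : ℝ) ^ 8 ≤ 2 ^ D := by
  have hlim := tendsto_pow_const_div_const_pow_of_one_lt 8 (one_lt_two : (1 : ℝ) < 2)
  obtain ⟨D₁, hD₁⟩ := Filter.eventually_atTop.1
    (hlim.eventually (gt_mem_nhds (show (0 : ℝ) < 1 / (8 * 3981312) by norm_num)))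
  refine ⟨max D₁ (16 * 3981312 * 260 ^ 9), le_max_right _ _, fun D hD => ?_⟩
  have h := hD₁ D (le_of_max_le_left hD)
  rw [div_lt_div_iff₀ (by positivity) (by norm_num)] at h
  linarith

lemma interpolation_prefactor_le (hn : n ≤ 16 * D ^ 4) (hQ : Q ≤ 2 ^ l) (hS : S = R * l)
    (hSK : 60 * S ≤ K) (hK : 18 ≤ K) :
    4 * (10 * K) * (60 * K) ^ 2 * (243 * (n : ℝ) ^ 2) ^ K * ((Q : ℝ) ^ (60 * R)) ^ 2 ≤
      (3981312 * (D : ℝ) ^ 8) ^ K := by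
  have hK2 : (K : ℝ) ≤ 2 ^ K := mod_cast Nat.lt_two_pow_self.le
  have hconst : (4 * 10 * 60 ^ 2 : ℝ) ≤ 2 ^ K :=
    (by norm_num : (4 * 10 * 60 ^ 2 : ℝ) ≤ 2 ^ 18).trans (pow_le_pow_right₀ one_le_two hK)
  have hnD : 243 * (n : ℝ) ^ 2 ≤ 62208 * (D : ℝ) ^ 8 := by
    have : (n : ℝ) ≤ 16 * D ^ 4 := mod_cast hn
    calc 243 * (n : ℝ) ^ 2 ≤ 243 * (16 * (D : ℝ) ^ 4) ^ 2 := by gcongr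
      _ = 62208 * (D : ℝ) ^ 8 := by ring
  have hQ4 : ((Q : ℝ) ^ (60 * R)) ^ 2 ≤ 4 ^ K := by
    have : (Q : ℝ) ≤ 2 ^ l := mod_cast hQ
    calc ((Q : ℝ) ^ (60 * R)) ^ 2 ≤ ((2 ^ l) ^ (60 * R)) ^ 2 := by gcongr
      _ = 2 ^ (120 * S) := by rw [← pow_mul, ← pow_mul, hS]; congr 1; ring
      _ ≤ 2 ^ (2 * K) := pow_le_pow_right₀ one_le_two (by lia)
      _ = 4 ^ K := by rw [pow_mul]; norm_num
  calc 4 * (10 * K) * (60 * K) ^ 2 * (243 * (n : ℝ) ^ 2) ^ K * ((Q : ℝ) ^ (60 * R)) ^ 2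
      = (4 * 10 * 60 ^ 2) * (K : ℝ) ^ 3 * (243 * (n : ℝ) ^ 2) ^ K * ((Q : ℝ) ^ (60 * R)) ^ 2 := by
        ring
    _ ≤ 2 ^ K * (2 ^ K) ^ 3 * (62208 * (D : ℝ) ^ 8) ^ K * 4 ^ K := by gcongr
    _ = (3981312 * (D : ℝ) ^ 8) ^ K := by
      rw [← pow_mul, mul_comm K 3, pow_mul, ← mul_pow, ← mul_pow, ← mul_pow]
      congr 1
      ring

lemma interpolation_tail_le (hD : 16 * 3981312 * 260 ^ 9 ≤ D) (hK : K ≠ 0) :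
    (3981312 * (D : ℝ) ^ 8) ^ K * (2 * (260 / (D : ℝ)) ^ (9 * K)) ≤ 1 / 8 := by
  have hD' : (16 * 3981312 * 260 ^ 9 : ℝ) ≤ D := mod_cast hD
  have hDpos : (0 : ℝ) < D := lt_of_lt_of_le (by norm_num) hD'
  calc (3981312 * (D : ℝ) ^ 8) ^ K * (2 * (260 / (D : ℝ)) ^ (9 * K))
      = 2 * (3981312 * 260 ^ 9 / D) ^ K := by
        rw [pow_mul, mul_left_comm, ← mul_pow]
        congr 2
        field_simp
    _ ≤ 2 * (1 / 16) ^ K := by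
      have : 3981312 * 260 ^ 9 / (D : ℝ) ≤ 1 / 16 := by
        rw [div_le_div_iff₀ hDpos (by norm_num)]
        linarith
      gcongr
    _ ≤ 2 * (1 / 16) := by
      gcongr
      exact pow_le_of_le_one (by norm_num) (by norm_num) hK
    _ = 1 / 8 := by norm_num

lemma eight_mul_mul_lt_mul (hD : 780 ≤ D) (hDn : D ^ 4 ≤ n) (hl : 0 < l)
    (hK : K = D * (60 * (D + 1) * l)) : 8 * (D * K) < l * n := by
  have hquad : 480 * (D + 1) < D ^ 2 := by nlinarith
  calc 8 * (D * K) = l * (D ^ 2 * (480 * (D + 1))) := by rw [hK]; ring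
    _ < l * (D ^ 2 * D ^ 2) := by gcongr
    _ = l * D ^ 4 := by ring
    _ ≤ l * n := by gcongr

lemma two_pow_mul_lt_one {ε : ℝ} (hε : 0 ≤ ε) (hεQ : ε ^ 4 * (Q : ℝ) ^ n ≤ 1)
    (hlQ : 2 ^ l ≤ Q ^ 2) {M : ℕ} (hM : 8 * M < l * n) : 2 ^ M * ε < 1 := by
  have hε8 : ε ^ 8 * 2 ^ (l * n) ≤ 1 := by
    have : (2 : ℝ) ^ l ≤ (Q : ℝ) ^ 2 := mod_cast hlQ
    calc ε ^ 8 * 2 ^ (l * n) = ε ^ 8 * (2 ^ l) ^ n := by rw [pow_mul]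
      _ ≤ ε ^ 8 * ((Q : ℝ) ^ 2) ^ n := by gcongr
      _ = (ε ^ 4 * (Q : ℝ) ^ n) ^ 2 := by ring
      _ ≤ 1 := pow_le_one₀ (by positivity) hεQ
  have hdouble : (2 : ℝ) * 2 ^ (8 * M) ≤ 2 ^ (l * n) := by
    rw [← pow_succ']
    exact pow_le_pow_right₀ one_le_two hM
  refine lt_of_pow_lt_pow_left₀ 8 zero_le_one ?_
  calc (2 ^ M * ε) ^ 8 = 2 ^ (8 * M) * ε ^ 8 := by ring
    _ < 1 := by nlinarith [pow_nonneg hε 8]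
    _ = 1 ^ 8 := (one_pow 8).symm

lemma interpolation_parameters {ε : ℝ} (hD : 16 * 3981312 * 260 ^ 9 ≤ D)
    (hD2 : 8 * 3981312 * (D : ℝ) ^ 8 ≤ 2 ^ D) (hDn : D ^ 4 ≤ n) (hnD : n ≤ 16 * D ^ 4)
    (hl : 0 < l) (hQl : Q ≤ 2 ^ l) (hlQ : 2 ^ l ≤ Q ^ 2) (hε : 0 ≤ ε)
    (hεQ : ε ^ 4 * (Q : ℝ) ^ n ≤ 1) (hR : R = 60 * (D + 1)) (hS : S = R * l) (hK : K = D * S) :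
    4 * (10 * K) * (60 * K) ^ 2 * (243 * (n : ℝ) ^ 2) ^ K * ((Q : ℝ) ^ (60 * R)) ^ 2 *
      (2 * (260 / (D : ℝ)) ^ (9 * K) + 60 * R * ε) < 1 / 2 := by
  have hRS : R ≤ S := hS ▸ Nat.le_mul_of_pos_right _ hl
  have hSK : 780 * S ≤ K := hK ▸ Nat.mul_le_mul_right _ ((by norm_num : 780 ≤ _).trans hD)
  have htail := interpolation_tail_le hD (show K ≠ 0 by lia)
  have herror : (3981312 * (D : ℝ) ^ 8) ^ K * (60 * R * ε) ≤ 1 / 4 := by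
    have hRK : (60 * R : ℝ) ≤ 2 ^ K :=
      (mod_cast (by lia : 60 * R ≤ K) : (60 * R : ℝ) ≤ K).trans (mod_cast Nat.lt_two_pow_self.le)
    have hpow := two_pow_mul_lt_one hε hεQ hlQ (M := D * K)
      (eight_mul_mul_lt_mul ((by norm_num : 780 ≤ _).trans hD) hDn hl (by rw [hK, hS, hR]))
    have h4K : (4 : ℝ) ≤ 4 ^ K := le_self_pow₀ (by norm_num) (by lia)
    suffices 4 * ((3981312 * (D : ℝ) ^ 8) ^ K * (60 * R * ε)) ≤ 1 by linarith
    calc 4 * ((3981312 * (D : ℝ) ^ 8) ^ K * (60 * R * ε))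
        ≤ 4 ^ K * ((3981312 * (D : ℝ) ^ 8) ^ K * (2 ^ K * ε)) := by gcongr
      _ = (8 * 3981312 * (D : ℝ) ^ 8) ^ K * ε := by
        rw [← mul_assoc, ← mul_assoc, ← mul_pow, ← mul_pow]
        ring
      _ ≤ (2 ^ D) ^ K * ε := by gcongr
      _ ≤ 1 := by rw [← pow_mul]; exact hpow.le
  calc _ ≤ (3981312 * (D : ℝ) ^ 8) ^ K * (2 * (260 / (D : ℝ)) ^ (9 * K) + 60 * R * ε) := by
        gcongr
        exact interpolation_prefactor_le hnD hQl hS (by lia) (by lia)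
    _ < 1 / 2 := by rw [mul_add]; linarith

end ParameterEstimates

/-- `x` satisfies a Liouville inequality with constant `Q`: a nonzero value at `x` of an integer
polynomial of degree at most `J` is at least `Q⁻ᴶ` in absolute value. -/
def HasLiouvilleBound (x : ℂ) (Q : ℕ) : Prop :=
  ∀ (P : ℤ[X]) (J : ℕ), P.natDegree ≤ J → aeval x P ≠ 0 → 1 ≤ ‖aeval x P‖ * (Q : ℝ) ^ J

section RootOfUnityApproximation

variable {x ω : ℂ} {Q K n : ℕ}

lemma norm_pow_sub_pow_le (hx : ‖x‖ = 1) (hω : ‖ω‖ = 1) (k : ℕ) :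
    ‖x ^ k - ω ^ k‖ ≤ k * ‖x - ω‖ := by
  induction k with
  | zero => simp
  | succ k ih =>
    calc ‖x ^ (k + 1) - ω ^ (k + 1)‖ = ‖x * (x ^ k - ω ^ k) + (x - ω) * ω ^ k‖ := by ring_nf
      _ ≤ ‖x ^ k - ω ^ k‖ + ‖x - ω‖ := by
        refine (norm_add_le _ _).trans_eq ?_
        rw [norm_mul, norm_mul, norm_pow, hx, hω, one_mul, one_pow, mul_one]
      _ ≤ (k + 1 : ℕ) * ‖x - ω‖ := by push_cast; linarith

lemma HasLiouvilleBound.pow_ne_one (hL : HasLiouvilleBound x Q) (hx : ‖x‖ = 1)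
    (hxfin : ¬IsOfFinOrder x) (hω : ‖ω‖ = 1) {J : ℕ} (hJ : J * ‖x - ω‖ * (Q : ℝ) ^ J < 1)
    {h : ℕ} (h0 : 0 < h) (hh : h ≤ J) : ω ^ h ≠ 1 := by
  intro h1
  have hval : aeval x (X ^ h - 1 : ℤ[X]) = x ^ h - ω ^ h := by simp [h1]
  have hne : aeval x (X ^ h - 1 : ℤ[X]) ≠ 0 := by
    rw [hval, h1, sub_ne_zero]
    exact fun hxh => hxfin (isOfFinOrder_iff_pow_eq_one.2 ⟨h, h0, hxh⟩)
  have hdeg : (X ^ h - 1 : ℤ[X]).natDegree ≤ J := by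
    rw [← C_1, natDegree_X_pow_sub_C]
    exact hh
  refine (hL _ J hdeg hne).not_gt (lt_of_le_of_lt ?_ hJ)
  rw [hval]
  gcongr
  exact (norm_pow_sub_pow_le hx hω h).trans (by gcongr)

lemma injOn_mul_add_mul {m H : ℕ} (hn : 0 < n) (hdvd : ∀ h, 0 < h → h < H → ¬n ∣ h * m) :
    Set.InjOn (fun rs : ℕ × ℕ => rs.1 * m + rs.2 * n) {rs | rs.1 < H} := by
  have key (r s r' s' : ℕ) (hr : r' < H) (heq : r * m + s * n = r' * m + s' * n) : ¬r < r' := by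
    intro hlt
    refine hdvd (r' - r) (by lia) (by lia) ?_
    have : (r' - r) * m + s' * n = s * n := by
      rw [Nat.sub_mul]
      have : r * m ≤ r' * m := Nat.mul_le_mul_right _ hlt.le
      lia
    rw [Nat.dvd_add_iff_left (Dvd.intro_left s' rfl), this]
    exact Dvd.intro_left s rfl
  rintro ⟨r, s⟩ hr ⟨r', s'⟩ hr' heq
  obtain rfl : r = r' :=
    le_antisymm (not_lt.1 (key r' s' r s hr heq.symm)) (not_lt.1 (key r s r' s' hr' heq))
  simpa only [Prod.mk.injEq, true_and] using
    Nat.eq_of_mul_eq_mul_right hn (Nat.add_left_cancel heq)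

lemma exp_mul_eq_pow {m r s : ℕ} (hn : n ≠ 0) (j : ℕ) :
    Complex.exp (2 * Real.pi * Complex.I * j * (r * m + s * n : ℕ) / n) =
      Complex.exp (2 * Real.pi * Complex.I * m / n) ^ (j * r) := by
  rw [← Complex.exp_nat_mul, Complex.exp_eq_exp_iff_exists_int]
  refine ⟨j * s, ?_⟩
  push_cast
  field_simp

/-- The sum at `ω` is small by construction, and so is the sum at the nearby point `x`; by the
Liouville inequality the latter vanishes. -/
lemma HasLiouvilleBound.sum_mul_choose_mul_pow_eq_zero (hL : HasLiouvilleBound x Q)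
    (hx : ‖x‖ = 1) (hω : ‖ω‖ = 1) {c : Fin K × Fin 60 → ℤ} {A : ℕ} (hc : ∀ i, |c i| ≤ A)
    (hn : 0 < n) {t : ℕ} (ht : t ≤ 3 * n * K) {r R : ℕ} (hr : r ≤ R) {η : ℝ}
    (hη : ‖∑ i, (c i : ℂ) * (t.choose i.1 : ℂ) * ω ^ (i.2 * r : ℕ)‖ ≤ η)
    (hsmall : (η + A * (60 * K) * (9 * n) ^ K * (60 * R * ‖x - ω‖)) * (Q : ℝ) ^ (60 * R) < 1) :
    ∑ i, (c i : ℂ) * (t.choose i.1 : ℂ) * x ^ (i.2 * r : ℕ) = 0 := by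
  let P : ℤ[X] := ∑ i, monomial (i.2 * r : ℕ) (c i * (t.choose i.1 : ℤ))
  have hexp (j : Fin 60) : (j * r : ℕ) ≤ 60 * R := Nat.mul_le_mul j.2.le hr
  have hval : aeval x P = ∑ i, (c i : ℂ) * (t.choose i.1 : ℂ) * x ^ (i.2 * r : ℕ) := by
    simp [P, aeval_monomial]
  have hdeg : P.natDegree ≤ 60 * R :=
    natDegree_sum_le_of_forall_le _ _ fun i _ => (natDegree_monomial_le _).trans (hexp i.2)
  by_contra hne
  refine (hL P _ hdeg (hval ▸ hne)).not_gt (lt_of_le_of_lt ?_ hsmall)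
  have hdiff (j : Fin 60) : ‖x ^ (j * r : ℕ) - ω ^ (j * r : ℕ)‖ ≤ 60 * R * ‖x - ω‖ := by
    refine (norm_pow_sub_pow_le hx hω _).trans ?_
    gcongr
    exact_mod_cast hexp j
  have hclose := norm_sum_mul_choose_mul_le hc hn ht hdiff
  simp only [mul_sub, Finset.sum_sub_distrib] at hclose
  rw [hval]
  gcongr
  linarith [norm_sub_norm_le (∑ i, (c i : ℂ) * (t.choose i.1 : ℂ) * x ^ (i.2 * r : ℕ))
    (∑ i, (c i : ℂ) * (t.choose i.1 : ℂ) * ω ^ (i.2 * r : ℕ))]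

lemma eq_zero_of_forall_sum_mul_choose_eq_zero {A : Type*} [CommRing A] {c : Fin K → A}
    (h : ∀ t < K, ∑ k, c k * (t.choose k : A) = 0) : c = 0 := by
  suffices ∀ (t : ℕ) (ht : t < K), c ⟨t, ht⟩ = 0 from funext fun k => this k k.2
  intro t
  induction t using Nat.strong_induction_on with
  | _ t ih =>
    intro ht
    have hsum := h t ht
    rw [Finset.sum_eq_single ⟨t, ht⟩] at hsum
    · simpa only [Nat.choose_self, Nat.cast_one, mul_one] using hsum
    · rintro ⟨j, hj⟩ _ hne
      rcases lt_or_gt_of_ne (fun h => hne (Fin.ext h) : j ≠ t) with hlt | hgt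
      · rw [ih j hlt hj, zero_mul]
      · rw [Nat.choose_eq_zero_of_lt hgt, Nat.cast_zero, mul_zero]
    · exact fun hmem => absurd (Finset.mem_univ _) hmem

lemma eq_zero_of_forall_sum_mul_choose_mul_pow_eq_zero (hx0 : x ≠ 0) (hxfin : ¬IsOfFinOrder x)
    {m H S : ℕ} (hn : 0 < n) (hK : 60 * K ≤ H * S)
    (hdvd : ∀ h, 0 < h → h < H → ¬n ∣ h * m) {c : Fin K × Fin 60 → ℤ}
    (hzero : ∀ r < H + 60, ∀ s < S,
      ∑ i, (c i : ℂ) * ((r * m + s * n).choose i.1 : ℂ) * x ^ (i.2 * r : ℕ) = 0) : c = 0 := by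
  let p : Fin 60 → ℂ[X] := fun l => ∑ k : Fin K, C (c (k, l) : ℂ) * scaledBinomial 1 k
  have heval (l : Fin 60) (t : ℕ) :
      (p l).eval (t : ℂ) = ∑ k : Fin K, (c (k, l) : ℂ) * (t.choose k : ℂ) := by
    simp only [p, eval_finsetSum, eval_mul, eval_C]
    refine Finset.sum_congr rfl fun k _ => ?_
    rw [← eval_scaledBinomial one_ne_zero, Nat.cast_one, div_one]
  rcases K.eq_zero_or_pos with rfl | hK0
  · exact funext fun i => i.1.elim0
  have hdeg (l : Fin 60) : (p l).natDegree < K := by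
    refine lt_of_le_of_lt (natDegree_sum_le_of_forall_le (n := K - 1) _ _ fun k _ => ?_) (by lia)
    exact (natDegree_C_mul_le _ _).trans ((natDegree_scaledBinomial_le _ _).trans (by lia))
  have hp : p = 0 := by
    refine exponentialPolynomial_zero_estimate (y := fun l : Fin 60 => x ^ (l : ℕ)) (K := K)
      (R := H) (S := S) (u := m) (v := n)
      ((pow_injective_of_not_isOfFinOrder hxfin hx0).comp Fin.val_injective)
      (fun l => pow_ne_zero _ hx0) hdeg ?_ (by rw [Fintype.card_fin]; lia) ?_
    · intro rs hrs rs' hrs' heq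
      simp only [Finset.coe_product, Finset.coe_range, Set.mem_prod, Set.mem_Iio] at hrs hrs'
      have heq' : ((rs.1 * m + rs.2 * n : ℕ) : ℂ) = (rs'.1 * m + rs'.2 * n : ℕ) := by
        push_cast
        exact heq
      exact injOn_mul_add_mul hn hdvd hrs.1 hrs'.1 (Nat.cast_injective heq')
    · intro r hr s hs
      rw [Fintype.card_fin] at hr
      rw [← hzero r hr s hs, Fintype.sum_prod_type_right]
      refine Finset.sum_congr rfl fun l _ => ?_
      have := heval l (r * m + s * n)
      push_cast at this
      rw [this, Finset.sum_mul]
      exact Finset.sum_congr rfl fun k _ => by rw [pow_mul]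
  funext ⟨k, l⟩
  have hcol := eq_zero_of_forall_sum_mul_choose_eq_zero (c := fun k => (c (k, l) : ℂ))
    fun t _ => by rw [← heval, hp, Pi.zero_apply, eval_zero]
  exact Int.cast_eq_zero.1 (congrFun hcol k)

lemma exists_fourthRoot (n : ℕ) : ∃ D : ℕ, D ^ 4 ≤ n ∧ n < (D + 1) ^ 4 := by
  refine ⟨n.sqrt.sqrt, ?_, ?_⟩
  · calc n.sqrt.sqrt ^ 4 = (n.sqrt.sqrt ^ 2) ^ 2 := by ring
      _ ≤ n.sqrt ^ 2 := Nat.pow_le_pow_left (Nat.sqrt_le' _) 2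
      _ ≤ n := Nat.sqrt_le' n
  · calc n < (n.sqrt + 1) ^ 2 := Nat.lt_succ_sqrt' n
      _ ≤ ((n.sqrt.sqrt + 1) ^ 2) ^ 2 := Nat.pow_le_pow_left (Nat.lt_succ_sqrt' _) 2
      _ = (n.sqrt.sqrt + 1) ^ 4 := by ring

lemma exists_two_pow_between_self_and_sq (hQ : 2 ≤ Q) : ∃ l, 0 < l ∧ Q ≤ 2 ^ l ∧ 2 ^ l ≤ Q ^ 2 := by
  refine ⟨Nat.log 2 Q + 1, Nat.succ_pos _, (Nat.lt_pow_succ_log_self one_lt_two Q).le, ?_⟩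
  have := Nat.pow_log_le_self 2 (show Q ≠ 0 by lia)
  rw [pow_succ]
  nlinarith

lemma mul_lt_one_of_interpolation_small {R : ℕ} {Θ τ ε : ℝ} (hK : 0 < K) (hn : 0 < n)
    (hΘ : 1 ≤ Θ) (hτ : 0 ≤ τ) (hε : 0 ≤ ε)
    (hsmall : 4 * (10 * K) * (60 * K) ^ 2 * (243 * (n : ℝ) ^ 2) ^ K * Θ ^ 2 *
      (τ + 60 * R * ε) < 1 / 2) : (60 * R : ℕ) * ε * Θ < 1 := by
  have hW : (1 : ℝ) ≤ 4 * (10 * K) * (60 * K) ^ 2 * (243 * (n : ℝ) ^ 2) ^ K := by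
    norm_cast
    exact Nat.one_le_iff_ne_zero.2 (by positivity)
  calc (60 * R : ℕ) * ε * Θ = 1 * Θ * (0 + 60 * R * ε) := by push_cast; ring
    _ ≤ 4 * (10 * K) * (60 * K) ^ 2 * (243 * (n : ℝ) ^ 2) ^ K * Θ ^ 2 * (τ + 60 * R * ε) := by
      gcongr
      exact le_self_pow₀ hΘ two_ne_zero
    _ < 1 := by linarith

lemma interpolation_total_lt_one {R : ℕ} {A Θ τ ε : ℝ} (hK : 0 < K) (hn : 0 < n) (hΘ : 0 < Θ)
    (hA : A = 4 * (10 * K) * (60 * K) * (27 * n) ^ K * Θ)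
    (hsmall : 4 * (10 * K) * (60 * K) ^ 2 * (243 * (n : ℝ) ^ 2) ^ K * Θ ^ 2 *
      (τ + 60 * R * ε) < 1 / 2) :
    (2 * (10 * K) * (60 * K) * (27 * n) ^ K / A + A * (60 * K) * (9 * n) ^ K * τ +
      A * (60 * K) * (9 * n) ^ K * (60 * R * ε)) * Θ < 1 := by
  have hsplit : (243 * (n : ℝ) ^ 2) ^ K = (27 * n) ^ K * (9 * n) ^ K := by
    rw [← mul_pow]
    ring
  have hfirst : 2 * (10 * K) * (60 * K) * (27 * n : ℝ) ^ K / A * Θ = 1 / 2 := by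
    rw [hA]
    field_simp
    norm_num
  calc _ = 2 * (10 * K) * (60 * K) * (27 * n : ℝ) ^ K / A * Θ +
        4 * (10 * K) * (60 * K) ^ 2 * (243 * (n : ℝ) ^ 2) ^ K * Θ ^ 2 * (τ + 60 * R * ε) := by
        rw [hsplit, hA]
        ring
    _ < 1 := by linarith

lemma HasLiouvilleBound.half_le_of_near_rootOfUnity {D l R S m : ℕ}
    (hL : HasLiouvilleBound x Q) (hx : ‖x‖ = 1) (hxfin : ¬IsOfFinOrder x) (hQ : 0 < Q)
    (hn : 0 < n) (hmn : m ≤ n) (hω : ω = Complex.exp (2 * Real.pi * Complex.I * m / n))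
    (hD : 780 ≤ D) (hl : 0 < l) (hR : R = 60 * (D + 1)) (hS : S = R * l) (hK : K = D * S) :
    1 / 2 ≤ 4 * (10 * K) * (60 * K) ^ 2 * (243 * (n : ℝ) ^ 2) ^ K * ((Q : ℝ) ^ (60 * R)) ^ 2 *
      (2 * (260 / (D : ℝ)) ^ (9 * K) + 60 * R * ‖x - ω‖) := by
  by_contra! hsmall
  have hωnorm : ‖ω‖ = 1 := by simp [hω, Complex.norm_exp]
  have hRS : R ≤ S := hS ▸ Nat.le_mul_of_pos_right _ hl
  have hS0 : 0 < S := by lia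
  have hSK : S ≤ K := hK ▸ Nat.le_mul_of_pos_left _ (by lia)
  have hK0 : 0 < K := hS0.trans_le hSK
  have hΘ : (1 : ℝ) ≤ (Q : ℝ) ^ (60 * R) := one_le_pow₀ (mod_cast hQ)
  obtain ⟨A, hA⟩ : ∃ A, A = 4 * (10 * K) * (60 * K) * (27 * n) ^ K * Q ^ (60 * R) := ⟨_, rfl⟩
  have hA1 : 1 ≤ A := hA ▸ Nat.one_le_iff_ne_zero.2 (by positivity)
  obtain ⟨c, hc0, hcA, hcsmall⟩ := exists_int_combination_choose_mul_exp_small hD hS0 hn hA1 hK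
  refine hc0 (eq_zero_of_forall_sum_mul_choose_mul_pow_eq_zero (x := x) (n := n) (m := m)
    (H := 60 * D) (S := S) ?_ hxfin hn (by rw [hK, mul_assoc]) ?_ ?_)
  · exact norm_ne_zero_iff.1 (hx ▸ one_ne_zero)
  · rintro h h0 hlt ⟨w, hw⟩
    refine hL.pow_ne_one hx hxfin hωnorm (J := 60 * R) ?_ h0 (by lia) ?_
    · exact mul_lt_one_of_interpolation_small hK0 hn hΘ (by positivity) (norm_nonneg _) hsmall
    · have hw' : (h : ℂ) * m = n * w := mod_cast hw
      have hn0 : (n : ℂ) ≠ 0 := mod_cast hn.ne'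
      rw [hω, ← Complex.exp_nat_mul, Complex.exp_eq_one_iff]
      refine ⟨w, ?_⟩
      field_simp
      push_cast
      linear_combination hw'
  · intro r hr s hs
    have ht : r * m + s * n ≤ 2 * S * n := by
      calc r * m + s * n ≤ S * n + S * n := by gcongr; lia
        _ = 2 * S * n := by ring
    refine hL.sum_mul_choose_mul_pow_eq_zero hx hωnorm hcA hn (r := r) (R := R) (ht.trans ?_)
      (by lia) (η := _) ?_ (interpolation_total_lt_one hK0 hn (by linarith) ?_ hsmall)
    · calc 2 * S * n ≤ 3 * K * n := by gcongr; lia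
        _ = 3 * n * K := by ring
    · simpa only [exp_mul_eq_pow hn.ne', ← hω] using hcsmall _ ht
    · rw [hA]
      push_cast
      ring

theorem exists_forall_lt_of_near_rootOfUnity : ∃ N : ℕ, ∀ (x : ℂ) (Q n m : ℕ), 2 ≤ Q →
    HasLiouvilleBound x Q → ‖x‖ = 1 → ¬IsOfFinOrder x → m ≤ n →
    ‖x - Complex.exp (2 * Real.pi * Complex.I * m / n)‖ ^ 4 * (Q : ℝ) ^ n ≤ 1 → n < N := by
  obtain ⟨D₀, hD₀, hpow⟩ := exists_forall_mul_pow_eight_le_two_pow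
  refine ⟨D₀ ^ 4, fun x Q n m hQ hL hx hxfin hmn hclose => ?_⟩
  by_contra! hn
  obtain ⟨D, hDn, hnD⟩ := exists_fourthRoot n
  obtain ⟨l, hl, hQl, hlQ⟩ := exists_two_pow_between_self_and_sq hQ
  have hD : D₀ ≤ D := Nat.lt_succ_iff.1 (lt_of_pow_lt_pow_left₀ 4 (Nat.zero_le _) (hn.trans_lt hnD))
  have hnD16 : n ≤ 16 * D ^ 4 := by
    calc n ≤ (D + 1) ^ 4 := hnD.le
      _ ≤ (2 * D) ^ 4 := Nat.pow_le_pow_left (by lia) 4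
      _ = 16 * D ^ 4 := by ring
  have hn0 : 0 < n := (pow_pos (show 0 < D by lia) 4).trans_le hDn
  exact (hL.half_le_of_near_rootOfUnity hx hxfin (by lia) hn0 hmn rfl (by lia) hl rfl rfl
    rfl).not_gt (interpolation_parameters (hD₀.trans hD) (hpow D hD) hDn hnD16 hl hQl hlQ
      (norm_nonneg _) hclose rfl rfl rfl)

end RootOfUnityApproximation

/-! ### The index of bivariate polynomials -/

section BivariateHasse

variable {R : Type*} [CommRing R]

/-- The linear map on polynomials that applies the linear map `φ` to every coefficient. -/
noncomputable def mapCoeff {A B : Type*} [CommRing A] [CommRing B] [Algebra R A] [Algebra R B]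
    (φ : A →ₗ[R] B) : A[X] →ₗ[R] B[X] :=
  lsum fun b => (monomial b).restrictScalars R ∘ₗ φ

lemma coeff_mapCoeff {A B : Type*} [CommRing A] [CommRing B] [Algebra R A] [Algebra R B]
    (φ : A →ₗ[R] B) (P : A[X]) (b : ℕ) : (mapCoeff φ P).coeff b = φ (P.coeff b) := by
  simp only [mapCoeff, lsum_apply, sum_def, LinearMap.comp_apply,
    LinearMap.restrictScalars_apply, finsetSum_coeff, coeff_monomial, Finset.sum_ite_eq']
  split_ifs with h
  · rfl
  · rw [notMem_support_iff.1 h, map_zero]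

/-- The Hasse derivative of order `i` of a bivariate polynomial `P : R[X][X]` with respect to its
inner variable. -/
noncomputable def innerHasseDeriv (i : ℕ) : R[X][X] →ₗ[R] R[X][X] := mapCoeff (hasseDeriv i)

lemma coeff_innerHasseDeriv (i : ℕ) (P : R[X][X]) (b : ℕ) :
    (innerHasseDeriv i P).coeff b = hasseDeriv i (P.coeff b) := coeff_mapCoeff _ _ _

lemma innerHasseDeriv_hasseDeriv_comm (i j : ℕ) (P : R[X][X]) :
    innerHasseDeriv i (hasseDeriv j P) = hasseDeriv j (innerHasseDeriv i P) := by
  ext1 b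
  rw [coeff_innerHasseDeriv, hasseDeriv_coeff, hasseDeriv_coeff, coeff_innerHasseDeriv,
    ← nsmul_eq_mul, ← nsmul_eq_mul, map_nsmul]

lemma innerHasseDeriv_innerHasseDeriv (i j : ℕ) (P : R[X][X]) :
    innerHasseDeriv i (innerHasseDeriv j P) = (i + j).choose i • innerHasseDeriv (i + j) P := by
  ext1 b
  simp only [coeff_innerHasseDeriv, coeff_smul]
  exact LinearMap.congr_fun (hasseDeriv_comp (R := R) i j) (P.coeff b)

lemma innerHasseDeriv_C_mul_map_C (i : ℕ) (U V : R[X]) :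
    innerHasseDeriv i (C U * V.map C) = C (hasseDeriv i U) * V.map C := by
  ext1 b
  rw [coeff_innerHasseDeriv, coeff_C_mul, coeff_C_mul, coeff_map, mul_comm, ← smul_eq_C_mul,
    map_smul, smul_eq_C_mul, mul_comm]

lemma natDegree_innerHasseDeriv_le (i : ℕ) (P : R[X][X]) :
    (innerHasseDeriv i P).natDegree ≤ P.natDegree := by
  refine natDegree_le_iff_coeff_eq_zero.2 fun b hb => ?_
  rw [coeff_innerHasseDeriv, coeff_eq_zero_of_natDegree_lt hb, map_zero]

lemma hasseDeriv_eval_C (i : ℕ) (P : R[X][X]) (z : R) :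
    hasseDeriv i (P.eval (C z)) = (innerHasseDeriv i P).eval (C z) := by
  rw [eval_eq_sum_range,
    eval_eq_sum_range' (Nat.lt_succ_of_le (natDegree_innerHasseDeriv_le i P)), map_sum]
  refine Finset.sum_congr rfl fun b _ => ?_
  rw [coeff_innerHasseDeriv, ← C_pow, mul_comm, ← smul_eq_C_mul, map_smul, smul_eq_C_mul, mul_comm]

lemma hasseDeriv_map {S : Type*} [CommRing S] (f : R →+* S) (i : ℕ) (P : R[X]) :
    hasseDeriv i (P.map f) = (hasseDeriv i P).map f := by
  ext1 b
  simp only [hasseDeriv_coeff, coeff_map, map_mul, map_natCast]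

lemma innerHasseDeriv_map {S : Type*} [CommRing S] (f : R →+* S) (i : ℕ) (P : R[X][X]) :
    innerHasseDeriv i (P.map (mapRingHom f)) = (innerHasseDeriv i P).map (mapRingHom f) := by
  ext1 b
  simp only [coeff_innerHasseDeriv, coeff_map, coe_mapRingHom, hasseDeriv_map]

end BivariateHasse

section BivariateTaylor

variable {R : Type*} [CommRing R]

/-- The Taylor expansion of a bivariate polynomial at `(y, z)`, as a ring homomorphism: the inner
variable is translated by `y` and the outer one by `z`. -/
noncomputable def bivariateTaylor (y z : R) : R[X][X] →+* R[X][X] :=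
  (taylorAlgHom (C z)).toRingHom.comp (mapRingHom (taylorAlgHom y).toRingHom)

lemma bivariateTaylor_apply (y z : R) (P : R[X][X]) :
    bivariateTaylor y z P = taylor (C z) (P.map (taylorAlgHom y).toRingHom) := rfl

lemma coeff_coeff_bivariateTaylor (y z : R) (P : R[X][X]) (i j : ℕ) :
    ((bivariateTaylor y z P).coeff j).coeff i =
      evalEval y z (innerHasseDeriv i (hasseDeriv j P)) := by
  have hC : (C z : R[X]) = (taylorAlgHom y).toRingHom (C z) := (taylor_C y z).symm
  have hcoeff : (bivariateTaylor y z P).coeff j = taylor y ((hasseDeriv j P).eval (C z)) := by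
    rw [bivariateTaylor_apply, taylor_coeff, hasseDeriv_map]
    conv_lhs => rw [hC, eval_map, eval₂_hom]
    rfl
  rw [hcoeff, taylor_coeff, hasseDeriv_eval_C]

lemma coeff_coeff_bivariateTaylor_innerHasseDeriv_hasseDeriv (y z : R) (P : R[X][X])
    (i j a b : ℕ) :
    ((bivariateTaylor y z (innerHasseDeriv i (hasseDeriv j P))).coeff b).coeff a =
      (a + i).choose a * (b + j).choose b *
        ((bivariateTaylor y z P).coeff (b + j)).coeff (a + i) := by
  have hcomp : hasseDeriv b (hasseDeriv j P) = (b + j).choose b • hasseDeriv (b + j) P :=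
    LinearMap.congr_fun (hasseDeriv_comp (R := R[X]) b j) P
  rw [coeff_coeff_bivariateTaylor, coeff_coeff_bivariateTaylor,
    ← innerHasseDeriv_hasseDeriv_comm, innerHasseDeriv_innerHasseDeriv, hcomp, map_nsmul,
    nsmul_eq_mul, nsmul_eq_mul, evalEval_mul, evalEval_mul, evalEval_natCast, evalEval_natCast,
    mul_assoc]

lemma bivariateTaylor_bivariateTaylor (y z y' z' : R) (P : R[X][X]) :
    bivariateTaylor y' z' (bivariateTaylor y z P) = bivariateTaylor (y' + y) (z' + z) P := by
  have hC : (taylorAlgHom y').toRingHom (C z) = C z := taylor_C y' z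
  have hcomp : (taylorAlgHom y').toRingHom.comp (taylorAlgHom y).toRingHom =
      (taylorAlgHom (y' + y)).toRingHom := by
    refine ringHom_ext (fun r => ?_) ?_
    · simp
    · simp [add_comm, add_left_comm]
  simp only [bivariateTaylor_apply]
  rw [map_taylor, taylor_taylor, Polynomial.map_map, hC, hcomp, C_add]

lemma bivariateTaylor_C (y z : R) (U : R[X]) : bivariateTaylor y z (C U) = C (taylor y U) := by
  rw [bivariateTaylor_apply, map_C, taylor_C]
  rfl

lemma bivariateTaylor_map_C (y z : R) (V : R[X]) :
    bivariateTaylor y z (V.map C) = (taylor z V).map C := by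
  have hcomp : (taylorAlgHom y).toRingHom.comp C = C := RingHom.ext fun r => taylor_C y r
  rw [bivariateTaylor_apply, Polynomial.map_map, map_taylor, hcomp]

lemma bivariateTaylor_map {S : Type*} [CommRing S] (f : R →+* S) (y z : R) (P : R[X][X]) :
    bivariateTaylor (f y) (f z) (P.map (mapRingHom f)) =
      (bivariateTaylor y z P).map (mapRingHom f) := by
  have hcomp : (taylorAlgHom (f y)).toRingHom.comp (mapRingHom f) =
      (mapRingHom f).comp (taylorAlgHom y).toRingHom := by
    refine ringHom_ext (fun r => ?_) ?_
    · simp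
    · simp
  rw [bivariateTaylor_apply, bivariateTaylor_apply, map_taylor, Polynomial.map_map,
    Polynomial.map_map, hcomp, coe_mapRingHom, map_C]

end BivariateTaylor

section WeightedSubst

variable {R : Type*} [CommRing R]

/-- The substitution of `X ^ r₂` for the inner and `X ^ r₁` for the outer variable: it turns the
weighted index of a bivariate polynomial at the origin into an order of vanishing. -/
noncomputable def weightedSubst (r₁ r₂ : ℕ) : R[X][X] →+* R[X] :=
  eval₂RingHom (expand R r₂).toRingHom (X ^ r₁)

lemma weightedSubst_C (r₁ r₂ : ℕ) (U : R[X]) : weightedSubst r₁ r₂ (C U) = expand R r₂ U :=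
  eval₂_C _ _

lemma weightedSubst_map_C (r₁ r₂ : ℕ) (V : R[X]) :
    weightedSubst r₁ r₂ (V.map C) = expand R r₁ V := by
  have hcomp : (expand R r₂).toRingHom.comp C = C := RingHom.ext fun r => expand_C r₂ r
  rw [weightedSubst, coe_eval₂RingHom, eval₂_map, hcomp, expand_eq_sum, eval₂_def]

lemma X_pow_dvd_weightedSubst {r₁ r₂ e : ℕ} (hr₂ : 0 < r₂) {P : R[X][X]}
    (hP : ∀ a b, a * r₂ + b * r₁ < e → (P.coeff b).coeff a = 0) :
    X ^ e ∣ weightedSubst r₁ r₂ P := by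
  rw [weightedSubst, coe_eval₂RingHom, eval₂_eq_sum_range]
  refine Finset.dvd_sum fun b _ => ?_
  have hb : (X : R[X]) ^ (e - b * r₁) ∣ expand R r₂ (P.coeff b) := by
    refine X_pow_dvd_iff.2 fun d hd => ?_
    rw [coeff_expand hr₂]
    split_ifs with hdvd
    · refine hP _ _ ?_
      rw [Nat.div_mul_cancel hdvd]
      omega
    · rfl
  rw [← pow_mul]
  refine (pow_dvd_pow X (show e ≤ (e - b * r₁) + r₁ * b by rw [mul_comm r₁]; omega)).trans ?_
  rw [pow_add]
  exact mul_dvd_mul_right hb _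

end WeightedSubst

section Index

variable {R : Type*} [CommRing R] {y z : R} {r₁ r₂ : ℕ} {N N' : ℝ} {P Q : R[X][X]}

/-- The index of `P` at `(y, z)` is at least `N`, where the inner variable has weight `r₂` and the
outer one weight `r₁`; dividing by `r₁ * r₂` gives the usual normalization of the index. -/
def IndexGE (y z : R) (r₁ r₂ : ℕ) (N : ℝ) (P : R[X][X]) : Prop :=
  ∀ a b : ℕ, (a * r₂ + b * r₁ : ℝ) < N → ((bivariateTaylor y z P).coeff b).coeff a = 0

lemma IndexGE.mono (h : IndexGE y z r₁ r₂ N P) (hN : N' ≤ N) : IndexGE y z r₁ r₂ N' P :=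
  fun a b hab => h a b (hab.trans_le hN)

lemma IndexGE.sub (hP : IndexGE y z r₁ r₂ N P) (hQ : IndexGE y z r₁ r₂ N Q) :
    IndexGE y z r₁ r₂ N (P - Q) := fun a b hab => by
  rw [map_sub, coeff_sub, coeff_sub, hP a b hab, hQ a b hab, sub_zero]

lemma IndexGE.mul_right (h : IndexGE y z r₁ r₂ N P) (Q : R[X][X]) :
    IndexGE y z r₁ r₂ N (P * Q) := fun a b hab => by
  rw [map_mul, coeff_mul, finsetSum_coeff]
  refine Finset.sum_eq_zero fun x hx => ?_
  rw [coeff_mul]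
  refine Finset.sum_eq_zero fun w hw => ?_
  have hx₁ : x.1 ≤ b := Finset.HasAntidiagonal.antidiagonal.fst_le hx
  have hw₁ : w.1 ≤ a := Finset.HasAntidiagonal.antidiagonal.fst_le hw
  rw [h w.1 x.1 (lt_of_le_of_lt (by gcongr) hab), zero_mul]

lemma IndexGE.innerHasseDeriv_hasseDeriv (h : IndexGE y z r₁ r₂ N P) (i j : ℕ) :
    IndexGE y z r₁ r₂ (N - (i * r₂ + j * r₁)) (innerHasseDeriv i (hasseDeriv j P)) :=
  fun a b hab => by
    rw [coeff_coeff_bivariateTaylor_innerHasseDeriv_hasseDeriv,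
      h _ _ (by push_cast; linarith), mul_zero]

lemma IndexGE.innerHasseDeriv (h : IndexGE y z r₁ r₂ N P) (i : ℕ) :
    IndexGE y z r₁ r₂ (N - i * r₂) (innerHasseDeriv i P) := by
  simpa only [hasseDeriv_zero', Nat.cast_zero, zero_mul, add_zero] using
    h.innerHasseDeriv_hasseDeriv i 0

lemma IndexGE.derivative (h : IndexGE y z r₁ r₂ N P) :
    IndexGE y z r₁ r₂ (N - r₁) (derivative P) := by
  have h₀ : OrdinaryPairs.innerHasseDeriv 0 (hasseDeriv 1 P) = Polynomial.derivative P := by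
    ext1 b
    rw [coeff_innerHasseDeriv, hasseDeriv_zero', hasseDeriv_one']
  simpa only [h₀, Nat.cast_zero, Nat.cast_one, zero_mul, one_mul, zero_add] using
    h.innerHasseDeriv_hasseDeriv 0 1

lemma IndexGE.zsmul (h : IndexGE y z r₁ r₂ N P) (s : ℤ) : IndexGE y z r₁ r₂ N (s • P) :=
  fun a b hab => by rw [map_zsmul, coeff_smul, coeff_smul, h a b hab, smul_zero]

lemma IndexGE.of_zsmul [IsDomain R] [CharZero R] {s : ℤ} (hs : s ≠ 0)
    (h : IndexGE y z r₁ r₂ N (s • P)) : IndexGE y z r₁ r₂ N P := fun a b hab => by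
  have := h a b hab
  rw [map_zsmul, coeff_smul, coeff_smul] at this
  exact (smul_eq_zero.1 this).resolve_left hs

end Index

section Bidegree

variable {R : Type*} [CommRing R] {P Q : R[X][X]} {d₁ d₂ e₁ e₂ : ℕ}

/-- `P` has degree at most `d₁` in the inner variable and at most `d₂` in the outer one. -/
structure HasBidegreeLE (P : R[X][X]) (d₁ d₂ : ℕ) : Prop where
  inner : ∀ b, (P.coeff b).natDegree ≤ d₁
  outer : P.natDegree ≤ d₂

lemma HasBidegreeLE.mono (h : HasBidegreeLE P d₁ d₂) (h₁ : d₁ ≤ e₁) (h₂ : d₂ ≤ e₂) :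
    HasBidegreeLE P e₁ e₂ :=
  ⟨fun b => (h.inner b).trans h₁, h.outer.trans h₂⟩

lemma HasBidegreeLE.sub (hP : HasBidegreeLE P d₁ d₂) (hQ : HasBidegreeLE Q d₁ d₂) :
    HasBidegreeLE (P - Q) d₁ d₂ where
  inner b := by
    rw [coeff_sub]
    exact (natDegree_sub_le _ _).trans (max_le (hP.inner b) (hQ.inner b))
  outer := (natDegree_sub_le _ _).trans (max_le hP.outer hQ.outer)

lemma HasBidegreeLE.mul (hP : HasBidegreeLE P d₁ d₂) (hQ : HasBidegreeLE Q e₁ e₂) :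
    HasBidegreeLE (P * Q) (d₁ + e₁) (d₂ + e₂) where
  inner b := by
    rw [coeff_mul]
    exact natDegree_sum_le_of_forall_le _ _ fun x _ =>
      natDegree_mul_le_of_le (hP.inner x.1) (hQ.inner x.2)
  outer := natDegree_mul_le_of_le hP.outer hQ.outer

lemma HasBidegreeLE.hasseDeriv (h : HasBidegreeLE P d₁ d₂) (j : ℕ) :
    HasBidegreeLE (hasseDeriv j P) d₁ d₂ where
  inner b := by
    rw [hasseDeriv_coeff, ← nsmul_eq_mul]
    exact (natDegree_smul_le _ _).trans (h.inner _)
  outer := (natDegree_hasseDeriv_le P j).trans ((Nat.sub_le _ _).trans h.outer)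

lemma HasBidegreeLE.innerHasseDeriv (h : HasBidegreeLE P d₁ d₂) (i : ℕ) :
    HasBidegreeLE (innerHasseDeriv i P) d₁ d₂ where
  inner b := by
    rw [coeff_innerHasseDeriv]
    exact (natDegree_hasseDeriv_le _ i).trans ((Nat.sub_le _ _).trans (h.inner b))
  outer := (natDegree_innerHasseDeriv_le i P).trans h.outer

end Bidegree

section BivariateL1Norm

/-- The inclusion of the bivariate integer polynomials into the rational ones. -/
noncomputable abbrev toRat : ℤ[X][X] →+* ℚ[X][X] := mapRingHom (mapRingHom (Int.castRingHom ℚ))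

lemma toRat_injective : Function.Injective toRat :=
  map_injective _ (map_injective _ (RingHom.injective_int _))

/-- The sum of the absolute values of the coefficients of a bivariate integer polynomial. -/
noncomputable def bivariateL1Norm : RingSeminorm ℤ[X][X] :=
  l1Seminorm (l1Seminorm (normRingSeminorm ℤ))

lemma norm_coeff_coeff_le_bivariateL1Norm (P : ℤ[X][X]) (a b : ℕ) :
    ‖(P.coeff b).coeff a‖ ≤ bivariateL1Norm P :=
  (coeff_le_l1Seminorm (normRingSeminorm ℤ) _ a).trans (coeff_le_l1Seminorm _ _ b)

lemma bivariateL1Norm_one_le : bivariateL1Norm 1 ≤ 1 := by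
  rw [bivariateL1Norm, l1Seminorm_one, l1Seminorm_one]
  exact (norm_one (α := ℤ)).le

lemma l1Seminorm_hasseDeriv_le {R : Type*} [CommRing R] (N : RingSeminorm R) {P : R[X]} {D : ℕ}
    (hP : P.natDegree ≤ D) (j : ℕ) :
    l1Seminorm N (hasseDeriv j P) ≤ 2 ^ D * l1Seminorm N P := by
  have hsmul : ∀ (m : ℕ) (c : R), N (m • c) ≤ m * N c := fun m c => by
    simpa only [Finset.sum_const, Finset.card_range, nsmul_eq_mul] using
      ringSeminorm_sum_le N (Finset.range m) fun _ => c
  rw [hasseDeriv_apply, sum_def, l1Seminorm_eq_sum_range N (Nat.lt_succ_of_le hP),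
    Finset.mul_sum]
  refine (ringSeminorm_sum_le _ _ _).trans ?_
  refine (Finset.sum_le_sum fun n hn => ?_).trans
    (Finset.sum_le_sum_of_subset_of_nonneg (f := fun n => 2 ^ D * N (P.coeff n))
      (fun n hn => Finset.mem_range.2 ?_) fun n _ _ => by positivity)
  · have hnD : n ≤ D := (le_natDegree_of_mem_supp n hn).trans hP
    have hchoose : n.choose j ≤ 2 ^ D :=
      (Nat.choose_le_two_pow n j).trans (Nat.pow_le_pow_right two_pos hnD)
    rw [l1Seminorm_monomial, ← nsmul_eq_mul]
    exact (hsmul _ _).trans (mul_le_mul_of_nonneg_right (mod_cast hchoose) (apply_nonneg N _))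
  · exact Nat.lt_succ_of_le ((le_natDegree_of_mem_supp n hn).trans hP)

lemma bivariateL1Norm_hasseDeriv_le {P : ℤ[X][X]} {d₁ d₂ : ℕ} (hP : HasBidegreeLE P d₁ d₂)
    (j : ℕ) : bivariateL1Norm (hasseDeriv j P) ≤ 2 ^ d₂ * bivariateL1Norm P :=
  l1Seminorm_hasseDeriv_le _ hP.outer j

lemma bivariateL1Norm_innerHasseDeriv_le {P : ℤ[X][X]} {d₁ d₂ : ℕ} (hP : HasBidegreeLE P d₁ d₂)
    (i : ℕ) : bivariateL1Norm (innerHasseDeriv i P) ≤ 2 ^ d₁ * bivariateL1Norm P := by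
  rw [bivariateL1Norm,
    l1Seminorm_eq_sum_range _ (Nat.lt_succ_of_le (natDegree_innerHasseDeriv_le i P)),
    l1Seminorm_eq_sum_range _ (Nat.lt_succ_self _), Finset.mul_sum]
  refine Finset.sum_le_sum fun b _ => ?_
  rw [coeff_innerHasseDeriv]
  exact l1Seminorm_hasseDeriv_le _ (hP.inner b) i

end BivariateL1Norm

/-! ### Zero estimates for the index -/

section GeneralizedWronskian

variable {K : Type*} [Field K] {k : ℕ}

/-- The matrix of Hasse derivatives of a family of polynomials; its determinant is their
generalized Wronskian. -/
noncomputable def hasseWronskianMatrix (f : Fin k → K[X]) : Matrix (Fin k) (Fin k) K[X] :=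
  Matrix.of fun i j => hasseDeriv (j : ℕ) (f i)

lemma det_choose_ne_zero [CharZero K] {v : Fin k → ℕ} (hv : Function.Injective v) :
    (Matrix.of fun i j : Fin k => ((v i).choose j : K)).det ≠ 0 := by
  have hpoch : (Matrix.of fun i j : Fin k => (descPochhammer K j).eval (v i : K)) =
      Matrix.of fun i j : Fin k => ((j : ℕ).factorial : K) *
        Matrix.of (fun i j : Fin k => ((v i).choose j : K)) i j := by
    ext i j
    simp only [Matrix.of_apply]
    rw [descPochhammer_eval_eq_descFactorial, Nat.descFactorial_eq_factorial_mul_choose,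
      Nat.cast_mul]
  have hvandermonde : (Matrix.vandermonde fun i => (v i : K)).det ≠ 0 :=
    Matrix.det_vandermonde_ne_zero_iff.2 (Nat.cast_injective.comp hv)
  rw [Matrix.det_eval_matrixOfPolynomials_eq_det_vandermonde (fun i => (v i : K))
    (fun j => descPochhammer K j) (fun j => descPochhammer_natDegree K j)
    (fun j => monic_descPochhammer K j), hpoch, Matrix.det_mul_row] at hvandermonde
  exact right_ne_zero_of_mul hvandermonde

lemma natDegree_X_pow_mul_hasseDeriv_le {R : Type*} [CommRing R] (f : R[X]) (j : ℕ) :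
    (X ^ j * hasseDeriv j f).natDegree ≤ f.natDegree := by
  rcases le_or_gt j f.natDegree with hj | hj
  · have := natDegree_hasseDeriv_le f j
    have hX : (X ^ j : R[X]).natDegree ≤ j := natDegree_X_pow_le j
    exact natDegree_mul_le.trans (by omega)
  · rw [hasseDeriv_eq_zero_of_lt_natDegree _ _ hj, mul_zero, natDegree_zero]
    exact Nat.zero_le _

lemma coeff_natDegree_X_pow_mul_hasseDeriv {R : Type*} [CommRing R] (f : R[X]) (j : ℕ) :
    (X ^ j * hasseDeriv j f).coeff f.natDegree = f.leadingCoeff * f.natDegree.choose j := by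
  rw [coeff_X_pow_mul']
  split_ifs with hj
  · rw [hasseDeriv_coeff, Nat.sub_add_cancel hj, leadingCoeff, mul_comm]
  · rw [Nat.choose_eq_zero_of_lt (not_le.1 hj), Nat.cast_zero, mul_zero]

lemma det_hasseWronskianMatrix_ne_zero_of_injective_natDegree [CharZero K] {f : Fin k → K[X]}
    (h0 : ∀ i, f i ≠ 0) (hinj : Function.Injective fun i => (f i).natDegree) :
    (hasseWronskianMatrix f).det ≠ 0 := by
  set M : Matrix (Fin k) (Fin k) K[X] :=
    (Matrix.of fun i j : Fin k => X ^ (j : ℕ) * hasseWronskianMatrix f i j).transpose with hM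
  have hdetM : M.det = (∏ j : Fin k, (X : K[X]) ^ (j : ℕ)) * (hasseWronskianMatrix f).det := by
    rw [hM, Matrix.det_transpose, Matrix.det_mul_row]
  have hlead : (Matrix.of fun i j => (M i j).coeff (f j).natDegree) =
      Matrix.of fun i j => (f j).leadingCoeff *
        (Matrix.of fun i j : Fin k => ((f i).natDegree.choose j : K)).transpose i j :=
    Matrix.ext fun i j => coeff_natDegree_X_pow_mul_hasseDeriv (f j) i
  have hcoeff := coeff_det_sum_of_natDegree_le M (fun j => (f j).natDegree)
    fun i j => natDegree_X_pow_mul_hasseDeriv_le (f j) i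
  intro hdet
  rw [hdetM, hdet, mul_zero, coeff_zero, hlead, Matrix.det_mul_row, Matrix.det_transpose]
    at hcoeff
  exact mul_ne_zero (Finset.prod_ne_zero_iff.2 fun j _ => leadingCoeff_ne_zero.2 (h0 j))
    (det_choose_ne_zero hinj) hcoeff.symm

lemma det_hasseWronskianMatrix_update_sub_smul (f : Fin k → K[X]) {a b : Fin k} (hab : a ≠ b)
    (r : K) : (hasseWronskianMatrix (Function.update f a (f a - r • f b))).det =
      (hasseWronskianMatrix f).det := by
  have hrow : hasseWronskianMatrix (Function.update f a (f a - r • f b)) =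
      (hasseWronskianMatrix f).updateRow a
        (hasseWronskianMatrix f a + C (-r) • hasseWronskianMatrix f b) := by
    ext1 i j
    rcases eq_or_ne i a with rfl | hi
    · rw [Matrix.updateRow_self]
      simp only [hasseWronskianMatrix, Matrix.of_apply, Function.update_self, Pi.add_apply,
        Pi.smul_apply, map_sub, map_smul, smul_eq_mul, map_neg, neg_mul, ← smul_eq_C_mul]
      exact sub_eq_add_neg _ _
    · rw [Matrix.updateRow_ne hi]
      simp only [hasseWronskianMatrix, Matrix.of_apply, Function.update_of_ne hi]
  rw [hrow, Matrix.det_updateRow_add_smul_self _ hab]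

lemma linearIndependent_update_sub_smul {f : Fin k → K[X]} (hf : LinearIndependent K f)
    {a b : Fin k} (hab : a ≠ b) (r : K) :
    LinearIndependent K (Function.update f a (f a - r • f b)) := by
  have hupdate : Function.update f a (f a - r • f b) =
      f + ((Pi.single a (-r) : Fin k → K) · • f b) := by
    ext1 i
    rcases eq_or_ne i a with rfl | hi
    · simp [sub_eq_add_neg]
    · simp [hi]
  rw [hupdate, linearIndependent_add_smul_iff (Pi.single_eq_of_ne hab.symm _)]
  exact hf

lemma natDegree_sub_leadingCoeff_div_smul_lt {p q : K[X]} (hq : q ≠ 0)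
    (hdeg : p.natDegree = q.natDegree)
    (hne : p - (p.leadingCoeff / q.leadingCoeff) • q ≠ 0) :
    (p - (p.leadingCoeff / q.leadingCoeff) • q).natDegree < p.natDegree := by
  have hp : p ≠ 0 := by
    rintro rfl
    simp at hne
  have hlq : q.leadingCoeff ≠ 0 := leadingCoeff_ne_zero.2 hq
  have hr : p.leadingCoeff / q.leadingCoeff ≠ 0 := div_ne_zero (leadingCoeff_ne_zero.2 hp) hlq
  refine natDegree_lt_natDegree hne (degree_sub_lt_left ?_ hp ?_)
  · rw [smul_eq_C_mul, degree_C_mul hr, degree_eq_natDegree hp, degree_eq_natDegree hq, hdeg]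
  · rw [smul_eq_C_mul, leadingCoeff_mul, leadingCoeff_C, div_mul_cancel₀ _ hlq]

/-- Subtracting a multiple of one polynomial from another preserves the determinant; this
reduces the general case to that of distinct degrees. -/
theorem det_hasseWronskianMatrix_ne_zero [CharZero K] {f : Fin k → K[X]}
    (hf : LinearIndependent K f) : (hasseWronskianMatrix f).det ≠ 0 := by
  induction hs : ∑ i, (f i).natDegree using Nat.strong_induction_on generalizing f with
  | _ s ih =>
    by_cases hinj : Function.Injective fun i => (f i).natDegree
    · exact det_hasseWronskianMatrix_ne_zero_of_injective_natDegree hf.ne_zero hinj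
    · obtain ⟨a, b, hdeg, hab⟩ := Function.not_injective_iff.1 hinj
      set r := (f a).leadingCoeff / (f b).leadingCoeff
      have hg := linearIndependent_update_sub_smul hf hab r
      have hlt : (f a - r • f b).natDegree < (f a).natDegree :=
        natDegree_sub_leadingCoeff_div_smul_lt (hf.ne_zero b) hdeg <| by
          simpa only [Function.update_self] using hg.ne_zero a
      rw [← det_hasseWronskianMatrix_update_sub_smul f hab r]
      refine ih _ ?_ hg rfl
      rw [← hs]
      refine Finset.sum_lt_sum (fun i _ => ?_) ⟨a, Finset.mem_univ _, ?_⟩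
      · rcases eq_or_ne i a with rfl | hi
        · rw [Function.update_self]
          exact hlt.le
        · rw [Function.update_of_ne hi]
      · rwa [Function.update_self]

end GeneralizedWronskian

section RankDecomposition

variable {K : Type*} [Field K]

lemma coeff_mem_span_coeffs (W : K[X][X]) (j : ℕ) :
    W.coeff j ∈ Submodule.span K (W.coeffs : Set K[X]) := by
  by_cases hj : W.coeff j = 0
  · rw [hj]
    exact Submodule.zero_mem _
  · exact Submodule.subset_span (coeff_mem_coeffs hj)

lemma finrank_span_coeffs_le (W : K[X][X]) :
    Module.finrank K (Submodule.span K (W.coeffs : Set K[X])) ≤ W.natDegree + 1 := by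
  let := Classical.decEq K[X]
  exact (finrank_span_finset_le_card _).trans <|
    Finset.card_image_le.trans (card_supp_le_succ_natDegree W)

lemma exists_eq_sum_C_mul_map_C (W : K[X][X]) :
    ∃ (k : ℕ) (f g : Fin k → K[X]), k ≤ W.natDegree + 1 ∧ LinearIndependent K f ∧
      LinearIndependent K g ∧ W = ∑ l, C (f l) * (g l).map C := by
  set V : Submodule K K[X] := Submodule.span K (W.coeffs : Set K[X])
  set b := Module.finBasis K V
  choose φ hφ using fun l => LinearMap.exists_extend (b.coord l)
  have hφ_apply : ∀ l (x : V), φ l x = b.repr x l := fun l x => LinearMap.congr_fun (hφ l) x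
  refine ⟨Module.finrank K V, fun l => b l, fun l => mapCoeff (φ l) W, finrank_span_coeffs_le W,
    b.linearIndependent.map' V.subtype V.ker_subtype, ?_, ?_⟩
  · refine Fintype.linearIndependent_iff.2 fun c hc l => ?_
    have hvanish : ∀ x ∈ V, (∑ m, c m • φ m) x = 0 := by
      refine fun x hx => LinearMap.mem_ker.1 (Submodule.span_le.2 (fun p hp => ?_) hx)
      obtain ⟨j, -, rfl⟩ := mem_coeffs_iff.1 (Finset.mem_coe.1 hp)
      have hcoeff := congrArg (fun p => p.coeff j) hc
      simpa only [SetLike.mem_coe, LinearMap.mem_ker, LinearMap.sum_apply, LinearMap.smul_apply,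
        finsetSum_coeff, coeff_smul, coeff_mapCoeff, coeff_zero] using hcoeff
    simpa [hφ_apply, Finsupp.single_apply] using hvanish (b l) (b l).2
  · ext1 j
    have hrepr := congrArg Subtype.val (b.sum_repr ⟨W.coeff j, coeff_mem_span_coeffs W j⟩)
    simp only [AddSubmonoidClass.coe_finsetSum, Submodule.coe_smul, ← hφ_apply] at hrepr
    simp only [finsetSum_coeff, coeff_C_mul, coeff_map, coeff_mapCoeff]
    simp only [mul_comm _ (C _), ← smul_eq_C_mul]
    exact hrepr.symm

end RankDecomposition

section GaussLemma

lemma isPrimitive_C_den_mul_X_sub_C_num (y : ℚ) :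
    (C (y.den : ℤ) * X - C y.num : ℤ[X]).IsPrimitive := by
  intro r hr
  have hdvd := (C_dvd_iff_dvd_coeff r _).1 hr
  have hnum : r ∣ y.num := by simpa using hdvd 0
  have hden : r ∣ y.den := by
    simpa only [coeff_sub, coeff_C_mul, coeff_X_one, mul_one, coeff_C_of_ne_zero one_ne_zero,
      sub_zero] using hdvd 1
  exact (Rat.isCoprime_num_den y).isUnit_of_dvd' hnum hden

lemma isPrimitive_pow {R : Type*} [CommRing R] [IsDomain R] [NormalizedGCDMonoid R] {p : R[X]}
    (hp : p.IsPrimitive) (n : ℕ) : (p ^ n).IsPrimitive := by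
  induction n with
  | zero => simpa only [pow_zero] using isPrimitive_one
  | succ n ih => exact pow_succ p n ▸ ih.mul hp

lemma map_C_den_mul_X_sub_C_num (y : ℚ) :
    (C (y.den : ℤ) * X - C y.num : ℤ[X]).map (Int.castRingHom ℚ) = C (y.den : ℚ) * (X - C y) := by
  rw [mul_sub, ← C_mul, mul_comm (y.den : ℚ) y, Rat.mul_den_eq_num]
  simp

lemma den_pow_le_norm_leadingCoeff {P : ℤ[X]} (hP : P ≠ 0) {y : ℚ} {u : ℕ}
    (h : (X - C y) ^ u ∣ P.map (Int.castRingHom ℚ)) :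
    (y.den : ℝ) ^ u ≤ ‖P.leadingCoeff‖ := by
  have hdvd : (C (y.den : ℤ) * X - C y.num) ^ u ∣ P := by
    rw [IsPrimitive.Int.dvd_iff_map_cast_dvd_map_cast _ _
      (isPrimitive_pow (isPrimitive_C_den_mul_X_sub_C_num y) u), Polynomial.map_pow,
      map_C_den_mul_X_sub_C_num, mul_pow, ← C_pow]
    have hunit : IsUnit (C ((y.den : ℚ) ^ u)) :=
      isUnit_C.2 (pow_ne_zero u (Nat.cast_ne_zero.2 y.den_nz)).isUnit
    rwa [hunit.mul_left_dvd]
  have hlead : (C (y.den : ℤ) * X - C y.num).leadingCoeff = (y.den : ℤ) := by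
    rw [sub_eq_add_neg, ← C_neg, leadingCoeff_linear (Nat.cast_ne_zero.2 y.den_nz)]
  have hle := leadingCoeff_dvd_leadingCoeff hdvd
  rw [leadingCoeff_pow, hlead] at hle
  rw [Int.norm_eq_abs]
  exact_mod_cast Int.le_of_dvd (abs_pos.2 (leadingCoeff_ne_zero.2 hP)) ((dvd_abs _ _).2 hle)

end GaussLemma

section HasseMatrix

variable {R : Type*} [CommRing R] {K : Type*} [Field K] {k : ℕ}

/-- The matrix of the mixed Hasse derivatives of orders below `k` of a bivariate polynomial. -/
noncomputable def hasseMatrix (W : R[X][X]) (k : ℕ) : Matrix (Fin k) (Fin k) R[X][X] :=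
  Matrix.of fun i j => innerHasseDeriv i (hasseDeriv j W)

lemma det_hasseMatrix_sum_C_mul_map_C (f g : Fin k → K[X]) :
    (hasseMatrix (∑ l, C (f l) * (g l).map C) k).det =
      C (hasseWronskianMatrix f).det * (hasseWronskianMatrix g).det.map C := by
  have hmul : hasseMatrix (∑ l, C (f l) * (g l).map C) k =
      (C.mapMatrix (hasseWronskianMatrix f)).transpose *
        (mapRingHom C).mapMatrix (hasseWronskianMatrix g) := by
    ext1 i j
    simp only [Matrix.mul_apply, hasseMatrix, hasseWronskianMatrix, Matrix.of_apply,
      RingHom.mapMatrix_apply, Matrix.map_apply, Matrix.transpose_apply, map_sum, coe_mapRingHom]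
    refine Finset.sum_congr rfl fun l _ => ?_
    rw [← innerHasseDeriv_C_mul_map_C, ← smul_eq_C_mul, ← smul_eq_C_mul, map_smul, hasseDeriv_map]
  rw [hmul, Matrix.det_mul, Matrix.det_transpose, ← RingHom.map_det, ← RingHom.map_det,
    coe_mapRingHom]

lemma toRat_det_hasseMatrix (W : ℤ[X][X]) (k : ℕ) :
    toRat (hasseMatrix W k).det = (hasseMatrix (toRat W) k).det := by
  rw [RingHom.map_det]
  congr 1
  ext1 i j
  simp only [hasseMatrix, Matrix.of_apply, RingHom.mapMatrix_apply, Matrix.map_apply,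
    coe_mapRingHom, hasseDeriv_map, innerHasseDeriv_map]

lemma bivariateL1Norm_det_hasseMatrix_le {W : ℤ[X][X]} {d₁ d₂ : ℕ} (hW : HasBidegreeLE W d₁ d₂)
    (k : ℕ) : bivariateL1Norm (hasseMatrix W k).det ≤
      k.factorial * (2 ^ (d₁ + d₂) * bivariateL1Norm W) ^ k := by
  simpa only [Fintype.card_fin] using
    ringSeminorm_det_le bivariateL1Norm bivariateL1Norm_one_le (hasseMatrix W k) fun i j => by
      rw [hasseMatrix, Matrix.of_apply, pow_add, mul_assoc]
      exact (bivariateL1Norm_innerHasseDeriv_le (hW.hasseDeriv j) i).trans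
        (mul_le_mul_of_nonneg_left (bivariateL1Norm_hasseDeriv_le hW j) (by positivity))

lemma X_pow_dvd_weightedSubst_det_hasseMatrix {y z : R} {r₁ r₂ : ℕ} {N : ℝ} {W : R[X][X]}
    (hr₂ : 0 < r₂) (hW : IndexGE y z r₁ r₂ N W) (k : ℕ) :
    X ^ (∑ j : Fin k, ⌈N - (k - 1) * r₂ - (j : ℕ) * r₁⌉₊) ∣
      weightedSubst r₁ r₂ (bivariateTaylor y z (hasseMatrix W k).det) := by
  have hentry : ∀ i j : Fin k, X ^ ⌈N - (k - 1) * r₂ - (j : ℕ) * r₁⌉₊ ∣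
      weightedSubst r₁ r₂ (bivariateTaylor y z (hasseMatrix W k i j)) := fun i j => by
    refine X_pow_dvd_weightedSubst hr₂ fun a b hab => ?_
    refine hW.innerHasseDeriv_hasseDeriv i j a b ?_
    have hi : ((i : ℕ) : ℝ) ≤ k - 1 := by
      rw [le_sub_iff_add_le]
      exact_mod_cast i.2
    have hlt := Nat.lt_ceil.1 hab
    push_cast at hlt
    linarith [mul_le_mul_of_nonneg_right hi (Nat.cast_nonneg (α := ℝ) r₂)]
  choose c hc using hentry
  have hfactor : (weightedSubst r₁ r₂).mapMatrix
      ((bivariateTaylor y z).mapMatrix (hasseMatrix W k)) =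
      Matrix.of fun i j : Fin k =>
        X ^ ⌈N - (k - 1) * r₂ - (j : ℕ) * r₁⌉₊ * Matrix.of c i j :=
    Matrix.ext hc
  rw [RingHom.map_det, RingHom.map_det, hfactor, Matrix.det_mul_row, Finset.prod_pow_eq_pow_sum]
  exact dvd_mul_right _ _

end HasseMatrix

section ProductIndex

variable {K : Type*} [Field K]

lemma exists_expand_taylor_eq {U : K[X]} (hU : U ≠ 0) (y : K) {r : ℕ} (hr : 0 < r) :
    ∃ Q : K[X], expand K r (taylor y U) = X ^ (r * U.rootMultiplicity y) * Q ∧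
      Q.coeff 0 ≠ 0 := by
  obtain ⟨q, hq, hndvd⟩ := exists_eq_pow_rootMultiplicity_mul_and_not_dvd U hU y
  refine ⟨expand K r (taylor y q), ?_, ?_⟩
  · conv_lhs => rw [hq]
    rw [taylor_mul, taylor_pow, map_sub, taylor_X, taylor_C, add_sub_cancel_right, map_mul,
      map_pow, expand_X, pow_mul]
  · rw [coeff_expand hr, if_pos (dvd_zero r), Nat.zero_div, taylor_coeff_zero]
    rwa [dvd_iff_isRoot] at hndvd

lemma le_of_X_pow_dvd_weightedSubst_C_mul_map_C {U V : K[X]} (hU : U ≠ 0) (hV : V ≠ 0)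
    {y z : K} {r₁ r₂ e : ℕ} (hr₁ : 0 < r₁) (hr₂ : 0 < r₂)
    (h : X ^ e ∣ weightedSubst r₁ r₂ (bivariateTaylor y z (C U * V.map C))) :
    e ≤ r₂ * U.rootMultiplicity y + r₁ * V.rootMultiplicity z := by
  obtain ⟨Q₁, hQ₁, hQ₁0⟩ := exists_expand_taylor_eq hU y hr₂
  obtain ⟨Q₂, hQ₂, hQ₂0⟩ := exists_expand_taylor_eq hV z hr₁
  set s := r₂ * U.rootMultiplicity y
  set t := r₁ * V.rootMultiplicity z
  have hprod : weightedSubst r₁ r₂ (bivariateTaylor y z (C U * V.map C)) =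
      X ^ (s + t) * (Q₁ * Q₂) := by
    rw [map_mul, bivariateTaylor_C, bivariateTaylor_map_C, map_mul, weightedSubst_C,
      weightedSubst_map_C, hQ₁, hQ₂]
    ring
  by_contra! hlt
  have hX : X ^ (s + t) * X ∣ X ^ (s + t) * (Q₁ * Q₂) := by
    rw [← pow_succ, ← hprod]
    exact (pow_dvd_pow _ hlt).trans h
  rw [mul_dvd_mul_iff_left (pow_ne_zero _ X_ne_zero), X_dvd_iff, mul_coeff_zero] at hX
  exact mul_ne_zero hQ₁0 hQ₂0 hX

lemma den_pow_rootMultiplicity_le_of_map_eq {P : ℤ[X]} {U : ℚ[X]} {s : ℚ} (hU : U ≠ 0)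
    (hs : s ≠ 0) (hP : P.map (Int.castRingHom ℚ) = C s * U) (y : ℚ) :
    (y.den : ℝ) ^ U.rootMultiplicity y ≤ ‖P.leadingCoeff‖ := by
  refine den_pow_le_norm_leadingCoeff ?_ (hP ▸ (pow_rootMultiplicity_dvd U y).mul_left _)
  rintro rfl
  rw [Polynomial.map_zero] at hP
  exact mul_ne_zero (C_ne_zero.2 hs) hU hP.symm

lemma coeff_coeff_toRat_eq_mul {D : ℤ[X][X]} {U V : ℚ[X]} (hD : toRat D = C U * V.map C)
    (a b : ℕ) : (((D.coeff b).coeff a : ℤ) : ℚ) = U.coeff a * V.coeff b := by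
  simpa only [coe_mapRingHom, coeff_map, coeff_C_mul, coeff_mul_C, eq_intCast] using
    congrArg (fun P => (P.coeff b).coeff a) hD

lemma den_pow_rootMultiplicity_inner_le {D : ℤ[X][X]} {U V : ℚ[X]} (hU : U ≠ 0) (hV : V ≠ 0)
    (hD : toRat D = C U * V.map C) (y : ℚ) :
    (y.den : ℝ) ^ U.rootMultiplicity y ≤ bivariateL1Norm D := by
  refine (den_pow_rootMultiplicity_le_of_map_eq (P := D.coeff V.natDegree) hU
    (leadingCoeff_ne_zero.2 hV) ?_ y).trans (norm_coeff_coeff_le_bivariateL1Norm D _ _)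
  ext1 a
  rw [coeff_map, eq_intCast, coeff_coeff_toRat_eq_mul hD, coeff_C_mul, mul_comm, leadingCoeff]

lemma den_pow_rootMultiplicity_outer_le {D : ℤ[X][X]} {U V : ℚ[X]} (hU : U ≠ 0) (hV : V ≠ 0)
    (hD : toRat D = C U * V.map C) (z : ℚ) :
    (z.den : ℝ) ^ V.rootMultiplicity z ≤ bivariateL1Norm D := by
  set P : ℤ[X] := mapCoeff (lcoeff ℤ U.natDegree) D
  have hcoeff : ∀ b, P.coeff b = (D.coeff b).coeff U.natDegree := coeff_mapCoeff _ D
  refine (den_pow_rootMultiplicity_le_of_map_eq (P := P) hV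
    (leadingCoeff_ne_zero.2 hU) ?_ z).trans ?_
  · ext1 b
    rw [coeff_map, eq_intCast, hcoeff, coeff_coeff_toRat_eq_mul hD, coeff_C_mul, leadingCoeff]
  · rw [leadingCoeff, hcoeff]
    exact norm_coeff_coeff_le_bivariateL1Norm D _ _

end ProductIndex

section BivariateZeroEstimate

lemma exists_den_pow_le_of_indexGE {W : ℤ[X][X]} (hW : W ≠ 0) {d₁ d₂ : ℕ}
    (hdeg : HasBidegreeLE W d₁ d₂) {y z : ℚ} {r₁ r₂ : ℕ} (hr₁ : 0 < r₁) (hr₂ : 0 < r₂) {N : ℝ}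
    (hN : IndexGE y z r₁ r₂ N (toRat W)) :
    ∃ k u v : ℕ, 0 < k ∧ k ≤ d₂ + 1 ∧
      ∑ j : Fin k, ⌈N - (k - 1) * r₂ - (j : ℕ) * r₁⌉₊ ≤ r₂ * u + r₁ * v ∧
      (y.den : ℝ) ^ u ≤ k.factorial * (2 ^ (d₁ + d₂) * bivariateL1Norm W) ^ k ∧
      (z.den : ℝ) ^ v ≤ k.factorial * (2 ^ (d₁ + d₂) * bivariateL1Norm W) ^ k := by
  obtain ⟨k, f, g, hk, hf, hg, hsum⟩ := exists_eq_sum_C_mul_map_C (toRat W)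
  have hU := det_hasseWronskianMatrix_ne_zero hf
  have hV := det_hasseWronskianMatrix_ne_zero hg
  have hdet : toRat (hasseMatrix W k).det =
      C (hasseWronskianMatrix f).det * (hasseWronskianMatrix g).det.map C := by
    rw [toRat_det_hasseMatrix, hsum, det_hasseMatrix_sum_C_mul_map_C]
  have hnorm := bivariateL1Norm_det_hasseMatrix_le hdeg k
  refine ⟨k, _, _, Nat.pos_of_ne_zero ?_,
    hk.trans (Nat.succ_le_succ (natDegree_map_le.trans hdeg.outer)), ?_,
    (den_pow_rootMultiplicity_inner_le hU hV hdet y).trans hnorm,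
    (den_pow_rootMultiplicity_outer_le hU hV hdet z).trans hnorm⟩
  · rintro rfl
    rw [Finset.univ_eq_empty, Finset.sum_empty, map_eq_zero_iff _ toRat_injective] at hsum
    exact hW hsum
  · refine le_of_X_pow_dvd_weightedSubst_C_mul_map_C hU hV hr₁ hr₂ ?_
    rw [← hdet, toRat_det_hasseMatrix]
    exact X_pow_dvd_weightedSubst_det_hasseMatrix hr₂ hN k

lemma factorial_mul_pow_le_exp {k r₁ r₂ : ℕ} (hk : k ≤ 3 * r₁) (hr : r₂ ≤ r₁) {c M : ℝ}
    (hM₀ : 0 ≤ M) (hM : M ≤ Real.exp (c * r₁)) :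
    (k.factorial : ℝ) * (2 ^ (2 * r₁ + 2 * r₂) * M) ^ k ≤ Real.exp (k * (c + 7) * r₁) := by
  have hfactorial : (k.factorial : ℝ) ≤ Real.exp (3 * r₁) ^ k := by
    have hk' : (k : ℝ) ≤ Real.exp (3 * r₁) := by
      have hcast : (k : ℝ) ≤ 3 * r₁ := by exact_mod_cast hk
      linarith [Real.add_one_le_exp (3 * (r₁ : ℝ))]
    calc (k.factorial : ℝ) ≤ (k : ℝ) ^ k := by exact_mod_cast Nat.factorial_le_pow k
      _ ≤ Real.exp (3 * r₁) ^ k := by gcongr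
  have htwo : (2 : ℝ) ^ (2 * r₁ + 2 * r₂) ≤ Real.exp (4 * r₁) := by
    have he : (2 : ℝ) ≤ Real.exp 1 := by linarith [Real.add_one_le_exp (1 : ℝ)]
    calc (2 : ℝ) ^ (2 * r₁ + 2 * r₂) ≤ 2 ^ (4 * r₁) := pow_le_pow_right₀ one_le_two (by omega)
      _ ≤ Real.exp 1 ^ (4 * r₁) := by gcongr
      _ = Real.exp (4 * r₁) := by rw [← Real.exp_nat_mul, mul_one]; push_cast; rfl
  calc (k.factorial : ℝ) * (2 ^ (2 * r₁ + 2 * r₂) * M) ^ k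
      ≤ Real.exp (3 * r₁) ^ k * (Real.exp (4 * r₁) * Real.exp (c * r₁)) ^ k := by gcongr
    _ = Real.exp (k * (c + 7) * r₁) := by
      rw [← mul_pow, ← Real.exp_add, ← Real.exp_add, ← Real.exp_nat_mul]
      ring_nf

lemma le_sum_ceil_sub_mul {k r₁ r₂ : ℕ} (hk : k ≤ 3 * r₂) {ε : ℝ} (hε : 0 < ε) (hε₁ : ε ≤ 1) :
    k * ε ^ 2 * r₁ * r₂ / 24 ≤
      ∑ j : Fin k, ((⌈3 / 4 * (ε * r₁ * r₂) - (j : ℕ) * r₁⌉₊ : ℕ) : ℝ) := by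
  have hk' : (k : ℝ) ≤ 3 * r₂ := by exact_mod_cast hk
  rw [Fin.sum_univ_eq_sum_range
    (fun j => ((⌈3 / 4 * (ε * r₁ * r₂) - (j : ℕ) * r₁⌉₊ : ℕ) : ℝ))]
  set J := ⌈k * ε / 6⌉₊
  have hJk : J ≤ k := Nat.ceil_le.2 (by nlinarith [Nat.cast_nonneg (α := ℝ) k])
  calc k * ε ^ 2 * r₁ * r₂ / 24 = k * ε / 6 * (ε * r₁ * r₂ / 4) := by ring
    _ ≤ J * (ε * r₁ * r₂ / 4) := by gcongr; exact Nat.le_ceil _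
    _ = ∑ j ∈ Finset.range J, (ε * r₁ * r₂ / 4) := by
        rw [Finset.sum_const, Finset.card_range, nsmul_eq_mul]
    _ ≤ ∑ j ∈ Finset.range J, ((⌈3 / 4 * (ε * r₁ * r₂) - (j : ℕ) * r₁⌉₊ : ℕ) : ℝ) := by
        refine Finset.sum_le_sum fun j hj => le_trans ?_ (Nat.le_ceil _)
        have hj' : (j : ℝ) < k * ε / 6 := Nat.lt_ceil.1 (Finset.mem_range.1 hj)
        have hjr : (j : ℝ) ≤ ε * r₂ / 2 := by nlinarith
        nlinarith [mul_le_mul_of_nonneg_right hjr (Nat.cast_nonneg (α := ℝ) r₁)]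
    _ ≤ _ := Finset.sum_le_sum_of_subset_of_nonneg (Finset.range_mono hJk)
        fun _ _ _ => Nat.cast_nonneg _

lemma mul_log_le_of_pow_le_exp {x B : ℝ} {u : ℕ} (hx : 0 < x) (h : x ^ u ≤ Real.exp B) :
    u * Real.log x ≤ B := by
  rwa [← Real.log_pow, Real.log_le_iff_le_exp (pow_pos hx _)]

theorem not_indexGE_of_log_den_gt {ε c : ℝ} (hε : 0 < ε) (hε₁ : ε ≤ 1) (hc : 0 ≤ c) {r₁ r₂ : ℕ}
    (hr₁ : 0 < r₁) (hr₂ : 0 < r₂) {y z : ℚ} (hy : 48 * (c + 7) / ε ^ 2 < Real.log y.den)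
    (hr : 8 * (r₂ : ℝ) ≤ ε * r₁) (hyz : r₁ * Real.log y.den ≤ r₂ * Real.log z.den)
    {W : ℤ[X][X]} (hW : W ≠ 0) (hdeg : HasBidegreeLE W (2 * r₁) (2 * r₂))
    (hnorm : bivariateL1Norm W ≤ Real.exp (c * r₁)) :
    ¬ IndexGE y z r₁ r₂ (ε * r₁ * r₂) (toRat W) := by
  intro hindex
  obtain ⟨k, u, v, hk₀, hk, hsum, hu, hv⟩ := exists_den_pow_le_of_indexGE hW hdeg hr₁ hr₂ hindex
  have hr₁' : (0 : ℝ) < r₁ := Nat.cast_pos.2 hr₁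
  have hrr : r₂ ≤ r₁ := by
    have : (r₂ : ℝ) ≤ r₁ := by nlinarith
    exact_mod_cast this
  have hexp := factorial_mul_pow_le_exp (k := k) (by omega) hrr (apply_nonneg _ W) hnorm
  have hlow : k * ε ^ 2 * r₁ * r₂ / 24 ≤ r₂ * u + r₁ * v := by
    refine (le_sum_ceil_sub_mul (by omega) hε hε₁).trans (le_trans ?_
      (show ((∑ j : Fin k, ⌈ε * r₁ * r₂ - (k - 1) * r₂ - (j : ℕ) * r₁⌉₊ : ℕ) : ℝ) ≤
        r₂ * u + r₁ * v from mod_cast hsum))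
    push_cast
    gcongr
    have hk' : (k : ℝ) ≤ 2 * r₂ + 1 := by exact_mod_cast hk
    nlinarith
  have hu' := mul_log_le_of_pow_le_exp (Nat.cast_pos.2 y.pos) (hu.trans hexp)
  have hv' := mul_log_le_of_pow_le_exp (Nat.cast_pos.2 z.pos) (hv.trans hexp)
  have hlog : 0 < Real.log y.den := lt_of_le_of_lt (by positivity) hy
  generalize Real.log y.den = L₁ at *
  generalize Real.log z.den = L₂ at *
  have hupper : k * ε ^ 2 * r₁ * r₂ / 24 * L₁ ≤ 2 * (k * (c + 7) * r₁) * r₂ :=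
    calc k * ε ^ 2 * r₁ * r₂ / 24 * L₁ ≤ (r₂ * u + r₁ * v) * L₁ := by gcongr
      _ = r₂ * (u * L₁) + r₁ * L₁ * v := by ring
      _ ≤ r₂ * (k * (c + 7) * r₁) + r₂ * L₂ * v := by gcongr
      _ = r₂ * (k * (c + 7) * r₁) + r₂ * (v * L₂) := by ring
      _ ≤ r₂ * (k * (c + 7) * r₁) + r₂ * (k * (c + 7) * r₁) := by gcongr
      _ = 2 * (k * (c + 7) * r₁) * r₂ := by ring
  have hpos : 0 < (k : ℝ) * r₁ * r₂ :=
    mul_pos (mul_pos (Nat.cast_pos.2 hk₀) hr₁') (Nat.cast_pos.2 hr₂)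
  rw [div_lt_iff₀ (by positivity)] at hy
  nlinarith [mul_lt_mul_of_pos_left hy hpos]

end BivariateZeroEstimate

section Wronskian

variable {R : Type*} [CommRing R] [IsDomain R] [CharZero R]

lemma natDegree_eq_of_wronskian_eq_zero {A B : R[X]} (hA : A ≠ 0) (hB : B ≠ 0)
    (h : wronskian A B = 0) : A.natDegree = B.natDegree := by
  have hX : ∀ P : R[X], (X * derivative P).natDegree ≤ P.natDegree ∧
      (X * derivative P).coeff P.natDegree = P.leadingCoeff * P.natDegree := fun P => by
    simpa only [pow_one, hasseDeriv_one', Nat.choose_one_right] using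
      And.intro (natDegree_X_pow_mul_hasseDeriv_le P 1) (coeff_natDegree_X_pow_mul_hasseDeriv P 1)
  have hmul : A * (X * derivative B) = X * derivative A * B := by
    rw [wronskian] at h
    linear_combination X * h
  have hcoeff := congrArg (fun P => P.coeff (A.natDegree + B.natDegree)) hmul
  simp only [coeff_mul_add_eq_of_natDegree_le le_rfl (hX B).1,
    coeff_mul_add_eq_of_natDegree_le (hX A).1 le_rfl, (hX A).2, (hX B).2, coeff_natDegree]
    at hcoeff
  have hlead := mul_ne_zero (leadingCoeff_ne_zero.2 hA) (leadingCoeff_ne_zero.2 hB)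
  have hcast : (A.natDegree : R) = B.natDegree := mul_left_cancel₀ hlead (by
    linear_combination -hcoeff)
  exact_mod_cast hcast

lemma C_leadingCoeff_mul_eq_of_wronskian_eq_zero {A B : R[X]} (hA : A ≠ 0) (hB : B ≠ 0)
    (h : wronskian A B = 0) : C B.leadingCoeff * A = C A.leadingCoeff * B := by
  have hdeg := natDegree_eq_of_wronskian_eq_zero hA hB h
  by_contra hne
  set D := C B.leadingCoeff * A - C A.leadingCoeff * B with hD
  have hD₀ : D ≠ 0 := sub_ne_zero.2 hne
  have hwronskian : wronskian D B = 0 := by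
    simp only [wronskian, hD, derivative_sub, derivative_C_mul] at h ⊢
    linear_combination C B.leadingCoeff * h
  have hdegD := natDegree_eq_of_wronskian_eq_zero hD₀ hB hwronskian
  refine leadingCoeff_ne_zero.2 hD₀ ?_
  rw [leadingCoeff, hdegD, hD, coeff_sub, coeff_C_mul, coeff_C_mul, coeff_natDegree, ← hdeg,
    coeff_natDegree]
  ring

lemma exists_smul_eq_smul_of_wronskian_eq_zero {A B : R[X][X]} (hA : A ≠ 0) (hB : B ≠ 0)
    (houter : A * derivative B - derivative A * B = 0)
    (hinner : A * innerHasseDeriv 1 B - innerHasseDeriv 1 A * B = 0) :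
    ∃ u v : R, u ≠ 0 ∧ u • A = v • B := by
  have hAB := C_leadingCoeff_mul_eq_of_wronskian_eq_zero hA hB houter
  set a := A.leadingCoeff
  set b := B.leadingCoeff
  have hb₀ : b ≠ 0 := leadingCoeff_ne_zero.2 hB
  have hwronskian : wronskian a b = 0 := by
    have hcoeff := congrArg (fun P => P.coeff (A.natDegree + B.natDegree)) (sub_eq_zero.1 hinner)
    simp only [coeff_mul_add_eq_of_natDegree_le le_rfl (natDegree_innerHasseDeriv_le 1 B),
      coeff_mul_add_eq_of_natDegree_le (natDegree_innerHasseDeriv_le 1 A) le_rfl,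
      coeff_innerHasseDeriv, hasseDeriv_one', coeff_natDegree] at hcoeff
    exact sub_eq_zero.2 hcoeff
  have hab := C_leadingCoeff_mul_eq_of_wronskian_eq_zero (leadingCoeff_ne_zero.2 hA) hb₀ hwronskian
  have hab' := congrArg (C : R[X] → R[X][X]) hab
  rw [C_mul, C_mul] at hab'
  have hsmul : ∀ (r : R) (P : R[X][X]), r • P = C (C r) * P := fun r P => Algebra.smul_def r P
  refine ⟨b.leadingCoeff, a.leadingCoeff, leadingCoeff_ne_zero.2 hb₀,
    mul_left_cancel₀ (C_ne_zero.2 hb₀) ?_⟩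
  rw [hsmul, hsmul]
  linear_combination C (C b.leadingCoeff) * hAB + B * hab'

end Wronskian

section PencilZeroEstimate

variable {A B A' B' : ℤ[X][X]} {c N N' : ℝ} {r₁ r₂ : ℕ} {y z : ℚ}

lemma bivariateL1Norm_mul_sub_mul_le (hr₁ : 0 < r₁) (hA : bivariateL1Norm A ≤ Real.exp (c * r₁))
    (hB : bivariateL1Norm B ≤ Real.exp (c * r₁))
    (hA' : bivariateL1Norm A' ≤ 2 ^ r₁ * bivariateL1Norm A)
    (hB' : bivariateL1Norm B' ≤ 2 ^ r₁ * bivariateL1Norm B) :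
    bivariateL1Norm (A * B' - A' * B) ≤ Real.exp ((2 * c + 2) * r₁) := by
  set S := bivariateL1Norm
  have he : (2 : ℝ) ≤ Real.exp 1 := by linarith [Real.add_one_le_exp (1 : ℝ)]
  have htwo : (2 : ℝ) * 2 ^ r₁ ≤ Real.exp (2 * r₁) :=
    calc (2 : ℝ) * 2 ^ r₁ ≤ 2 ^ r₁ * 2 ^ r₁ := by
          gcongr
          exact le_self_pow₀ one_le_two hr₁.ne'
      _ ≤ Real.exp 1 ^ r₁ * Real.exp 1 ^ r₁ := by gcongr
      _ = Real.exp (2 * r₁) := by rw [← Real.exp_nat_mul, ← Real.exp_add]; ring_nf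
  calc S (A * B' - A' * B) ≤ S (A * B') + S (A' * B) := map_sub_le_add S _ _
    _ ≤ S A * S B' + S A' * S B := add_le_add (map_mul_le_mul S _ _) (map_mul_le_mul S _ _)
    _ ≤ S A * (2 ^ r₁ * S B) + 2 ^ r₁ * S A * S B := by gcongr
    _ = 2 * 2 ^ r₁ * (S A * S B) := by ring
    _ ≤ Real.exp (2 * r₁) * (Real.exp (c * r₁) * Real.exp (c * r₁)) := by gcongr
    _ = Real.exp ((2 * c + 2) * r₁) := by rw [← Real.exp_add, ← Real.exp_add]; ring_nf

/-- The expression `A * D B - D A * B` is a determinant, so up to the factor `u` it may be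
computed with `u • A + v • B` in place of `A`. -/
lemma indexGE_mul_map_sub_map_mul (D : ℤ[X][X] →+ ℤ[X][X]) {u v : ℤ} (hu : u ≠ 0)
    (hE : IndexGE y z r₁ r₂ N' (toRat (u • A + v • B)))
    (hDE : IndexGE y z r₁ r₂ N' (toRat (D (u • A + v • B)))) :
    IndexGE y z r₁ r₂ N' (toRat (A * D B - D A * B)) := by
  refine IndexGE.of_zsmul hu ?_
  have hdet : u • (A * D B - D A * B) =
      (u • A + v • B) * D B - D (u • A + v • B) * B := by
    rw [map_add, map_zsmul, map_zsmul]
    simp only [zsmul_eq_mul]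
    ring
  rw [← map_zsmul, hdet, map_sub, map_mul, map_mul]
  exact (hE.mul_right _).sub (hDE.mul_right _)

lemma den_le_bivariateL1Norm_of_smul_add_smul_eq_zero (hB : B ≠ 0) {y : ℚ}
    (h : (y.den : ℤ) • A + y.num • B = 0) : (y.den : ℝ) ≤ bivariateL1Norm B := by
  obtain ⟨b, hb⟩ : ∃ b, B.coeff b ≠ 0 := ⟨_, leadingCoeff_ne_zero.2 hB⟩
  obtain ⟨a, ha⟩ : ∃ a, (B.coeff b).coeff a ≠ 0 := ⟨_, leadingCoeff_ne_zero.2 hb⟩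
  have hcoeff : (y.den : ℤ) * (A.coeff b).coeff a + y.num * (B.coeff b).coeff a = 0 := by
    simpa only [coeff_add, coeff_smul, smul_eq_mul, coeff_zero] using
      congrArg (fun P => (P.coeff b).coeff a) h
  have hdvd : (y.den : ℤ) ∣ (B.coeff b).coeff a :=
    (Rat.isCoprime_num_den y).symm.dvd_of_dvd_mul_left
      ⟨-(A.coeff b).coeff a, by linear_combination hcoeff⟩
  have hle : ((y.den : ℤ) : ℝ) ≤ ((|(B.coeff b).coeff a| : ℤ) : ℝ) :=
    Int.cast_le.2 (Int.le_of_dvd (abs_pos.2 ha) ((dvd_abs _ _).2 hdvd))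
  rw [Int.cast_abs, ← Int.norm_eq_abs, Int.cast_natCast] at hle
  exact hle.trans (norm_coeff_coeff_le_bivariateL1Norm B a b)

lemma mul_map_sub_map_mul_eq_zero (D : ℤ[X][X] →+ ℤ[X][X]) (hr₁ : 0 < r₁)
    (hDdeg : ∀ {P}, HasBidegreeLE P r₁ r₂ → HasBidegreeLE (D P) r₁ r₂)
    (hDnorm : ∀ {P}, HasBidegreeLE P r₁ r₂ → bivariateL1Norm (D P) ≤ 2 ^ r₁ * bivariateL1Norm P)
    (hDindex : ∀ {P}, IndexGE y z r₁ r₂ N (toRat P) → IndexGE y z r₁ r₂ N' (toRat (D P)))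
    (hzero : ∀ W, HasBidegreeLE W (2 * r₁) (2 * r₂) →
      bivariateL1Norm W ≤ Real.exp ((2 * c + 2) * r₁) →
        IndexGE y z r₁ r₂ N' (toRat W) → W = 0)
    (hN : N' ≤ N) (hAdeg : HasBidegreeLE A r₁ r₂) (hBdeg : HasBidegreeLE B r₁ r₂)
    (hA : bivariateL1Norm A ≤ Real.exp (c * r₁)) (hB : bivariateL1Norm B ≤ Real.exp (c * r₁))
    {u v : ℤ} (hu : u ≠ 0) (hE : IndexGE y z r₁ r₂ N (toRat (u • A + v • B))) :
    A * D B - D A * B = 0 := by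
  refine hzero _ ?_ ?_ ?_
  · rw [two_mul, two_mul]
    exact (hAdeg.mul (hDdeg hBdeg)).sub ((hDdeg hAdeg).mul hBdeg)
  · exact bivariateL1Norm_mul_sub_mul_le hr₁ hA hB (hDnorm hAdeg) (hDnorm hBdeg)
  · exact indexGE_mul_map_sub_map_mul D hu (hE.mono hN) (hDindex hE)

lemma exists_smul_eq_smul_of_indexGE (hr₁ : 0 < r₁) (hr : r₂ ≤ r₁)
    (hzero : ∀ W, HasBidegreeLE W (2 * r₁) (2 * r₂) →
      bivariateL1Norm W ≤ Real.exp ((2 * c + 2) * r₁) →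
        IndexGE y z r₁ r₂ N' (toRat W) → W = 0)
    (hN : N' + r₁ ≤ N) (hB₀ : B ≠ 0) (hAdeg : HasBidegreeLE A r₁ r₂)
    (hBdeg : HasBidegreeLE B r₁ r₂) (hA : bivariateL1Norm A ≤ Real.exp (c * r₁))
    (hB : bivariateL1Norm B ≤ Real.exp (c * r₁)) {u v : ℤ} (hu : u ≠ 0)
    (hE : IndexGE y z r₁ r₂ N (toRat (u • A + v • B))) :
    ∃ s t : ℤ, s ≠ 0 ∧ s • A = t • B := by
  by_cases hA₀ : A = 0
  · exact ⟨1, 0, one_ne_zero, by rw [hA₀, smul_zero, zero_smul]⟩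
  have hN' : N' ≤ N := by linarith [Nat.cast_nonneg (α := ℝ) r₁]
  have hr' : (r₂ : ℝ) ≤ r₁ := Nat.cast_le.2 hr
  refine exists_smul_eq_smul_of_wronskian_eq_zero hA₀ hB₀ ?_ ?_
  · refine mul_map_sub_map_mul_eq_zero derivative.toAddMonoidHom hr₁ (fun {P} hP => ?_)
      (fun {P} hP => ?_) (fun {P} hP => ?_) hzero hN' hAdeg hBdeg hA hB hu hE
    all_goals rw [LinearMap.toAddMonoidHom_coe]
    · rw [← hasseDeriv_one]
      exact hP.hasseDeriv 1
    · rw [← hasseDeriv_one]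
      exact (bivariateL1Norm_hasseDeriv_le hP 1).trans
        (mul_le_mul_of_nonneg_right (pow_le_pow_right₀ one_le_two hr) (apply_nonneg _ _))
    · rw [coe_mapRingHom, ← derivative_map]
      exact hP.derivative.mono (by linarith)
  · refine mul_map_sub_map_mul_eq_zero (innerHasseDeriv 1).toAddMonoidHom hr₁
      (fun hP => hP.innerHasseDeriv 1)
      (fun hP => bivariateL1Norm_innerHasseDeriv_le hP 1) (fun {P} hP => ?_) hzero hN' hAdeg hBdeg
      hA hB hu hE
    rw [LinearMap.toAddMonoidHom_coe, coe_mapRingHom, ← innerHasseDeriv_map]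
    exact (hP.innerHasseDeriv 1).mono (by rw [Nat.cast_one, one_mul]; linarith)

theorem not_indexGE_den_smul_add_num_smul {ε : ℝ} (hε : 0 < ε) (hε₁ : ε ≤ 1) (hc : 0 ≤ c)
    (hr₁ : 0 < r₁) (hr₂ : 0 < r₂) (hy : 48 * (2 * c + 9) / (ε / 2) ^ 2 < Real.log y.den)
    (hr : 8 * (r₂ : ℝ) ≤ ε / 2 * r₁) (hεr : 2 ≤ ε * r₂)
    (hyz : r₁ * Real.log y.den ≤ r₂ * Real.log z.den) (hAB : A ≠ 0 ∨ B ≠ 0)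
    (hAdeg : HasBidegreeLE A r₁ r₂) (hBdeg : HasBidegreeLE B r₁ r₂)
    (hA : bivariateL1Norm A ≤ Real.exp (c * r₁)) (hB : bivariateL1Norm B ≤ Real.exp (c * r₁))
    {w : ℚ} (hw : Real.exp (c * r₁) < w.den) :
    ¬ IndexGE y z r₁ r₂ (ε * r₁ * r₂) (toRat ((w.den : ℤ) • A + w.num • B)) := by
  intro hE
  have hrr : r₂ ≤ r₁ := by
    have : (r₂ : ℝ) ≤ r₁ := by nlinarith [Nat.cast_nonneg (α := ℝ) r₁]
    exact_mod_cast this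
  have hden : (w.den : ℤ) ≠ 0 := Int.natCast_ne_zero.2 w.den_nz
  have hN : ε / 2 * r₁ * r₂ + r₁ ≤ ε * r₁ * r₂ := by nlinarith [Nat.cast_nonneg (α := ℝ) r₁]
  have hzero : ∀ W, HasBidegreeLE W (2 * r₁) (2 * r₂) →
      bivariateL1Norm W ≤ Real.exp ((2 * c + 2) * r₁) →
        IndexGE y z r₁ r₂ (ε / 2 * r₁ * r₂) (toRat W) → W = 0 := fun W hdeg hnorm hindex => by
    by_contra hW
    exact not_indexGE_of_log_den_gt (half_pos hε) (by linarith) (by linarith) hr₁ hr₂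
      (by convert hy using 3; ring) hr hyz hW hdeg hnorm hindex
  have hzero_of_small : ∀ P, HasBidegreeLE P r₁ r₂ → bivariateL1Norm P ≤ Real.exp (c * r₁) →
      IndexGE y z r₁ r₂ (ε * r₁ * r₂) (toRat P) → P = 0 := fun P hdeg hnorm hindex =>
    hzero P (hdeg.mono (by omega) (by omega))
      (hnorm.trans (Real.exp_le_exp.2 (mul_le_mul_of_nonneg_right (by linarith) (by positivity))))
      (hindex.mono (by linarith [Nat.cast_nonneg (α := ℝ) r₁]))
  rcases eq_or_ne B 0 with rfl | hB₀
  · refine hAB.elim (fun hA₀ => hA₀ (hzero_of_small A hAdeg hA ?_)) (· rfl)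
    rw [smul_zero, add_zero, map_zsmul] at hE
    exact hE.of_zsmul hden
  obtain ⟨s, t, hs, hst⟩ :=
    exists_smul_eq_smul_of_indexGE hr₁ hrr hzero hN hB₀ hAdeg hBdeg hA hB hden hE
  have hsE : s • ((w.den : ℤ) • A + w.num • B) = (w.den * t + s * w.num) • B := by
    rw [smul_add, smul_comm, hst, smul_smul, smul_smul, ← add_smul]
  by_cases hcoeff : w.den * t + s * w.num = 0
  · rw [hcoeff, zero_smul] at hsE
    have hE₀ := (smul_eq_zero.1 hsE).resolve_left hs
    exact absurd (den_le_bivariateL1Norm_of_smul_add_smul_eq_zero hB₀ hE₀)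
      (hB.trans_lt hw).not_ge
  · refine hB₀ (hzero_of_small B hBdeg hB (IndexGE.of_zsmul hcoeff ?_))
    rw [← map_zsmul, ← hsE, map_zsmul]
    exact hE.zsmul s

end PencilZeroEstimate

/-! ### Auxiliary polynomials -/

section TaylorExpansion

variable {R : Type*} [CommRing R] {P : R[X][X]} {d₁ d₂ : ℕ}

lemma coeff_coeff_bivariateTaylor_monomial_monomial (y z p : R) (a b i j : ℕ) :
    ((bivariateTaylor y z (monomial b (monomial a p))).coeff j).coeff i =
      p * a.choose i * b.choose j * y ^ (a - i) * z ^ (b - j) := by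
  have hmonomial : monomial b (monomial a p) = C (monomial a p) * (X ^ b : R[X]).map C := by
    rw [Polynomial.map_pow, map_X, C_mul_X_pow_eq_monomial]
  rw [hmonomial, map_mul, bivariateTaylor_C, bivariateTaylor_map_C, coeff_C_mul, coeff_map,
    coeff_mul_C, taylor_coeff, taylor_coeff, hasseDeriv_monomial, ← monomial_one_right_eq_X_pow,
    hasseDeriv_monomial, eval_monomial, eval_monomial]
  ring

lemma HasBidegreeLE.coeff_coeff_bivariateTaylor (hP : HasBidegreeLE P d₁ d₂) (y z : R) (i j : ℕ) :
    ((bivariateTaylor y z P).coeff j).coeff i =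
      ∑ b ∈ Finset.range (d₂ + 1), ∑ a ∈ Finset.range (d₁ + 1),
        (P.coeff b).coeff a * a.choose i * b.choose j * y ^ (a - i) * z ^ (b - j) := by
  have hsum : P = ∑ b ∈ Finset.range (d₂ + 1), ∑ a ∈ Finset.range (d₁ + 1),
      monomial b (monomial a ((P.coeff b).coeff a)) := by
    conv_lhs => rw [P.as_sum_range' (d₂ + 1) (Nat.lt_succ_of_le hP.outer)]
    refine Finset.sum_congr rfl fun b _ => ?_
    rw [← map_sum, ← (P.coeff b).as_sum_range' (d₁ + 1) (Nat.lt_succ_of_le (hP.inner b))]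
  conv_lhs => rw [hsum]
  simp only [map_sum, finsetSum_coeff, coeff_coeff_bivariateTaylor_monomial_monomial]

end TaylorExpansion

section PowModByMonic

variable {R : Type*} [CommRing R] {f g : R[X]}

lemma X_mul_modByMonic (hf : f.Monic) (hg : g.natDegree < f.natDegree) :
    (X * g) %ₘ f = X * g - C (g.coeff (f.natDegree - 1)) * f := by
  nontriviality R
  refine (div_modByMonic_unique (C (g.coeff (f.natDegree - 1))) _ hf ⟨by ring, ?_⟩).2
  rw [degree_eq_natDegree hf.ne_zero, degree_lt_iff_coeff_zero]
  intro m hm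
  obtain ⟨k, rfl⟩ : ∃ k, m = k + 1 := ⟨m - 1, by omega⟩
  rw [coeff_sub, coeff_X_mul, coeff_C_mul]
  rcases hm.eq_or_lt with h | h
  · rw [← h, hf.coeff_natDegree, h, Nat.add_sub_cancel, mul_one, sub_self]
  · rw [coeff_eq_zero_of_natDegree_lt h, coeff_eq_zero_of_natDegree_lt (by omega), mul_zero,
      sub_zero]

lemma l1Seminorm_X_pow_modByMonic_le (N : RingSeminorm R) (hone : N 1 ≤ 1) (hf : f.Monic)
    (hd : 0 < f.natDegree) (k : ℕ) :
    l1Seminorm N (X ^ k %ₘ f) ≤ (1 + l1Seminorm N f) ^ k := by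
  induction k with
  | zero =>
    rw [pow_zero, pow_zero]
    have hself : (1 : R[X]) %ₘ f = 1 := by
      nontriviality R
      refine (modByMonic_eq_self_iff hf).2 (degree_lt_degree ?_)
      rwa [natDegree_one]
    rwa [hself, l1Seminorm_one]
  | succ k ih =>
    set g := X ^ k %ₘ f
    have hg : g.natDegree < f.natDegree :=
      natDegree_modByMonic_lt _ hf fun h => by rw [h, natDegree_one] at hd; exact hd.false
    have hstep : X ^ (k + 1) %ₘ f = X * g - C (g.coeff (f.natDegree - 1)) * f := by
      have hgg : g %ₘ f = g := by
        nontriviality R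
        exact (modByMonic_eq_self_iff hf).2 (degree_lt_degree hg)
      rw [← X_mul_modByMonic hf hg, pow_succ', mul_modByMonic, mul_modByMonic X g, hgg]
    have hX : l1Seminorm N X ≤ 1 := by rwa [← monomial_one_one_eq_X, l1Seminorm_monomial]
    calc l1Seminorm N (X ^ (k + 1) %ₘ f)
        ≤ l1Seminorm N (X * g) + l1Seminorm N (C (g.coeff (f.natDegree - 1)) * f) := by
          rw [hstep]
          exact map_sub_le_add _ _ _
      _ ≤ 1 * l1Seminorm N g + l1Seminorm N g * l1Seminorm N f := by
          refine add_le_add ((map_mul_le_mul _ _ _).trans ?_) ((map_mul_le_mul _ _ _).trans ?_)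
          · gcongr
          · rw [l1Seminorm_C]
            gcongr
            exact coeff_le_l1Seminorm N g _
      _ = l1Seminorm N g * (1 + l1Seminorm N f) := by ring
      _ ≤ (1 + l1Seminorm N f) ^ (k + 1) := by
          rw [pow_succ]
          gcongr

end PowModByMonic

section SiegelLemma

variable {φ ι : Type*} [Fintype φ] [Fintype ι] [Nonempty φ] {δ : ℝ}

lemma exists_int_ne_zero_mulVec_eq_zero (A : Matrix φ ι ℤ) {H : ℝ} (hH : 1 ≤ H)
    (hA : ∀ p i, ‖A p i‖ ≤ H) (hδ : 0 < δ)
    (hcard : (Fintype.card φ : ℝ) ≤ (1 - δ) * Fintype.card ι) :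
    ∃ x : ι → ℤ, x ≠ 0 ∧ A.mulVec x = 0 ∧ ∀ i, ‖x i‖ ≤ (Fintype.card ι * H) ^ (1 / δ) := by
  have hφ : (1 : ℝ) ≤ Fintype.card φ := Nat.one_le_cast.2 Fintype.card_pos
  have hlt : (Fintype.card φ : ℝ) < Fintype.card ι := by
    rcases Nat.eq_zero_or_pos (Fintype.card ι) with hι | hι
    · rw [hι, Nat.cast_zero, mul_zero] at hcard
      linarith
    · nlinarith [Nat.cast_pos (α := ℝ).2 hι]
  let : SeminormedAddCommGroup (Matrix φ ι ℤ) := Matrix.seminormedAddCommGroup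
  obtain ⟨x, hx, hAx, hnorm⟩ :=
    Int.Matrix.exists_ne_zero_int_vec_norm_le A (Nat.cast_lt.1 hlt) Fintype.card_pos
  have hAH : ‖A‖ ≤ H := (Matrix.norm_le_iff (by linarith)).2 hA
  have hexp : (Fintype.card φ : ℝ) / (Fintype.card ι - Fintype.card φ) ≤ 1 / δ := by
    rw [div_le_div_iff₀ (by linarith) hδ]
    nlinarith
  refine ⟨x, hx, hAx, fun i => (norm_le_pi_norm x i).trans (hnorm.trans ?_)⟩
  have hbase : Fintype.card ι * max 1 ‖A‖ ≤ Fintype.card ι * H := by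
    gcongr
    exact max_le hH hAH
  refine (Real.rpow_le_rpow (by positivity) hbase ?_).trans
    (Real.rpow_le_rpow_of_exponent_le ?_ hexp)
  · exact div_nonneg (Nat.cast_nonneg _) (by linarith)
  · exact one_le_mul_of_one_le_of_one_le (by linarith) hH

/-- Siegel's lemma for coefficients in the order `ℤ[c]`. Powers of `c` are rewritten in the basis
`1, c, …, c ^ (d - 1)`, so that each equation becomes `d` equations over `ℤ`. -/
theorem exists_int_ne_zero_forall_sum_mul_pow_eq_zero {f : ℤ[X]} (hf : f.Monic)
    (hd : 0 < f.natDegree) {c : ℝ} (hc : aeval c f = 0) {k : φ → ι → ℤ} {e : φ → ι → ℕ} {K : ℝ}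
    (hK : 1 ≤ K) (hk : ∀ p i, ‖k p i‖ ≤ K) {E : ℕ} (he : ∀ p i, e p i ≤ E) (hδ : 0 < δ)
    (hcard : (Fintype.card φ * f.natDegree : ℝ) ≤ (1 - δ) * Fintype.card ι) :
    ∃ x : ι → ℤ, x ≠ 0 ∧ (∀ p, ∑ i, (x i * k p i : ℝ) * c ^ e p i = 0) ∧
      ∀ i, ‖x i‖ ≤
        (Fintype.card ι * (K * (1 + l1Seminorm (normRingSeminorm ℤ) f) ^ E)) ^ (1 / δ) := by
  set N := normRingSeminorm ℤ
  have hM : 1 ≤ 1 + l1Seminorm N f := le_add_of_nonneg_right (apply_nonneg _ _)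
  have hH : 1 ≤ K * (1 + l1Seminorm N f) ^ E :=
    one_le_mul_of_one_le_of_one_le hK (one_le_pow₀ hM)
  have : Nonempty (Fin f.natDegree) := ⟨⟨0, hd⟩⟩
  let A : Matrix (φ × Fin f.natDegree) ι ℤ :=
    Matrix.of fun p i => k p.1 i * (X ^ e p.1 i %ₘ f).coeff p.2
  have hAapply : ∀ p i, A p i = k p.1 i * (X ^ e p.1 i %ₘ f).coeff p.2 := fun _ _ => rfl
  have hA : ∀ p i, ‖A p i‖ ≤ K * (1 + l1Seminorm N f) ^ E := fun p i => by
    have hcoeff : ‖(X ^ e p.1 i %ₘ f).coeff p.2‖ ≤ (1 + l1Seminorm N f) ^ E :=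
      (coeff_le_l1Seminorm N _ _).trans
        ((l1Seminorm_X_pow_modByMonic_le N (norm_one (α := ℤ)).le hf hd _).trans
          (pow_le_pow_right₀ hM (he _ _)))
    rw [hAapply, norm_mul]
    exact mul_le_mul (hk _ _) hcoeff (norm_nonneg _) (by linarith)
  obtain ⟨x, hx, hAx, hxnorm⟩ := exists_int_ne_zero_mulVec_eq_zero A hH hA hδ
    (by simpa only [Fintype.card_prod, Fintype.card_fin, Nat.cast_mul])
  refine ⟨x, hx, fun p => ?_, hxnorm⟩
  have hG : ∑ i, C (x i * k p i) * (X ^ e p i %ₘ f) = 0 := by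
    ext l
    rw [coeff_zero, finsetSum_coeff]
    rcases lt_or_ge l f.natDegree with hl | hl
    · have := congrFun hAx (p, ⟨l, hl⟩)
      rw [Matrix.mulVec, dotProduct] at this
      refine (Finset.sum_congr rfl fun i _ => ?_).trans this
      rw [coeff_C_mul, hAapply]
      ring
    · refine Finset.sum_eq_zero fun i _ => ?_
      rw [coeff_C_mul, coeff_eq_zero_of_degree_lt, mul_zero]
      exact (degree_modByMonic_lt _ hf).trans_le
        (degree_le_natDegree.trans (WithBot.coe_le_coe.2 hl))
  simpa only [map_sum, map_mul (aeval c), aeval_C, aeval_modByMonic_eq_self_of_root hc, map_pow,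
    aeval_X, map_zero, algebraMap_int_eq, Int.coe_castRingHom, Int.cast_mul] using
    congrArg (aeval c) hG

end SiegelLemma

section WeightedTriangle

/-- The pairs `(j, i)` of natural numbers with `i / r₁ + j / r₂ < t`. -/
noncomputable def weightedTriangle (t : ℝ) (r₁ r₂ : ℕ) : Finset (ℕ × ℕ) :=
  ((Finset.range ⌈t * r₂⌉₊).sigma fun j => Finset.range ⌈r₁ * (t - j / r₂)⌉₊).map
    (Equiv.sigmaEquivProd ℕ ℕ).toEmbedding

variable {t : ℝ} {r₁ r₂ : ℕ}

lemma mem_weightedTriangle (hr₁ : 0 < r₁) (hr₂ : 0 < r₂) {i j : ℕ}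
    (h : (i * r₂ + j * r₁ : ℝ) < t * r₁ * r₂) : (j, i) ∈ weightedTriangle t r₁ r₂ := by
  have hr₁' : (0 : ℝ) < r₁ := Nat.cast_pos.2 hr₁
  have hr₂' : (0 : ℝ) < r₂ := Nat.cast_pos.2 hr₂
  have hi : (i : ℝ) < r₁ * (t - j / r₂) := by
    have : r₁ * (t - j / r₂) = (t * r₁ * r₂ - j * r₁) / r₂ := by field_simp
    rw [this, lt_div_iff₀ hr₂']
    linarith
  have hj : (j : ℝ) < t * r₂ := by
    refine lt_of_mul_lt_mul_right ?_ hr₁'.le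
    nlinarith [mul_nonneg (Nat.cast_nonneg (α := ℝ) i) hr₂'.le]
  exact Finset.mem_map.2 ⟨⟨j, i⟩, Finset.mem_sigma.2
    ⟨Finset.mem_range.2 (Nat.lt_ceil.2 hj), Finset.mem_range.2 (Nat.lt_ceil.2 hi)⟩, rfl⟩

lemma card_weightedTriangle_le_sum (hr₂ : 0 < r₂) :
    ((weightedTriangle t r₁ r₂).card : ℝ) ≤
      r₁ * (t * ⌈t * r₂⌉₊ - ⌈t * r₂⌉₊ * (⌈t * r₂⌉₊ - 1 : ℝ) / 2 / r₂) + ⌈t * r₂⌉₊ := by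
  set J := ⌈t * r₂⌉₊
  have hr₂' : (0 : ℝ) < r₂ := Nat.cast_pos.2 hr₂
  have hrow : ∀ j ∈ Finset.range J,
      ((⌈r₁ * (t - (j : ℝ) / r₂)⌉₊ : ℕ) : ℝ) ≤ r₁ * (t - (j : ℝ) / r₂) + 1 := fun j hj => by
    have hjt : (j : ℝ) / r₂ < t := by
      rw [div_lt_iff₀ hr₂']
      exact Nat.lt_ceil.1 (Finset.mem_range.1 hj)
    exact (Nat.ceil_lt_add_one (mul_nonneg (Nat.cast_nonneg _) (by linarith))).le
  have hgauss : ∑ j ∈ Finset.range J, (j : ℝ) = J * (J - 1) / 2 := by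
    rcases Nat.eq_zero_or_pos J with hJ | hJ
    · rw [hJ, Finset.sum_range_zero, Nat.cast_zero, zero_mul, zero_div]
    · rw [eq_div_iff two_ne_zero, ← Nat.cast_pred hJ, ← Nat.cast_sum]
      exact_mod_cast Finset.sum_range_id_mul_two J
  calc ((weightedTriangle t r₁ r₂).card : ℝ)
      = ∑ j ∈ Finset.range J, ((⌈r₁ * (t - (j : ℝ) / r₂)⌉₊ : ℕ) : ℝ) := by
        rw [weightedTriangle, Finset.card_map, Finset.card_sigma, Nat.cast_sum]
        simp only [Finset.card_range, J]
    _ ≤ ∑ j ∈ Finset.range J, (r₁ * (t - (j : ℝ) / r₂) + 1) := Finset.sum_le_sum hrow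
    _ = _ := by
        rw [Finset.sum_add_distrib, ← Finset.mul_sum, Finset.sum_sub_distrib, ← Finset.sum_div,
          hgauss, Finset.sum_const, Finset.sum_const, Finset.card_range, nsmul_eq_mul,
          nsmul_eq_mul, mul_one, mul_comm t]

lemma card_weightedTriangle_le (ht₀ : 0 ≤ t) (ht₁ : t ≤ 1) (hr₂ : 0 < r₂) :
    ((weightedTriangle t r₁ r₂).card : ℝ) ≤ t ^ 2 / 2 * r₁ * r₂ + r₁ + r₂ + 1 := by
  have hr₂' : (1 : ℝ) ≤ r₂ := Nat.one_le_cast.2 hr₂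
  have hJlt : (⌈t * r₂⌉₊ : ℝ) < t * r₂ + 1 := Nat.ceil_lt_add_one (by positivity)
  have hJle : t * r₂ ≤ (⌈t * r₂⌉₊ : ℝ) := Nat.le_ceil _
  have hsum := card_weightedTriangle_le_sum (t := t) (r₁ := r₁) hr₂
  obtain ⟨x, hx⟩ : ∃ x, (⌈t * r₂⌉₊ : ℝ) = t * r₂ + x := ⟨⌈t * r₂⌉₊ - t * r₂, by ring⟩
  rw [hx] at hJlt hJle hsum
  have hquadratic : t * (t * r₂ + x) - (t * r₂ + x) * (t * r₂ + x - 1) / 2 / r₂ ≤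
      t ^ 2 / 2 * r₂ + 1 := by
    have hrem : (x - x ^ 2) / 2 / r₂ ≤ 1 / 2 := by
      rw [div_le_iff₀ (by linarith)]
      nlinarith
    calc t * (t * r₂ + x) - (t * r₂ + x) * (t * r₂ + x - 1) / 2 / r₂
        = t ^ 2 / 2 * r₂ + t / 2 + (x - x ^ 2) / 2 / r₂ := by
          field_simp
          ring
      _ ≤ t ^ 2 / 2 * r₂ + 1 := by linarith
  nlinarith [mul_le_mul_of_nonneg_left hquadratic (Nat.cast_nonneg (α := ℝ) r₁)]

end WeightedTriangle

section BivariateOfCoeffs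

variable {r₁ r₂ : ℕ}

/-- The inclusion of the bivariate integer polynomials into the real ones. -/
noncomputable abbrev toReal : ℤ[X][X] →+* ℝ[X][X] :=
  mapRingHom (mapRingHom (Int.castRingHom ℝ))

/-- The bivariate polynomial of bidegree at most `(r₁, r₂)` with prescribed coefficients. -/
noncomputable def bivariateOfCoeffs (p : Fin (r₁ + 1) × Fin (r₂ + 1) → ℤ) : ℤ[X][X] :=
  ∑ x, monomial (x.2 : ℕ) (monomial (x.1 : ℕ) (p x))

lemma coeff_coeff_bivariateOfCoeffs (p : Fin (r₁ + 1) × Fin (r₂ + 1) → ℤ)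
    (x : Fin (r₁ + 1) × Fin (r₂ + 1)) :
    ((bivariateOfCoeffs p).coeff x.2).coeff x.1 = p x := by
  rw [bivariateOfCoeffs, finsetSum_coeff, finsetSum_coeff, Finset.sum_eq_single x]
  · rw [coeff_monomial_same, coeff_monomial_same]
  · intro y _ hy
    rw [coeff_monomial]
    split_ifs with houter
    · exact coeff_monomial_of_ne _ fun hinner => hy (Prod.ext (Fin.ext hinner.symm)
        (Fin.ext houter))
    · rfl
  · exact fun h => (h (Finset.mem_univ x)).elim

lemma bivariateOfCoeffs_ne_zero {p : Fin (r₁ + 1) × Fin (r₂ + 1) → ℤ} (hp : p ≠ 0) :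
    bivariateOfCoeffs p ≠ 0 := fun h => hp (funext fun x => by
  rw [← coeff_coeff_bivariateOfCoeffs p x, h, coeff_zero, coeff_zero, Pi.zero_apply])

lemma hasBidegreeLE_bivariateOfCoeffs (p : Fin (r₁ + 1) × Fin (r₂ + 1) → ℤ) :
    HasBidegreeLE (bivariateOfCoeffs p) r₁ r₂ where
  inner b := by
    rw [bivariateOfCoeffs, finsetSum_coeff]
    refine natDegree_sum_le_of_forall_le _ _ fun x _ => ?_
    rw [coeff_monomial]
    split_ifs
    · exact (natDegree_monomial_le _).trans x.1.is_le
    · exact natDegree_zero.trans_le (Nat.zero_le _)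
  outer := natDegree_sum_le_of_forall_le _ _ fun x _ =>
    (natDegree_monomial_le _).trans x.2.is_le

lemma bivariateL1Norm_bivariateOfCoeffs_le {p : Fin (r₁ + 1) × Fin (r₂ + 1) → ℤ} {T : ℝ}
    (h : ∀ x, ‖p x‖ ≤ T) : bivariateL1Norm (bivariateOfCoeffs p) ≤ (r₁ + 1) * (r₂ + 1) * T := by
  calc bivariateL1Norm (bivariateOfCoeffs p)
      ≤ ∑ _ : Fin (r₁ + 1) × Fin (r₂ + 1), T := by
        refine (ringSeminorm_sum_le _ _ _).trans (Finset.sum_le_sum fun x _ => ?_)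
        rw [bivariateL1Norm, l1Seminorm_monomial, l1Seminorm_monomial]
        exact h x
    _ = (r₁ + 1) * (r₂ + 1) * T := by
        rw [Finset.sum_const, Finset.card_univ, Fintype.card_prod, Fintype.card_fin,
          Fintype.card_fin, nsmul_eq_mul]
        push_cast
        ring

lemma coeff_coeff_bivariateTaylor_bivariateOfCoeffs (p : Fin (r₁ + 1) × Fin (r₂ + 1) → ℤ) (c : ℝ)
    (i j : ℕ) :
    ((bivariateTaylor c c (toReal (bivariateOfCoeffs p))).coeff j).coeff i =
      ∑ x, (p x * ((x.1 : ℕ).choose i * (x.2 : ℕ).choose j : ℕ) : ℝ) *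
        c ^ ((x.1 - i) + (x.2 - j) : ℕ) := by
  rw [bivariateOfCoeffs, map_sum, map_sum, finsetSum_coeff, finsetSum_coeff]
  refine Finset.sum_congr rfl fun x _ => ?_
  rw [toReal, coe_mapRingHom, map_monomial, coe_mapRingHom, map_monomial,
    coeff_coeff_bivariateTaylor_monomial_monomial, eq_intCast, pow_add]
  push_cast
  ring

end BivariateOfCoeffs

section AuxiliaryPolynomials

variable {f : ℤ[X]} {c : ℝ} {r₁ r₂ : ℕ}

lemma exists_int_pair_forall_sum_mul_pow_eq_zero {φ ψ ι : Type*} [Fintype φ] [Fintype ψ]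
    [Fintype ι] [Nonempty φ] (hf : f.Monic) (hd : 0 < f.natDegree) (hc : aeval c f = 0)
    {k : φ → ι → ℕ} {l : ψ → ι → ℕ} {e : φ → ι → ℕ} {g : ψ → ι → ℕ} {K : ℝ} {E : ℕ}
    (hK : 1 ≤ K) (hk : ∀ a i, k a i ≤ K) (hl : ∀ b i, l b i ≤ K) (he : ∀ a i, e a i ≤ E)
    (hg : ∀ b i, g b i ≤ E) {δ : ℝ} (hδ : 0 < δ)
    (hcard : ((Fintype.card φ + Fintype.card ψ : ℝ) * f.natDegree) ≤
      (1 - δ) * (2 * Fintype.card ι)) :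
    ∃ p q : ι → ℤ, (p ≠ 0 ∨ q ≠ 0) ∧
      (∀ a, ∑ i, (p i * k a i : ℝ) * c ^ e a i + c * ∑ i, (q i * k a i : ℝ) * c ^ e a i = 0) ∧
      (∀ b, ∑ i, (q i * l b i : ℝ) * c ^ g b i = 0) ∧
      ∀ i, max ‖p i‖ ‖q i‖ ≤ (2 * Fintype.card ι *
        (K * (1 + l1Seminorm (normRingSeminorm ℤ) f) ^ (E + 1))) ^ (1 / δ) := by
  let k' : φ ⊕ ψ → ι ⊕ ι → ℤ :=
    Sum.elim (fun a => Sum.elim (fun i => k a i) fun i => k a i) fun b => Sum.elim 0 fun i => l b i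
  let e' : φ ⊕ ψ → ι ⊕ ι → ℕ :=
    Sum.elim (fun a => Sum.elim (e a) fun i => e a i + 1) fun b => Sum.elim 0 (g b)
  have hk' : ∀ p i, ‖k' p i‖ ≤ K := by
    rintro (a | b) (i | i)
    exacts [(Int.norm_natCast _).trans_le (hk a i), (Int.norm_natCast _).trans_le (hk a i),
      norm_zero.trans_le (by linarith), (Int.norm_natCast _).trans_le (hl b i)]
  have he' : ∀ p i, e' p i ≤ E + 1 := by
    rintro (a | b) (i | i)
    exacts [(he a i).trans (Nat.le_succ _), Nat.succ_le_succ (he a i), Nat.zero_le _,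
      (hg b i).trans (Nat.le_succ _)]
  have hι : (Fintype.card (ι ⊕ ι) : ℝ) = 2 * Fintype.card ι := by
    rw [Fintype.card_sum, Nat.cast_add, two_mul]
  obtain ⟨x, hx, hxeq, hxnorm⟩ := exists_int_ne_zero_forall_sum_mul_pow_eq_zero hf hd hc hK hk' he'
    hδ (by rwa [hι, Fintype.card_sum, Nat.cast_add])
  rw [hι] at hxnorm
  refine ⟨fun i => x (Sum.inl i), fun i => x (Sum.inr i), ?_, fun a => ?_, fun b => ?_,
    fun i => max_le (hxnorm _) (hxnorm _)⟩
  · by_contra! hzero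
    refine hx (funext ?_)
    rintro (i | i)
    exacts [congrFun hzero.1 i, congrFun hzero.2 i]
  · rw [← hxeq (Sum.inl a), Fintype.sum_sum_type, Finset.mul_sum]
    refine congrArg₂ _ (Finset.sum_congr rfl fun i _ => ?_) (Finset.sum_congr rfl fun i _ => ?_)
    · rfl
    · simp only [k', e', Sum.elim_inl, Sum.elim_inr, Int.cast_natCast, pow_succ]
      ring
  · rw [← hxeq (Sum.inr b), Fintype.sum_sum_type]
    simp only [k', e', Sum.elim_inl, Sum.elim_inr, Pi.zero_apply, Int.cast_zero, mul_zero,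
      zero_mul, Finset.sum_const_zero, zero_add, Int.cast_natCast]

lemma choose_mul_choose_le (x : Fin (r₁ + 1) × Fin (r₂ + 1)) (i j : ℕ) :
    (x.1 : ℕ).choose i * (x.2 : ℕ).choose j ≤ 2 ^ (r₁ + r₂) := by
  rw [pow_add]
  exact Nat.mul_le_mul
    ((Nat.choose_le_two_pow _ _).trans (Nat.pow_le_pow_right two_pos x.1.is_le))
    ((Nat.choose_le_two_pow _ _).trans (Nat.pow_le_pow_right two_pos x.2.is_le))

lemma exists_auxiliary_polynomials_of_card_le (hf : f.Monic) (hd : 0 < f.natDegree)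
    (hc : aeval c f = 0) {δ : ℝ} (hδ : 0 < δ) {S T : Finset (ℕ × ℕ)} (hS : S.Nonempty)
    (hcard : ((S.card + T.card : ℝ) * f.natDegree) ≤ (1 - δ) * (2 * ((r₁ + 1) * (r₂ + 1)))) :
    ∃ A B : ℤ[X][X], (A ≠ 0 ∨ B ≠ 0) ∧ HasBidegreeLE A r₁ r₂ ∧ HasBidegreeLE B r₁ r₂ ∧
      max (bivariateL1Norm A) (bivariateL1Norm B) ≤ (r₁ + 1) * (r₂ + 1) *
        (2 * ((r₁ + 1) * (r₂ + 1)) * (2 ^ (r₁ + r₂) *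
          (1 + l1Seminorm (normRingSeminorm ℤ) f) ^ (r₁ + r₂ + 1))) ^ (1 / δ) ∧
      (∀ x ∈ S, ((bivariateTaylor c c (toReal A + C (C c) * toReal B)).coeff x.1).coeff x.2 = 0) ∧
      ∀ x ∈ T, ((bivariateTaylor c c (toReal B)).coeff x.1).coeff x.2 = 0 := by
  have : Nonempty S := hS.to_subtype
  let binom (U : Finset (ℕ × ℕ)) (u : U) (x : Fin (r₁ + 1) × Fin (r₂ + 1)) : ℕ :=
    (x.1 : ℕ).choose u.1.2 * (x.2 : ℕ).choose u.1.1
  let expo (U : Finset (ℕ × ℕ)) (u : U) (x : Fin (r₁ + 1) × Fin (r₂ + 1)) : ℕ :=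
    (x.1 - u.1.2) + (x.2 - u.1.1)
  have hbinom : ∀ U u x, (binom U u x : ℝ) ≤ 2 ^ (r₁ + r₂) := fun U u x => by
    exact_mod_cast choose_mul_choose_le x u.1.2 u.1.1
  have hexpo : ∀ U u x, expo U u x ≤ r₁ + r₂ := fun U u x =>
    Nat.add_le_add ((Nat.sub_le _ _).trans x.1.is_le) ((Nat.sub_le _ _).trans x.2.is_le)
  have hbox : (Fintype.card (Fin (r₁ + 1) × Fin (r₂ + 1)) : ℝ) = (r₁ + 1) * (r₂ + 1) := by
    rw [Fintype.card_prod, Fintype.card_fin, Fintype.card_fin]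
    push_cast
    rfl
  obtain ⟨p, q, hpq, hS₀, hT₀, hnorm⟩ := exists_int_pair_forall_sum_mul_pow_eq_zero hf hd hc
    (one_le_pow₀ one_le_two) (hbinom S) (hbinom T) (hexpo S) (hexpo T) hδ
    (by simpa only [Fintype.card_coe, hbox] using hcard)
  rw [hbox] at hnorm
  refine ⟨bivariateOfCoeffs p, bivariateOfCoeffs q,
    hpq.imp bivariateOfCoeffs_ne_zero bivariateOfCoeffs_ne_zero, hasBidegreeLE_bivariateOfCoeffs _,
    hasBidegreeLE_bivariateOfCoeffs _, ?_, fun x hx => ?_, fun x hx => ?_⟩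
  · exact max_le
      (bivariateL1Norm_bivariateOfCoeffs_le fun x => (le_max_left _ _).trans (hnorm x))
      (bivariateL1Norm_bivariateOfCoeffs_le fun x => (le_max_right _ _).trans (hnorm x))
  · rw [map_add, map_mul, bivariateTaylor_C, taylor_C, coeff_add, coeff_add, coeff_C_mul,
      coeff_C_mul, coeff_coeff_bivariateTaylor_bivariateOfCoeffs,
      coeff_coeff_bivariateTaylor_bivariateOfCoeffs]
    exact hS₀ ⟨x, hx⟩
  · rw [coeff_coeff_bivariateTaylor_bivariateOfCoeffs]
    exact hT₀ ⟨x, hx⟩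

lemma mul_rpow_le_exp {M δ : ℝ} (hM : 1 ≤ M) (hδ : 0 < δ) (hr₁ : 0 < r₁) (hr : r₂ ≤ r₁) :
    (r₁ + 1) * (r₂ + 1) * (2 * ((r₁ + 1) * (r₂ + 1)) *
      (2 ^ (r₁ + r₂) * M ^ (r₁ + r₂ + 1)) : ℝ) ^ (1 / δ) ≤
      Real.exp ((2 + (5 + 3 * Real.log M) / δ) * r₁) := by
  have hr₁' : (1 : ℝ) ≤ r₁ := Nat.one_le_cast.2 hr₁
  have hr' : (r₂ : ℝ) ≤ r₁ := Nat.cast_le.2 hr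
  have htwo : (2 : ℝ) ≤ Real.exp 1 := by linarith [Real.add_one_le_exp (1 : ℝ)]
  have hbox : (r₁ + 1) * (r₂ + 1) ≤ Real.exp (2 * r₁) := by
    rw [two_mul, Real.exp_add]
    gcongr
    · exact Real.add_one_le_exp _
    · exact (Real.add_one_le_exp _).trans (Real.exp_le_exp.2 hr')
  have hpow : (2 : ℝ) ^ (r₁ + r₂) ≤ Real.exp (2 * r₁) := by
    calc (2 : ℝ) ^ (r₁ + r₂) ≤ Real.exp 1 ^ (r₁ + r₂) := by gcongr
      _ ≤ Real.exp (2 * r₁) := by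
        rw [← Real.exp_nat_mul, Real.exp_le_exp]
        push_cast
        linarith
  have hMpow : M ^ (r₁ + r₂ + 1) ≤ Real.exp (3 * Real.log M * r₁) := by
    rw [← Real.exp_log (zero_lt_one.trans_le hM), ← Real.exp_nat_mul, Real.exp_log (by linarith),
      Real.exp_le_exp]
    push_cast
    nlinarith [Real.log_nonneg hM]
  have hbase : 2 * ((r₁ + 1) * (r₂ + 1)) * (2 ^ (r₁ + r₂) * M ^ (r₁ + r₂ + 1)) ≤
      Real.exp ((5 + 3 * Real.log M) * r₁) := by
    calc 2 * ((r₁ + 1) * (r₂ + 1)) * (2 ^ (r₁ + r₂) * M ^ (r₁ + r₂ + 1))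
        ≤ Real.exp r₁ * Real.exp (2 * r₁) * (Real.exp (2 * r₁) *
            Real.exp (3 * Real.log M * r₁)) := by
          gcongr
          exact htwo.trans (Real.exp_le_exp.2 hr₁')
      _ = Real.exp ((5 + 3 * Real.log M) * r₁) := by
          simp only [← Real.exp_add]
          ring_nf
  calc _ ≤ Real.exp (2 * r₁) * Real.exp ((5 + 3 * Real.log M) * r₁) ^ (1 / δ) := by gcongr
    _ = Real.exp ((2 + (5 + 3 * Real.log M) / δ) * r₁) := by
      rw [← Real.exp_mul, ← Real.exp_add]
      ring_nf

lemma card_weightedTriangle_add_mul_le {t s δ : ℝ} {d : ℕ} (ht₀ : 0 ≤ t) (ht₁ : t ≤ 1)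
    (hs₀ : 0 ≤ s) (hs₁ : s ≤ 1) (hδ : 0 < δ) (hts : d * (t ^ 2 + s ^ 2) / 2 = 2 - 4 * δ)
    (hr₂ : 0 < r₂) (hr : r₂ ≤ r₁) (hd : 3 * d ≤ r₂ * δ) :
    ((weightedTriangle t r₁ r₂).card + (weightedTriangle s r₁ r₂).card : ℝ) * d ≤
      (1 - δ) * (2 * ((r₁ + 1) * (r₂ + 1))) := by
  have hr₂' : (1 : ℝ) ≤ r₂ := Nat.one_le_cast.2 hr₂
  have hr' : (r₂ : ℝ) ≤ r₁ := Nat.cast_le.2 hr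
  have hlower : 2 * d * (r₁ + r₂ + 1) ≤ 2 * δ * (r₁ * r₂) := by
    calc 2 * d * (r₁ + r₂ + 1 : ℝ) ≤ 2 * d * (r₁ + r₁ + r₁) := by
          gcongr
          linarith
      _ = 2 * r₁ * (3 * d) := by ring
      _ ≤ 2 * r₁ * (r₂ * δ) := by gcongr
      _ = 2 * δ * (r₁ * r₂) := by ring
  have hδ₁ : δ ≤ 1 / 2 := by
    have : 0 ≤ d * (t ^ 2 + s ^ 2) / 2 := by positivity
    linarith
  calc ((weightedTriangle t r₁ r₂).card + (weightedTriangle s r₁ r₂).card : ℝ) * d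
      ≤ ((t ^ 2 / 2 * r₁ * r₂ + r₁ + r₂ + 1) + (s ^ 2 / 2 * r₁ * r₂ + r₁ + r₂ + 1)) * d := by
        gcongr
        exacts [card_weightedTriangle_le ht₀ ht₁ hr₂, card_weightedTriangle_le hs₀ hs₁ hr₂]
    _ = (d * (t ^ 2 + s ^ 2) / 2) * (r₁ * r₂) + 2 * d * (r₁ + r₂ + 1) := by ring
    _ ≤ (1 - δ) * (2 * ((r₁ + 1) * (r₂ + 1))) := by
        rw [hts]
        nlinarith

/-- Auxiliary polynomials of the method of Thue and Siegel for the real number `c`: the index of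
`A + c * B` at `(c, c)` is at least `t` and that of `B` at least `s`, in the usual normalization.
The difference `t - s` is what a third approximation to `c`, put in the place of `c`, has to make
up for. -/
structure IsAuxiliaryPair (c t s K : ℝ) (r₁ r₂ : ℕ) (A B : ℤ[X][X]) : Prop where
  ne_zero : A ≠ 0 ∨ B ≠ 0
  bidegree_left : HasBidegreeLE A r₁ r₂
  bidegree_right : HasBidegreeLE B r₁ r₂
  norm_left : bivariateL1Norm A ≤ Real.exp (K * r₁)
  norm_right : bivariateL1Norm B ≤ Real.exp (K * r₁)
  index_add : IndexGE c c r₁ r₂ (t * r₁ * r₂) (toReal A + C (C c) * toReal B)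
  index_right : IndexGE c c r₁ r₂ (s * r₁ * r₂) (toReal B)

/-- The two families of conditions number about `(t² + s²) / 2 * d * r₁ * r₂`, against
`2 * r₁ * r₂` unknowns. -/
theorem exists_auxiliary_polynomials (hf : f.Monic) (hd : 0 < f.natDegree) (hc : aeval c f = 0)
    {t s : ℝ} (ht₀ : 0 < t) (ht₁ : t ≤ 1) (hs₀ : 0 ≤ s) (hs₁ : s ≤ 1)
    (hts : f.natDegree * (t ^ 2 + s ^ 2) < 4) :
    ∃ K R : ℝ, 0 ≤ K ∧ ∀ r₁ r₂ : ℕ, 0 < r₂ → R ≤ r₂ → r₂ ≤ r₁ →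
      ∃ A B : ℤ[X][X], IsAuxiliaryPair c t s K r₁ r₂ A B := by
  set d := f.natDegree
  set M := 1 + l1Seminorm (normRingSeminorm ℤ) f
  have hM : 1 ≤ M := le_add_of_nonneg_right (apply_nonneg _ _)
  obtain ⟨δ, hδ, hdδ⟩ : ∃ δ : ℝ, 0 < δ ∧ d * (t ^ 2 + s ^ 2) / 2 = 2 - 4 * δ :=
    ⟨(4 - d * (t ^ 2 + s ^ 2)) / 8, by linarith, by ring⟩
  refine ⟨2 + (5 + 3 * Real.log M) / δ, 3 * d / δ, ?_, fun r₁ r₂ hr₂ hR hr => ?_⟩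
  · have := Real.log_nonneg hM
    positivity
  have hr₁ : 0 < r₁ := hr₂.trans_le hr
  have hcard := card_weightedTriangle_add_mul_le ht₀.le ht₁ hs₀ hs₁ hδ hdδ hr₂ hr
    ((div_le_iff₀ hδ).1 hR)
  have hne : (weightedTriangle t r₁ r₂).Nonempty :=
    ⟨(0, 0), mem_weightedTriangle hr₁ hr₂ (by
      rw [Nat.cast_zero, zero_mul, zero_mul, add_zero]
      positivity)⟩
  obtain ⟨A, B, hAB, hA, hB, hnorm, hAt, hBs⟩ :=
    exists_auxiliary_polynomials_of_card_le hf hd hc hδ hne hcard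
  have hnorm' := max_le_iff.1 (hnorm.trans (mul_rpow_le_exp hM hδ hr₁ hr))
  exact ⟨A, B, hAB, hA, hB, hnorm'.1, hnorm'.2,
    fun i j hij => hAt (j, i) (mem_weightedTriangle hr₁ hr₂ hij),
    fun i j hij => hBs (j, i) (mem_weightedTriangle hr₁ hr₂ hij)⟩

end AuxiliaryPolynomials

/-! ### Rational approximations to an algebraic integer -/

section BidegreeClosure

variable {R S : Type*} [CommRing R] [CommRing S] {P Q : R[X][X]} {d₁ d₂ : ℕ}

lemma HasBidegreeLE.add (hP : HasBidegreeLE P d₁ d₂) (hQ : HasBidegreeLE Q d₁ d₂) :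
    HasBidegreeLE (P + Q) d₁ d₂ where
  inner b := by
    rw [coeff_add]
    exact natDegree_add_le_of_degree_le (hP.inner b) (hQ.inner b)
  outer := natDegree_add_le_of_degree_le hP.outer hQ.outer

lemma HasBidegreeLE.smul {M : Type*} [SMulZeroClass M R] (hP : HasBidegreeLE P d₁ d₂) (s : M) :
    HasBidegreeLE (s • P) d₁ d₂ where
  inner b := by
    rw [coeff_smul]
    exact (natDegree_smul_le _ _).trans (hP.inner b)
  outer := (natDegree_smul_le _ _).trans hP.outer

lemma HasBidegreeLE.map (hP : HasBidegreeLE P d₁ d₂) (f : R →+* S) :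
    HasBidegreeLE (mapRingHom (mapRingHom f) P) d₁ d₂ where
  inner b := by
    rw [coe_mapRingHom, coeff_map]
    exact natDegree_map_le.trans (hP.inner b)
  outer := natDegree_map_le.trans hP.outer

lemma HasBidegreeLE.bivariateTaylor (hP : HasBidegreeLE P d₁ d₂) (y z : R) :
    HasBidegreeLE (bivariateTaylor y z P) d₁ d₂ where
  inner b := by
    refine natDegree_le_iff_coeff_eq_zero.2 fun i hi => ?_
    rw [hP.coeff_coeff_bivariateTaylor]
    refine Finset.sum_eq_zero fun b _ => Finset.sum_eq_zero fun a ha => ?_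
    rw [Nat.choose_eq_zero_of_lt ((Finset.mem_range_succ_iff.1 ha).trans_lt hi), Nat.cast_zero,
      mul_zero, zero_mul, zero_mul, zero_mul]
  outer := by
    rw [bivariateTaylor_apply, natDegree_taylor]
    exact natDegree_map_le.trans hP.outer

end BidegreeClosure

section TaylorUpperBound

variable {P : ℝ[X][X]} {d₁ d₂ r₁ r₂ : ℕ} {c ε κ x₁ x₂ H T : ℝ}

lemma succ_mul_two_pow_le_exp (d : ℕ) : (d + 1) * 2 ^ d ≤ Real.exp (2 * d) := by
  have htwo : (2 : ℝ) ≤ Real.exp 1 := by linarith [Real.add_one_le_exp (1 : ℝ)]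
  calc ((d : ℝ) + 1) * 2 ^ d ≤ Real.exp d * Real.exp 1 ^ d := by
        gcongr
        exact Real.add_one_le_exp _
    _ = Real.exp (2 * d) := by
        rw [← Real.exp_nat_mul, ← Real.exp_add]
        ring_nf

lemma HasBidegreeLE.abs_coeff_coeff_bivariateTaylor_le (hP : HasBidegreeLE P d₁ d₂)
    {y z G : ℝ} {i j : ℕ}
    (hG : ∀ a ≤ d₁, ∀ b ≤ d₂, |(P.coeff b).coeff a * y ^ (a - i) * z ^ (b - j)| ≤ G) :
    |((OrdinaryPairs.bivariateTaylor y z P).coeff j).coeff i| ≤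
      Real.exp (2 * (d₁ + d₂)) * G := by
  have hchoose : ∀ {n d : ℕ} (k : ℕ), n ≤ d → (n.choose k : ℝ) ≤ 2 ^ d := fun k hnd => by
    exact_mod_cast (Nat.choose_le_two_pow _ k).trans (Nat.pow_le_pow_right two_pos hnd)
  have hterm : ∀ b ∈ Finset.range (d₂ + 1), ∀ a ∈ Finset.range (d₁ + 1),
      |(P.coeff b).coeff a * a.choose i * b.choose j * y ^ (a - i) * z ^ (b - j)| ≤
        2 ^ d₁ * 2 ^ d₂ * G := fun b hb a ha => by
    have ha' := Finset.mem_range_succ_iff.1 ha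
    have hb' := Finset.mem_range_succ_iff.1 hb
    calc |(P.coeff b).coeff a * a.choose i * b.choose j * y ^ (a - i) * z ^ (b - j)|
        = a.choose i * b.choose j * |(P.coeff b).coeff a * y ^ (a - i) * z ^ (b - j)| := by
          simp only [abs_mul, Nat.abs_cast]
          ring
      _ ≤ 2 ^ d₁ * 2 ^ d₂ * G := by
          gcongr
          exacts [hchoose i ha', hchoose j hb', hG a ha' b hb']
  have hG₀ : 0 ≤ G := (abs_nonneg _).trans (hG 0 (Nat.zero_le _) 0 (Nat.zero_le _))
  rw [hP.coeff_coeff_bivariateTaylor]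
  calc |∑ b ∈ Finset.range (d₂ + 1), ∑ a ∈ Finset.range (d₁ + 1),
        (P.coeff b).coeff a * a.choose i * b.choose j * y ^ (a - i) * z ^ (b - j)|
      ≤ ∑ b ∈ Finset.range (d₂ + 1), ∑ a ∈ Finset.range (d₁ + 1), 2 ^ d₁ * 2 ^ d₂ * G :=
        (Finset.abs_sum_le_sum_abs _ _).trans <| Finset.sum_le_sum fun b hb =>
          (Finset.abs_sum_le_sum_abs _ _).trans <| Finset.sum_le_sum (hterm b hb)
    _ = ((d₁ + 1) * 2 ^ d₁) * ((d₂ + 1) * 2 ^ d₂) * G := by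
        simp only [Finset.sum_const, Finset.card_range, nsmul_eq_mul, Nat.cast_add, Nat.cast_one]
        ring
    _ ≤ Real.exp (2 * d₁) * Real.exp (2 * d₂) * G := by
        gcongr
        exacts [succ_mul_two_pow_le_exp d₁, succ_mul_two_pow_le_exp d₂]
    _ = Real.exp (2 * (d₁ + d₂)) * G := by rw [← Real.exp_add, ← mul_add]

lemma abs_pow_mul_pow_le_exp (hr₂ : 0 < r₂) (hκ : 0 ≤ κ) (hx₁ : 0 ≤ x₁)
    (hx : r₁ * x₁ ≤ r₂ * x₂) {u v : ℝ} (hu : |u| ≤ Real.exp (-(κ * x₁)))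
    (hv : |v| ≤ Real.exp (-(κ * x₂))) {a b i j : ℕ} (hab : T * r₁ * r₂ ≤ a * r₂ + b * r₁)
    (hij : (i * r₂ + j * r₁ : ℝ) < ε * r₁ * r₂) :
    |u ^ (a - i) * v ^ (b - j)| ≤ Real.exp (-(κ * (T - ε) * (r₁ * x₁))) := by
  have hai : (a : ℝ) - i ≤ (a - i : ℕ) := by
    rw [sub_le_iff_le_add]
    exact_mod_cast le_tsub_add
  have hbj : (b : ℝ) - j ≤ (b - j : ℕ) := by
    rw [sub_le_iff_le_add]
    exact_mod_cast le_tsub_add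
  have hweight : (T - ε) * r₁ * r₂ ≤ (a - i : ℕ) * r₂ + (b - j : ℕ) * r₁ := by
    linarith [mul_le_mul_of_nonneg_right hai (Nat.cast_nonneg (α := ℝ) r₂),
      mul_le_mul_of_nonneg_right hbj (Nat.cast_nonneg (α := ℝ) r₁)]
  have hexponent : (T - ε) * (r₁ * x₁) ≤ x₁ * (a - i : ℕ) + x₂ * (b - j : ℕ) := by
    refine le_of_mul_le_mul_right ?_ (Nat.cast_pos (α := ℝ).2 hr₂)
    linarith [mul_le_mul_of_nonneg_left hweight hx₁,
      mul_le_mul_of_nonneg_right hx (Nat.cast_nonneg (α := ℝ) (b - j))]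
  calc |u ^ (a - i) * v ^ (b - j)|
      ≤ Real.exp (-(κ * x₁)) ^ (a - i) * Real.exp (-(κ * x₂)) ^ (b - j) := by
        rw [abs_mul, abs_pow, abs_pow]
        gcongr
    _ = Real.exp (-(κ * (x₁ * (a - i : ℕ) + x₂ * (b - j : ℕ)))) := by
        rw [← Real.exp_nat_mul, ← Real.exp_nat_mul, ← Real.exp_add]
        ring_nf
    _ ≤ Real.exp (-(κ * (T - ε) * (r₁ * x₁))) := by
        rw [mul_assoc κ]
        gcongr

lemma abs_pow_mul_pow_le_exp_log_max (hr : r₂ ≤ r₁) {a b : ℕ} (ha : a ≤ r₁) (hb : b ≤ r₂) :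
    |c ^ a * c ^ b| ≤ Real.exp (2 * Real.log (max 1 |c|) * r₁) := by
  have hone : 1 ≤ max 1 |c| := le_max_left _ _
  calc |c ^ a * c ^ b| = |c| ^ (a + b) := by rw [← pow_add, abs_pow]
    _ ≤ max 1 |c| ^ (a + b) := by
        gcongr
        exact le_max_right _ _
    _ ≤ max 1 |c| ^ (2 * r₁) := pow_le_pow_right₀ hone (by omega)
    _ = Real.exp (2 * Real.log (max 1 |c|) * r₁) := by
        rw [← Real.exp_log (zero_lt_one.trans_le hone), ← Real.exp_nat_mul, Real.log_exp]
        push_cast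
        ring_nf

lemma IndexGE.abs_coeff_coeff_bivariateTaylor_le (hT : IndexGE c c r₁ r₂ (T * r₁ * r₂) P)
    (hP : HasBidegreeLE P r₁ r₂) (hH : ∀ a b, |(P.coeff b).coeff a| ≤ H)
    (hr₂ : 0 < r₂) (hr : r₂ ≤ r₁) (hκ : 0 ≤ κ) (hx₁ : 0 ≤ x₁) (hx : r₁ * x₁ ≤ r₂ * x₂) {y z : ℝ}
    (hy : |y - c| ≤ Real.exp (-(κ * x₁))) (hz : |z - c| ≤ Real.exp (-(κ * x₂))) {i j : ℕ}
    (hij : (i * r₂ + j * r₁ : ℝ) < ε * r₁ * r₂) :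
    |((bivariateTaylor y z P).coeff j).coeff i| ≤
      H * Real.exp ((8 + 2 * Real.log (max 1 |c|)) * r₁) *
        Real.exp (-(κ * (T - ε) * (r₁ * x₁))) := by
  have hcoeff : ∀ a b, |((bivariateTaylor c c P).coeff b).coeff a| ≤
      Real.exp (2 * (r₁ + r₂)) * (H * Real.exp (2 * Real.log (max 1 |c|) * r₁)) := fun a b =>
    hP.abs_coeff_coeff_bivariateTaylor_le fun a' ha b' hb => by
      rw [mul_assoc, abs_mul]
      exact mul_le_mul (hH a' b') (abs_pow_mul_pow_le_exp_log_max hr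
        ((Nat.sub_le _ _).trans ha) ((Nat.sub_le _ _).trans hb)) (abs_nonneg _)
        ((abs_nonneg _).trans (hH 0 0))
  have hrecenter : bivariateTaylor y z P =
      bivariateTaylor (y - c) (z - c) (bivariateTaylor c c P) := by
    rw [bivariateTaylor_bivariateTaylor, sub_add_cancel, sub_add_cancel]
  have hr' : (r₂ : ℝ) ≤ r₁ := Nat.cast_le.2 hr
  have hH₀ : 0 ≤ H := (abs_nonneg _).trans (hH 0 0)
  rw [hrecenter]
  refine ((hP.bivariateTaylor c c).abs_coeff_coeff_bivariateTaylor_le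
    (G := Real.exp (2 * (r₁ + r₂)) * (H * Real.exp (2 * Real.log (max 1 |c|) * r₁)) *
      Real.exp (-(κ * (T - ε) * (r₁ * x₁)))) fun a _ b _ => ?_).trans ?_
  · by_cases hab : (a * r₂ + b * r₁ : ℝ) < T * r₁ * r₂
    · rw [hT a b hab, zero_mul, zero_mul, abs_zero]
      positivity
    · rw [mul_assoc (coeff (coeff _ b) a), abs_mul]
      exact mul_le_mul (hcoeff a b)
        (abs_pow_mul_pow_le_exp hr₂ hκ hx₁ hx hy hz (not_lt.1 hab) hij) (abs_nonneg _)
        (by positivity)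
  · calc Real.exp (2 * (r₁ + r₂)) * (Real.exp (2 * (r₁ + r₂)) *
          (H * Real.exp (2 * Real.log (max 1 |c|) * r₁)) *
          Real.exp (-(κ * (T - ε) * (r₁ * x₁))))
        = H * Real.exp (2 * (r₁ + r₂) + 2 * (r₁ + r₂) + 2 * Real.log (max 1 |c|) * r₁) *
          Real.exp (-(κ * (T - ε) * (r₁ * x₁))) := by
          rw [Real.exp_add, Real.exp_add]
          ring
      _ ≤ H * Real.exp ((8 + 2 * Real.log (max 1 |c|)) * r₁) *
          Real.exp (-(κ * (T - ε) * (r₁ * x₁))) := by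
          gcongr
          linarith

end TaylorUpperBound

section TaylorLowerBound

variable {E : ℤ[X][X]} {r₁ r₂ : ℕ} {y z : ℚ}

lemma exists_int_den_pow_mul_pow_eq (y : ℚ) {r a : ℕ} (ha : a ≤ r) :
    ∃ n : ℤ, (y.den : ℚ) ^ r * y ^ a = n := by
  refine ⟨y.den ^ (r - a) * y.num ^ a, ?_⟩
  push_cast
  rw [← Rat.mul_den_eq_num y, mul_pow, mul_left_comm, ← pow_add, Nat.sub_add_cancel ha, mul_comm]

lemma HasBidegreeLE.den_pow_mul_coeff_coeff_bivariateTaylor_mem_range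
    (hE : HasBidegreeLE E r₁ r₂) (y z : ℚ) (i j : ℕ) :
    (y.den : ℚ) ^ r₁ * z.den ^ r₂ *
      ((OrdinaryPairs.bivariateTaylor y z (toRat E)).coeff j).coeff i ∈
        (Int.castRingHom ℚ).range := by
  rw [(hE.map (Int.castRingHom ℚ)).coeff_coeff_bivariateTaylor]
  simp only [Finset.mul_sum]
  refine sum_mem fun b hb => sum_mem fun a ha => ?_
  obtain ⟨m, hm⟩ := exists_int_den_pow_mul_pow_eq y
    ((Nat.sub_le a i).trans (Finset.mem_range_succ_iff.1 ha))
  obtain ⟨n, hn⟩ := exists_int_den_pow_mul_pow_eq z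
    ((Nat.sub_le b j).trans (Finset.mem_range_succ_iff.1 hb))
  refine ⟨(E.coeff b).coeff a * a.choose i * b.choose j * m * n, ?_⟩
  rw [coe_mapRingHom, coeff_map, coe_mapRingHom, coeff_map]
  simp only [eq_intCast, Int.cast_mul, Int.cast_natCast, ← hm, ← hn]
  ring

lemma bivariateTaylor_toReal (y z : ℚ) (E : ℤ[X][X]) :
    bivariateTaylor (y : ℝ) (z : ℝ) (toReal E) =
      (bivariateTaylor y z (toRat E)).map (mapRingHom (Rat.castHom ℝ)) := by
  rw [← bivariateTaylor_map, Rat.coe_castHom, coe_mapRingHom, coe_mapRingHom, Polynomial.map_map,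
    mapRingHom_comp]
  rfl

lemma HasBidegreeLE.one_le_den_pow_mul_abs_coeff_coeff_bivariateTaylor
    (hE : HasBidegreeLE E r₁ r₂) {i j : ℕ}
    (h : ((OrdinaryPairs.bivariateTaylor y z (toRat E)).coeff j).coeff i ≠ 0) :
    1 ≤ (y.den : ℝ) ^ r₁ * (z.den : ℝ) ^ r₂ *
      |((OrdinaryPairs.bivariateTaylor (y : ℝ) z (toReal E)).coeff j).coeff i| := by
  obtain ⟨n, hn⟩ := hE.den_pow_mul_coeff_coeff_bivariateTaylor_mem_range y z i j
  rw [eq_intCast, eq_comm] at hn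
  have hn₀ : n ≠ 0 := by
    rintro rfl
    rw [Int.cast_zero] at hn
    exact mul_ne_zero (mul_ne_zero (pow_ne_zero _ (Nat.cast_ne_zero.2 y.den_nz))
      (pow_ne_zero _ (Nat.cast_ne_zero.2 z.den_nz))) h hn
  have hcast : (y.den : ℝ) ^ r₁ * (z.den : ℝ) ^ r₂ *
      ((OrdinaryPairs.bivariateTaylor (y : ℝ) z (toReal E)).coeff j).coeff i = n := by
    rw [bivariateTaylor_toReal, coeff_map, coe_mapRingHom, coeff_map, Rat.coe_castHom]
    exact_mod_cast congrArg (Rat.cast (K := ℝ)) hn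
  calc (1 : ℝ) ≤ |(n : ℝ)| := by exact_mod_cast Int.one_le_abs hn₀
    _ = _ := by
      rw [← hcast, abs_mul, abs_mul, abs_pow, abs_pow, Nat.abs_cast, Nat.abs_cast]

end TaylorLowerBound

section ThreeApproximations

variable {A B : ℤ[X][X]} {c t s K κ ε x₁ x₂ : ℝ} {r₁ r₂ : ℕ} {y z w : ℚ}

lemma toReal_den_smul_add_num_smul (c : ℝ) (w : ℚ) (A B : ℤ[X][X]) :
    toReal ((w.den : ℤ) • A + w.num • B) =
      C (C (w.den : ℝ)) *
        ((toReal A + C (C c) * toReal B) + C (C ((w : ℝ) - c)) * toReal B) := by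
  have hnum : (w.num : ℝ) = w.den * w := by exact_mod_cast (Rat.den_mul_eq_num w).symm
  rw [map_add, map_zsmul, map_zsmul, zsmul_eq_mul, zsmul_eq_mul]
  have hden : ((w.den : ℤ) : ℝ[X][X]) = C (C (w.den : ℝ)) := by
    rw [Int.cast_natCast, map_natCast, map_natCast]
  have hnum' : (w.num : ℝ[X][X]) = C (C (w.den : ℝ)) * C (C (w : ℝ)) := by
    rw [← C_mul, ← C_mul, ← hnum, map_intCast, map_intCast]
  rw [hden, hnum', C_sub, C_sub]
  ring

lemma abs_coeff_coeff_toReal_le (A : ℤ[X][X]) (a b : ℕ) :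
    |((toReal A).coeff b).coeff a| ≤ bivariateL1Norm A := by
  rw [coe_mapRingHom, coeff_map, coe_mapRingHom, coeff_map, eq_intCast, ← Int.norm_eq_abs]
  exact norm_coeff_coeff_le_bivariateL1Norm A a b

lemma coeff_coeff_bivariateTaylor_C_C_mul {R : Type*} [CommRing R] (y z r : R) (P : R[X][X])
    (i j : ℕ) :
    ((bivariateTaylor y z (C (C r) * P)).coeff j).coeff i =
      r * ((bivariateTaylor y z P).coeff j).coeff i := by
  rw [map_mul, bivariateTaylor_C, taylor_C, coeff_C_mul, coeff_C_mul]

lemma IsAuxiliaryPair.abs_coeff_coeff_bivariateTaylor_le (h : IsAuxiliaryPair c t s K r₁ r₂ A B)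
    (hr₂ : 0 < r₂) (hr : r₂ ≤ r₁) (hκ : 0 ≤ κ) (hx₁ : 0 ≤ x₁) (hx : r₁ * x₁ ≤ r₂ * x₂)
    {y z : ℝ} (hy : |y - c| ≤ Real.exp (-(κ * x₁))) (hz : |z - c| ≤ Real.exp (-(κ * x₂)))
    (hw : |(w : ℝ) - c| ≤ Real.exp (-(κ * ((t - s) * (r₁ * x₁))))) {i j : ℕ}
    (hij : (i * r₂ + j * r₁ : ℝ) < ε * r₁ * r₂) :
    |((bivariateTaylor y z (toReal ((w.den : ℤ) • A + w.num • B))).coeff j).coeff i| ≤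
      w.den * ((2 + |c|) * (Real.exp (K * r₁) *
        Real.exp ((8 + 2 * Real.log (max 1 |c|)) * r₁) *
        Real.exp (-(κ * (t - ε) * (r₁ * x₁))))) := by
  have hA : ∀ a b, |((toReal A).coeff b).coeff a| ≤ Real.exp (K * r₁) := fun a b =>
    (abs_coeff_coeff_toReal_le A a b).trans h.norm_left
  have hB : ∀ a b, |((toReal B).coeff b).coeff a| ≤ Real.exp (K * r₁) := fun a b =>
    (abs_coeff_coeff_toReal_le B a b).trans h.norm_right
  have hdeg : HasBidegreeLE (toReal A + C (C c) * toReal B) r₁ r₂ := by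
    rw [show C (C c) * toReal B = c • toReal B from (Algebra.smul_def c _).symm]
    exact (h.bidegree_left.map _).add ((h.bidegree_right.map _).smul c)
  have hcoeff : ∀ a b, |((toReal A + C (C c) * toReal B).coeff b).coeff a| ≤
      (1 + |c|) * Real.exp (K * r₁) := fun a b => by
    rw [coeff_add, coeff_add, coeff_C_mul, coeff_C_mul, one_add_mul]
    refine (abs_add_le _ _).trans (add_le_add (hA a b) ?_)
    rw [abs_mul]
    gcongr
    exact hB a b
  have hsum := h.index_add.abs_coeff_coeff_bivariateTaylor_le hdeg hcoeff hr₂ hr hκ hx₁ hx hy hz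
    hij
  have hright := h.index_right.abs_coeff_coeff_bivariateTaylor_le (h.bidegree_right.map _) hB hr₂
    hr hκ hx₁ hx hy hz hij
  set M := Real.exp (K * r₁) * Real.exp ((8 + 2 * Real.log (max 1 |c|)) * r₁) with hM
  have hright' : |(w : ℝ) - c| * |((bivariateTaylor y z (toReal B)).coeff j).coeff i| ≤
      M * Real.exp (-(κ * (t - ε) * (r₁ * x₁))) := by
    refine (mul_le_mul hw hright (abs_nonneg _) (Real.exp_pos _).le).trans_eq ?_
    rw [mul_left_comm, ← Real.exp_add]
    ring_nf
  rw [toReal_den_smul_add_num_smul c, coeff_coeff_bivariateTaylor_C_C_mul, map_add, coeff_add,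
    coeff_add, coeff_coeff_bivariateTaylor_C_C_mul, abs_mul, Nat.abs_cast]
  gcongr
  refine (abs_add_le _ _).trans ((add_le_add hsum ((abs_mul _ _).trans_le hright')).trans_eq ?_)
  rw [hM]
  ring

/-- The comparison of the lower and the upper bound for a Taylor coefficient at `(y, z)` of the
polynomial `w.den • A + w.num • B`. -/
theorem IsAuxiliaryPair.mul_log_den_le (h : IsAuxiliaryPair c t s K r₁ r₂ A B)
    (hr₂ : 0 < r₂) (hr : r₂ ≤ r₁) (hκ : 0 ≤ κ) (hx : r₁ * Real.log y.den ≤ r₂ * Real.log z.den)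
    (hw : (t - s) * (r₁ * Real.log y.den) ≤ Real.log w.den)
    (hyc : |(y : ℝ) - c| ≤ Real.exp (-(κ * Real.log y.den)))
    (hzc : |(z : ℝ) - c| ≤ Real.exp (-(κ * Real.log z.den)))
    (hwc : |(w : ℝ) - c| ≤ Real.exp (-(κ * Real.log w.den)))
    (hindex : ¬ IndexGE y z r₁ r₂ (ε * r₁ * r₂) (toRat ((w.den : ℤ) • A + w.num • B))) :
    κ * (t - ε) * (r₁ * Real.log y.den) ≤ r₁ * Real.log y.den + r₂ * Real.log z.den +
      Real.log w.den + (9 + 2 * Real.log (max 1 |c|) + |c| + K) * r₁ := by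
  simp only [IndexGE, not_forall] at hindex
  obtain ⟨i, j, hij, hne⟩ := hindex
  have hlower := ((h.bidegree_left.smul (w.den : ℤ)).add
    (h.bidegree_right.smul w.num)).one_le_den_pow_mul_abs_coeff_coeff_bivariateTaylor hne
  have hupper := h.abs_coeff_coeff_bivariateTaylor_le hr₂ hr hκ (Real.log_natCast_nonneg _) hx
    hyc hzc (hwc.trans (by gcongr)) hij
  have hden : ∀ (v : ℚ) (r : ℕ), (v.den : ℝ) ^ r = Real.exp (r * Real.log v.den) := fun v r => by
    rw [Real.exp_nat_mul, Real.exp_log (Nat.cast_pos.2 v.den_pos)]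
  have hc : 2 + |c| ≤ Real.exp ((1 + |c|) * r₁) := by
    have hr₁ : (1 : ℝ) ≤ r₁ := Nat.one_le_cast.2 (hr₂.trans_le hr)
    have := Real.add_one_le_exp ((1 + |c|) * r₁)
    linarith [le_mul_of_one_le_right (show 0 ≤ 1 + |c| by positivity) hr₁]
  have hbound := hlower.trans (mul_le_mul_of_nonneg_left (hupper.trans
    (mul_le_mul_of_nonneg_left (mul_le_mul_of_nonneg_right hc (by positivity))
      (Nat.cast_nonneg _))) (by positivity))
  rw [hden y, hden z, ← pow_one (w.den : ℝ), hden w] at hbound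
  simp only [← Real.exp_add, Real.one_le_exp_iff, Nat.cast_one] at hbound
  linarith

end ThreeApproximations

section Exponents

/-- `r₂` is the integer part of `x₃ / (ω * x₂)`, and `r₁` that of `r₂ * x₂ / x₁`. -/
lemma exists_weights {ω M R x₁ x₂ x₃ : ℝ} (hω : 0 < ω) (hx₁ : 0 < x₁) (hx₂ : 0 < x₂)
    (hx₃ : 0 ≤ x₃) (hM : (M + 1) * x₁ ≤ x₂) (hR : ω * x₂ * (R + 1) ≤ x₃) (hR₁ : 1 ≤ R) :
    ∃ r₁ r₂ : ℕ, R ≤ r₂ ∧ M * r₂ ≤ r₁ ∧ r₁ * x₁ ≤ r₂ * x₂ ∧ r₂ * x₂ ≤ r₁ * x₁ + x₁ ∧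
      ω * (r₂ * x₂) ≤ x₃ ∧ x₃ ≤ ω * (r₂ * x₂) + ω * x₂ := by
  have hωx : 0 < ω * x₂ := mul_pos hω hx₂
  obtain ⟨r₂, hle₂, hlt₂⟩ : ∃ r₂ : ℕ, (r₂ : ℝ) * (ω * x₂) ≤ x₃ ∧ x₃ < (r₂ + 1) * (ω * x₂) :=
    ⟨⌊x₃ / (ω * x₂)⌋₊, (le_div_iff₀ hωx).1 (Nat.floor_le (by positivity)),
      (div_lt_iff₀ hωx).1 (Nat.lt_floor_add_one _)⟩
  obtain ⟨r₁, hle₁, hlt₁⟩ : ∃ r₁ : ℕ, (r₁ : ℝ) * x₁ ≤ r₂ * x₂ ∧ r₂ * x₂ < (r₁ + 1) * x₁ :=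
    ⟨⌊r₂ * x₂ / x₁⌋₊, (le_div_iff₀ hx₁).1 (Nat.floor_le (by positivity)),
      (div_lt_iff₀ hx₁).1 (Nat.lt_floor_add_one _)⟩
  have hR₂ : R ≤ r₂ := by
    have : R + 1 < r₂ + 1 := lt_of_mul_lt_mul_left (by linarith) hωx.le
    linarith
  refine ⟨r₁, r₂, hR₂, ?_, hle₁, by linarith, by linarith, by linarith⟩
  have : r₂ * (M + 1) < r₁ + 1 := lt_of_mul_lt_mul_right
    (by linarith [mul_le_mul_of_nonneg_left hM (Nat.cast_nonneg (α := ℝ) r₂)]) hx₁.le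
  linarith

/-- Up to errors that are small against `Λ = r₁ * x₁`, the right-hand side of the hypothesis
`hmain` is `(2 + ω) * Λ`. -/
lemma false_of_le_of_lt {κ t ε ω γ L r₁ r₂ x₁ x₂ x₃ : ℝ} (hγ : 0 < γ) (hγκ : γ = κ * t - 2 - ω)
    (hε : κ * ε ≤ γ / 4) (hω₀ : 0 ≤ ω) (hω₁ : ω ≤ 1) (hr₁ : 0 < r₁) (hx₁ : 0 < x₁)
    (hx₁₂ : x₁ ≤ x₂) (hL : 8 * L / γ ≤ x₁) (hr₂ : 6 / γ + 1 < r₂)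
    (hupper : r₂ * x₂ ≤ r₁ * x₁ + x₁) (hx₃ : x₃ ≤ ω * (r₂ * x₂) + ω * x₂)
    (hmain : κ * (t - ε) * (r₁ * x₁) ≤ r₁ * x₁ + r₂ * x₂ + x₃ + L * r₁) : False := by
  set Λ := r₁ * x₁ with hΛ
  have hΛ₀ : 0 < Λ := mul_pos hr₁ hx₁
  have hx₂ : 0 < x₂ := hx₁.trans_le hx₁₂
  have herror_height : L * r₁ ≤ γ / 8 * Λ := by
    rw [div_le_iff₀ hγ] at hL
    rw [hΛ]
    linarith [mul_le_mul_of_nonneg_right hL hr₁.le]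
  have herror_index : κ * ε * Λ ≤ γ / 4 * Λ := by gcongr
  have herror_floor : 3 * x₂ < γ / 2 * Λ := by
    have hlt : 6 / γ * x₂ < Λ := by
      linarith [mul_lt_mul_of_pos_right (show 6 / γ < r₂ - 1 by linarith) hx₂]
    calc 3 * x₂ = γ / 2 * (6 / γ * x₂) := by field
      _ < γ / 2 * Λ := by gcongr
  have hωx₁ : ω * x₁ ≤ x₂ := (mul_le_of_le_one_left hx₁.le hω₁).trans hx₁₂
  have hωx₂ : ω * x₂ ≤ x₂ := mul_le_of_le_one_left hx₂.le hω₁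
  have hlead : κ * (t - ε) * Λ = γ * Λ + 2 * Λ + ω * Λ - κ * ε * Λ := by
    rw [hγκ]
    ring
  linarith [mul_le_mul_of_nonneg_left hupper hω₀, mul_pos hγ hΛ₀]

end Exponents

section Approximation

variable {f : ℤ[X]} {c t s κ : ℝ}

lemma finite_setOf_abs_sub_le_one_den_le (c : ℝ) (M : ℕ) :
    {y : ℚ | |(y : ℝ) - c| ≤ 1 ∧ y.den ≤ M}.Finite := by
  obtain ⟨L, hL⟩ := exists_nat_ge (M * (|c| + 1))
  refine (((Set.finite_Icc (-(L : ℤ)) L).prod (Set.finite_Iic M)).image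
    fun p : ℤ × ℕ => (p.1 : ℚ) / p.2).subset ?_
  rintro y ⟨hyc, hden⟩
  refine ⟨(y.num, y.den), ⟨abs_le.1 ?_, hden⟩, Rat.num_div_den y⟩
  have hy : |(y : ℝ)| ≤ |c| + 1 := by linarith [abs_sub_abs_le_abs_sub (y : ℝ) c]
  have hnum : (y.num : ℝ) = y.den * y := by exact_mod_cast (Rat.den_mul_eq_num y).symm
  have habs : |(y.num : ℝ)| ≤ L := by
    rw [hnum, abs_mul, Nat.abs_cast]
    exact le_trans (by gcongr) hL
  exact_mod_cast habs

lemma exists_lt_log_den_of_infinite (hκ : 0 ≤ κ)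
    (hinf : {y : ℚ | |(y : ℝ) - c| ≤ Real.exp (-(κ * Real.log y.den))}.Infinite) (N : ℝ) :
    ∃ y : ℚ, |(y : ℝ) - c| ≤ Real.exp (-(κ * Real.log y.den)) ∧ N < Real.log y.den := by
  by_contra! hN
  obtain ⟨M, hM⟩ := exists_nat_ge (Real.exp N)
  refine hinf ((finite_setOf_abs_sub_le_one_den_le c M).subset fun y hy => ⟨?_, ?_⟩)
  · refine hy.trans (Real.exp_le_one_iff.2 (neg_nonpos.2 ?_))
    exact mul_nonneg hκ (Real.log_natCast_nonneg _)
  · have hden := ((Real.log_le_iff_le_exp (Nat.cast_pos.2 y.den_pos)).1 (hN y hy)).trans hM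
    exact_mod_cast hden

lemma false_of_three_approximations {K R γ ε : ℝ} {y z w : ℚ} (hκ : 0 ≤ κ) (hK : 0 ≤ K)
    (hauxiliary : ∀ r₁ r₂ : ℕ, 0 < r₂ → R ≤ r₂ → r₂ ≤ r₁ →
      ∃ A B : ℤ[X][X], IsAuxiliaryPair c t s K r₁ r₂ A B)
    (hst : s < t) (hst₁ : t - s ≤ 1) (hγ : 0 < γ) (hγκ : γ = κ * t - 2 - (t - s)) (hε : 0 < ε)
    (hε₁ : ε ≤ 1) (hεγ : κ * ε ≤ γ / 4) (hRε : 2 / ε ≤ R) (hRγ : 6 / γ + 1 < R)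
    (hyc : |(y : ℝ) - c| ≤ Real.exp (-(κ * Real.log y.den)))
    (hzc : |(z : ℝ) - c| ≤ Real.exp (-(κ * Real.log z.den)))
    (hwc : |(w : ℝ) - c| ≤ Real.exp (-(κ * Real.log w.den)))
    (hyε : 48 * (2 * K + 9) / (ε / 2) ^ 2 < Real.log y.den)
    (hyγ : 8 * (9 + 2 * Real.log (max 1 |c|) + |c| + K) / γ ≤ Real.log y.den)
    (hyK : K / (t - s) < Real.log y.den) (hz : (16 / ε + 1) * Real.log y.den ≤ Real.log z.den)
    (hw : (t - s) * Real.log z.den * (R + 1) ≤ Real.log w.den) : False := by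
  have hω : 0 < t - s := sub_pos.2 hst
  have hy₀ : 0 < Real.log y.den := lt_of_le_of_lt (by positivity) hyε
  have hε₁₆ : 0 < 16 / ε := by positivity
  have hyz : Real.log y.den ≤ Real.log z.den := by linarith [mul_pos hε₁₆ hy₀]
  have hRγ' : 0 < 6 / γ := by positivity
  obtain ⟨r₁, r₂, hR, hr, hlow, hupp, hw_low, hw_upp⟩ := exists_weights hω hy₀
    (hy₀.trans_le hyz) (Real.log_natCast_nonneg w.den) hz hw (by linarith)
  have hr₂ : (0 : ℝ) < r₂ := by linarith
  have hr₂₁ : 8 * (r₂ : ℝ) ≤ ε / 2 * r₁ := by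
    calc 8 * (r₂ : ℝ) = ε / 2 * (16 / ε * r₂) := by field
      _ ≤ ε / 2 * r₁ := by gcongr
  have hrr : (r₂ : ℝ) ≤ r₁ := by
    linarith [mul_le_mul_of_nonneg_right hε₁ (Nat.cast_nonneg (α := ℝ) r₁)]
  have hr₁ : (0 : ℝ) < r₁ := hr₂.trans_le hrr
  have hwy : (t - s) * (r₁ * Real.log y.den) ≤ Real.log w.den :=
    (mul_le_mul_of_nonneg_left hlow hω.le).trans hw_low
  have hKw : Real.exp (K * r₁) < w.den := by
    rw [← Real.lt_log_iff_exp_lt (Nat.cast_pos.2 w.den_pos)]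
    rw [div_lt_iff₀ hω] at hyK
    linarith [mul_lt_mul_of_pos_right hyK hr₁]
  have hεr : 2 ≤ ε * r₂ := (div_le_iff₀' hε).1 (hRε.trans hR)
  obtain ⟨A, B, h⟩ := hauxiliary r₁ r₂ (Nat.cast_pos.1 hr₂) hR (Nat.cast_le.1 hrr)
  have hindex := not_indexGE_den_smul_add_num_smul hε hε₁ hK (Nat.cast_pos.1 hr₁)
    (Nat.cast_pos.1 hr₂) hyε hr₂₁ hεr hlow h.ne_zero h.bidegree_left h.bidegree_right h.norm_left
    h.norm_right hKw
  exact false_of_le_of_lt hγ hγκ hεγ hω.le hst₁ hr₁ hy₀ hyz hyγ (hRγ.trans_le hR) hupp hw_upp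
    (h.mul_log_den_le (Nat.cast_pos.1 hr₂) (Nat.cast_le.1 hrr) hκ hlow hwy hyc hzc hwc hindex)

/-- As `s` tends to `t` the exponent `κ` becomes Dyson's `√(2 * f.natDegree)`; the third
approximation allows `s < t`, which lowers it. -/
theorem finite_setOf_abs_sub_le_exp_neg_mul_log_den (hf : f.Monic) (hd : 0 < f.natDegree)
    (hc : aeval c f = 0) (hs : 0 ≤ s) (hst : s < t) (ht : t ≤ 1)
    (hts : f.natDegree * (t ^ 2 + s ^ 2) < 4) (hκ : 2 + (t - s) < κ * t) :
    {y : ℚ | |(y : ℝ) - c| ≤ Real.exp (-(κ * Real.log y.den))}.Finite := by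
  by_contra hinf
  have ht₀ : 0 < t := hs.trans_lt hst
  have hκ₀ : 0 < κ := pos_of_mul_pos_left (by linarith) ht₀.le
  have hexists := exists_lt_log_den_of_infinite hκ₀.le hinf
  obtain ⟨K, R, hK, hauxiliary⟩ :=
    exists_auxiliary_polynomials hf hd hc ht₀ ht hs (hst.le.trans ht) hts
  obtain ⟨γ, hγ⟩ : ∃ γ, γ = κ * t - 2 - (t - s) := ⟨_, rfl⟩
  have hγ₀ : 0 < γ := by linarith
  obtain ⟨ε, hε, hε₁, hεγ⟩ : ∃ ε, 0 < ε ∧ ε ≤ 1 ∧ κ * ε ≤ γ / 4 := by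
    refine ⟨min 1 (γ / 4 / κ), lt_min one_pos (by positivity), min_le_left _ _, ?_⟩
    exact (mul_le_mul_of_nonneg_left (min_le_right _ _) hκ₀.le).trans_eq
      (mul_div_cancel₀ _ hκ₀.ne')
  obtain ⟨y, hyc, hy⟩ := hexists (max (48 * (2 * K + 9) / (ε / 2) ^ 2)
    (max (8 * (9 + 2 * Real.log (max 1 |c|) + |c| + K) / γ) (K / (t - s))))
  obtain ⟨hyε, hyγ, hyK⟩ := by simpa only [max_lt_iff] using hy
  obtain ⟨z, hzc, hz⟩ := hexists ((16 / ε + 1) * Real.log y.den)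
  obtain ⟨w, hwc, hw⟩ := hexists
    ((t - s) * Real.log z.den * (max R (max (2 / ε) (6 / γ + 2)) + 1))
  exact false_of_three_approximations hκ₀.le hK
    (fun r₁ r₂ hr₂ hR => hauxiliary r₁ r₂ hr₂ ((le_max_left _ _).trans hR)) hst (by linarith) hγ₀
    hγ hε hε₁ hεγ ((le_max_left _ _).trans (le_max_right _ _))
    (lt_of_lt_of_le (by linarith) ((le_max_right _ _).trans (le_max_right _ _)))
    hyc hzc hwc hyε hyγ.le hyK hz.le hw.le

end Approximation

/-! ### Traces of Frobenius -/

section CosinePolynomial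

lemma monic_chebyshev_S_and_natDegree_eq (k : ℕ) :
    (Chebyshev.S ℤ k).Monic ∧ (Chebyshev.S ℤ k).natDegree = k := by
  induction k using Nat.twoStepInduction with
  | zero => simp
  | one => simp [monic_X]
  | more k ih₀ ih₁ =>
    have hmonic : (X * Chebyshev.S ℤ (k + 1 : ℕ)).Monic := monic_X.mul ih₁.1
    have hdeg : (X * Chebyshev.S ℤ (k + 1 : ℕ)).natDegree = k + 2 := by
      rw [natDegree_X_mul ih₁.1.ne_zero, ih₁.2]
    have hlt : (Chebyshev.S ℤ k).natDegree < (X * Chebyshev.S ℤ (k + 1 : ℕ)).natDegree := by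
      rw [hdeg, ih₀.2]
      lia
    have hrec : Chebyshev.S ℤ (k + 2 : ℕ) =
        X * Chebyshev.S ℤ (k + 1 : ℕ) - Chebyshev.S ℤ k := by
      exact_mod_cast Chebyshev.S_add_two ℤ k
    rw [hrec]
    exact ⟨hmonic.sub_of_left (degree_lt_degree hlt),
      (natDegree_sub_eq_left_of_natDegree_lt hlt).trans hdeg⟩

lemma mul_aeval_chebyshev_S {ω : ℂ} (hω : ω ≠ 0) (k : ℕ) :
    (ω ^ 2 - 1) * ω ^ k * aeval (ω + ω⁻¹) (Chebyshev.S ℤ k) = ω ^ (2 * k + 2) - 1 := by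
  induction k using Nat.twoStepInduction with
  | zero => simp
  | one =>
    rw [Nat.cast_one, Chebyshev.S_one, aeval_X]
    field_simp
    ring
  | more k ih₀ ih₁ =>
    have hrec : Chebyshev.S ℤ (k + 2 : ℕ) =
        X * Chebyshev.S ℤ (k + 1 : ℕ) - Chebyshev.S ℤ k := by
      exact_mod_cast Chebyshev.S_add_two ℤ k
    have hmul : ω * (ω + ω⁻¹) = ω ^ 2 + 1 := by field_simp
    rw [hrec, map_sub, map_mul, aeval_X]
    linear_combination
      ω ^ (k + 1) * (ω ^ 2 - 1) * aeval (ω + ω⁻¹) (Chebyshev.S ℤ (k + 1 : ℕ)) * hmul +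
        (ω ^ 2 + 1) * ih₁ - ω ^ 2 * ih₀

lemma exists_monic_aeval_two_mul_re_eq_zero {d : ℕ} (hd : 0 < d) {ω : ℂ}
    (hω : ω ^ (2 * d + 1) = 1) :
    ∃ f : ℤ[X], f.Monic ∧ 0 < f.natDegree ∧ f.natDegree ≤ d ∧ aeval (2 * ω.re) f = 0 := by
  have hnorm : ‖ω‖ = 1 := Complex.norm_eq_one_of_pow_eq_one hω (by lia)
  have h0 : ω ≠ 0 := norm_ne_zero_iff.1 (hnorm ▸ one_ne_zero)
  by_cases h1 : ω = 1
  · refine ⟨X - C 2, monic_X_sub_C 2, ?_, ?_, ?_⟩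
    · rw [natDegree_X_sub_C]
      exact one_pos
    · rwa [natDegree_X_sub_C]
    · rw [h1, Complex.one_re, mul_one, map_sub, aeval_X, aeval_C, map_ofNat, sub_self]
  obtain ⟨k, rfl⟩ := Nat.exists_eq_add_one.2 hd
  obtain ⟨hmonic, hdeg⟩ := monic_chebyshev_S_and_natDegree_eq (k + 1)
  have hlt : (Chebyshev.S ℤ k).natDegree < (Chebyshev.S ℤ (k + 1 : ℕ)).natDegree := by
    rw [hdeg, (monic_chebyshev_S_and_natDegree_eq k).2]
    exact k.lt_succ_self
  have hdegree := (natDegree_add_eq_left_of_natDegree_lt hlt).trans hdeg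
  refine ⟨Chebyshev.S ℤ (k + 1 : ℕ) + Chebyshev.S ℤ k,
    hmonic.add_of_left (degree_lt_degree hlt), by lia, hdegree.le, ?_⟩
  have hsum : ((2 * ω.re : ℝ) : ℂ) = ω + ω⁻¹ := by
    rw [Complex.inv_eq_conj hnorm, Complex.add_conj]
  have hsq : ω ^ 2 - 1 ≠ 0 := fun hsq => h1 (by
    rw [← hω, pow_succ, pow_mul, sub_eq_zero.1 hsq, one_pow, one_mul])
  rw [← aeval_algebraMap_eq_zero_iff ℂ, Complex.coe_algebraMap, hsum]
  refine (mul_eq_zero.1 ?_).resolve_left (mul_ne_zero hsq (pow_ne_zero (k + 1) h0))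
  rw [map_add]
  linear_combination mul_aeval_chebyshev_S h0 (k + 1) + ω * mul_aeval_chebyshev_S h0 k +
    (ω + 1) * hω

end CosinePolynomial

section BoundedDenominator

-- For `d = 6` no choice with `s = 0` exists: it would need `2 / t + 1 < 13 / 4` and `6 t² < 4`.
lemma exists_approximation_parameters {d : ℕ} (hd : 6 ≤ d) : ∃ t s κ : ℝ, 0 ≤ s ∧ s < t ∧ t ≤ 1 ∧
    d * (t ^ 2 + s ^ 2) < 4 ∧ 4 * κ < 2 * d + 1 ∧ 2 + (t - s) < κ * t := by
  rcases hd.eq_or_lt with rfl | h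
  · exact ⟨37 / 50, 17 / 50, 3.245, by norm_num⟩
  have hd7 : (7 : ℝ) ≤ d := mod_cast h
  have hsqrt : 0 < √(d : ℝ) := Real.sqrt_pos.2 (by linarith)
  have hsq : √(d : ℝ) ^ 2 = d := Real.sq_sqrt (by linarith)
  have hinterval : 8 / (2 * (d : ℝ) - 3) < 2 / √(d : ℝ) := by
    rw [div_lt_div_iff₀ (by linarith) hsqrt]
    refine lt_of_pow_lt_pow_left₀ 2 (by linarith) ?_
    rw [mul_pow, hsq]
    nlinarith
  obtain ⟨t, ht1, ht2⟩ := exists_between hinterval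
  have ht0 : 0 < t := (div_pos (by norm_num) (by linarith)).trans ht1
  have hdt : d * t ^ 2 < 4 := by
    have := pow_lt_pow_left₀ ((lt_div_iff₀ hsqrt).1 ht2) (by positivity) two_ne_zero
    rw [mul_pow, hsq] at this
    linarith
  have hκ : 2 / t + 1 < (2 * d + 1) / 4 := by
    rw [div_lt_iff₀ (by linarith)] at ht1
    have : 2 / t < (2 * d - 3) / 4 := by
      rw [div_lt_iff₀ ht0]
      linarith
    linarith
  obtain ⟨κ, hκ1, hκ2⟩ := exists_between hκ
  refine ⟨t, 0, κ, le_rfl, ht0, by nlinarith, by simpa using hdt, by linarith, ?_⟩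
  have := (div_lt_iff₀ ht0).1 (lt_sub_iff_add_lt.2 hκ1)
  linarith

lemma le_exp_or_abs_le_exp_neg_mul_log {ε κ : ℝ} {Q D : ℝ} {n : ℕ} (hε : 0 < ε) (hD : 1 ≤ D)
    (hDQ : D ≤ Q) (hκ : 0 ≤ κ) (hκn : 4 * κ < n) (h : ε ^ 4 * Q ^ n ≤ 16) :
    Q ≤ Real.exp (Real.log 16 / (n - 4 * κ)) ∨ ε ≤ Real.exp (-(κ * Real.log D)) := by
  rw [or_iff_not_imp_left, not_le]
  intro hlt
  have hQ : 0 < Q := by linarith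
  have hlog : 4 * Real.log ε + n * Real.log Q ≤ Real.log 16 := by
    have := Real.log_le_log (by positivity) h
    rwa [Real.log_mul (by positivity) (by positivity), Real.log_pow, Real.log_pow] at this
  have hQlog : Real.log 16 < Real.log Q * (n - 4 * κ) := by
    rwa [← div_lt_iff₀ (by linarith), Real.lt_log_iff_exp_lt hQ]
  have hDlog : κ * Real.log D ≤ κ * Real.log Q :=
    mul_le_mul_of_nonneg_left (Real.log_le_log (by linarith) hDQ) hκ
  rw [← Real.log_le_iff_le_exp hε]
  linarith

lemma den_sq_div_sub_two_le {q : ℤ} (hq : 0 < q) (a : ℤ) : (((a : ℚ) ^ 2 / q - 2).den : ℤ) ≤ q := by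
  have hdivInt : (a : ℚ) ^ 2 / q - 2 = Rat.divInt (a ^ 2 - 2 * q) q := by
    have : (q : ℚ) ≠ 0 := mod_cast hq.ne'
    rw [Rat.divInt_eq_div]
    push_cast
    field_simp
  exact Int.le_of_dvd hq (hdivInt ▸ Rat.den_dvd _ _)

theorem bddAbove_setOf_abs_sub_pow_four_mul_pow_le {d : ℕ} (hd : 6 ≤ d) {ω : ℂ}
    (hω : ω ^ (2 * d + 1) = 1) :
    BddAbove {q : ℤ | 0 < q ∧ ∃ a : ℤ, (a : ℝ) ^ 2 / q - 2 ≠ 2 * ω.re ∧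
      |(a : ℝ) ^ 2 / q - 2 - 2 * ω.re| ^ 4 * (q : ℝ) ^ (2 * d + 1) ≤ 16} := by
  obtain ⟨f, hf, hf0, hfd, hroot⟩ := exists_monic_aeval_two_mul_re_eq_zero (by lia) hω
  obtain ⟨t, s, κ, hs, hst, ht, hts, hκd, hκt⟩ := exists_approximation_parameters hd
  have hκ : 0 ≤ κ :=
    (pos_of_mul_pos_left (lt_trans (by linarith) hκt) (hs.trans hst.le)).le
  have hfin := finite_setOf_abs_sub_le_exp_neg_mul_log_den hf hf0 hroot hs hst ht
    (lt_of_le_of_lt (by gcongr) hts) hκt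
  obtain ⟨U, hU⟩ := (hfin.image fun y : ℚ => 16 / |(y : ℝ) - 2 * ω.re| ^ 4).bddAbove
  obtain ⟨V, hV⟩ := exists_nat_ge (max U (Real.exp (Real.log 16 / ((2 * d + 1 : ℕ) - 4 * κ))))
  refine ⟨V, ?_⟩
  rintro q ⟨hq, a, hne, hle⟩
  suffices (q : ℝ) ≤ V from mod_cast this
  refine le_trans ?_ hV
  let y : ℚ := (a : ℚ) ^ 2 / q - 2
  have hy : (y : ℝ) = (a : ℝ) ^ 2 / q - 2 := by simp only [y]; push_cast; rfl
  rw [← hy] at hne hle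
  have hpos : 0 < |(y : ℝ) - 2 * ω.re| := abs_pos.2 (sub_ne_zero.2 hne)
  have hden : (y.den : ℝ) ≤ q := by
    have hdenq : (y.den : ℤ) ≤ q := den_sq_div_sub_two_le hq a
    exact_mod_cast hdenq
  rcases le_exp_or_abs_le_exp_neg_mul_log hpos (Nat.one_le_cast.2 y.den_pos) hden hκ
    (by push_cast; exact hκd) hle with hsmall | hclose
  · exact hsmall.trans (le_max_right _ _)
  · refine le_trans ?_ ((hU ⟨y, hclose, rfl⟩).trans (le_max_left _ _))
    rw [le_div_iff₀ (by positivity), mul_comm]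
    refine le_trans ?_ hle
    gcongr
    exact le_self_pow₀ (mod_cast hq) (by lia)

end BoundedDenominator

section Frobenius

variable {q a : ℤ} {α : ℂ} {n : ℕ}

lemma add_conj_and_mul_conj_of_sq_le (hqa : a ^ 2 ≤ 4 * q) (hα : α ^ 2 - a * α + q = 0) :
    α + starRingEnd ℂ α = a ∧ α * starRingEnd ℂ α = q := by
  have hdisc : (a : ℝ) ^ 2 ≤ 4 * q := mod_cast hqa
  have hre : α.re * α.re - α.im * α.im - a * α.re + q = 0 := by
    simpa [pow_two] using congrArg Complex.re hα
  have him : α.im * (2 * α.re - a) = 0 := by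
    have : α.re * α.im + α.im * α.re - a * α.im = 0 := by
      simpa [pow_two] using congrArg Complex.im hα
    linarith
  have htrace : 2 * α.re = a := by
    rcases mul_eq_zero.1 him with h0 | h0
    · rw [h0] at hre
      nlinarith [sq_nonneg (2 * α.re - a)]
    · linarith
  constructor
  · rw [Complex.add_conj, htrace, Complex.ofReal_intCast]
  · have hnorm : α.re * α.re + α.im * α.im = q := by rw [← htrace] at hre; linarith
    rw [Complex.mul_conj, Complex.normSq_apply, hnorm, Complex.ofReal_intCast]

lemma norm_eq_sqrt_of_mul_conj (hnorm : α * starRingEnd ℂ α = q) : ‖α‖ = √(q : ℝ) := by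
  have hsq : ‖α‖ ^ 2 = q := by
    rw [← Complex.normSq_eq_norm_sq]
    exact_mod_cast (Complex.mul_conj α).symm.trans hnorm
  rw [← hsq, Real.sqrt_sq (norm_nonneg α)]

lemma norm_sq_div_eq_one (hq : 0 < q) (hnorm : α * starRingEnd ℂ α = q) :
    ‖α ^ 2 / (q : ℂ)‖ = 1 := by
  have hq0 : (0 : ℝ) < q := mod_cast hq
  rw [norm_div, norm_pow, norm_eq_sqrt_of_mul_conj hnorm, Real.sq_sqrt hq0.le,
    Complex.norm_intCast, abs_of_pos hq0, div_self hq0.ne']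

lemma div_sqrt_sq (hq : 0 ≤ q) : (α / (√(q : ℝ) : ℂ)) ^ 2 = α ^ 2 / q := by
  rw [div_pow, ← Complex.ofReal_pow, Real.sq_sqrt (mod_cast hq), Complex.ofReal_intCast]

lemma hasLiouvilleBound_sq_div (hq : 0 < q) (htrace : α + starRingEnd ℂ α = a)
    (hnorm : α * starRingEnd ℂ α = q) : HasLiouvilleBound (α ^ 2 / q) q.toNat := by
  intro P J hJ h0
  have hcast : (q.toNat : ℝ) = q := mod_cast Int.toNat_of_nonneg hq.le
  rw [hcast]
  exact one_le_norm_aeval_mul_pow htrace hnorm hq hJ h0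

-- If `n = 2k`, the hypothesis reads `αⁿ + ᾱⁿ = -2 (α ᾱ)ᵏ`, that is, `(αᵏ + ᾱᵏ)² = 0`.
lemma isOfFinOrder_div_sqrt_of_even (hq : 0 < q) (hnorm : α * starRingEnd ℂ α = q)
    (hn : 0 < n) (heven : Even n)
    (h : α ^ n + starRingEnd ℂ α ^ n = -((⌊2 * √(q : ℝ) ^ n⌋ : ℤ) : ℂ)) :
    IsOfFinOrder (α / (√(q : ℝ) : ℂ)) := by
  obtain ⟨k, rfl⟩ := heven.two_dvd
  have hfloor : ⌊2 * √(q : ℝ) ^ (2 * k)⌋ = 2 * q ^ k := by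
    rw [pow_mul, Real.sq_sqrt (mod_cast hq.le),
      show 2 * (q : ℝ) ^ k = ((2 * q ^ k : ℤ) : ℝ) by push_cast; rfl, Int.floor_intCast]
  have hpow : α ^ k * starRingEnd ℂ α ^ k = (q : ℂ) ^ k := by rw [← mul_pow, hnorm]
  have hsum : (α ^ k + starRingEnd ℂ α ^ k) ^ 2 = 0 := by
    rw [hfloor] at h
    push_cast at h
    linear_combination h + 2 * hpow
  have hsq : α ^ (2 * k) = -(q : ℂ) ^ k := by
    linear_combination α ^ k * (pow_eq_zero_iff two_ne_zero).1 hsum - hpow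
  refine isOfFinOrder_iff_pow_eq_one.2 ⟨2 * (2 * k), by lia, ?_⟩
  have hqk : (q : ℂ) ^ k ≠ 0 := pow_ne_zero _ (mod_cast hq.ne')
  rw [pow_mul, div_sqrt_sq hq.le, div_pow, pow_right_comm, hsq, neg_sq, pow_mul' (q : ℂ),
    div_self (pow_ne_zero 2 hqk)]

lemma four_mul_sqrt_pow_mul_cos_sq_lt_one (hnorm : α * starRingEnd ℂ α = q)
    (h : α ^ n + starRingEnd ℂ α ^ n = -((⌊2 * √(q : ℝ) ^ n⌋ : ℤ) : ℂ)) :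
    4 * √(q : ℝ) ^ n * Real.cos (n * α.arg / 2) ^ 2 < 1 := by
  have hpow : α ^ n = (√(q : ℝ) ^ n : ℝ) * Complex.exp ((n * α.arg : ℝ) * Complex.I) := by
    conv_lhs => rw [← Complex.norm_mul_exp_arg_mul_I α, norm_eq_sqrt_of_mul_conj hnorm]
    rw [mul_pow, ← Complex.exp_nat_mul]
    push_cast
    ring_nf
  have hre : 2 * (√(q : ℝ) ^ n * Real.cos (n * α.arg)) = -⌊2 * √(q : ℝ) ^ n⌋ := by
    rw [← map_pow, Complex.add_conj, hpow, Complex.re_ofReal_mul, Complex.exp_ofReal_mul_I_re] at h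
    exact_mod_cast h
  have hcos : Real.cos (n * α.arg) = 2 * Real.cos (n * α.arg / 2) ^ 2 - 1 := by
    rw [← Real.cos_two_mul, mul_div_cancel₀ _ two_ne_zero]
  rw [hcos] at hre
  linarith [Int.lt_floor_add_one (2 * √(q : ℝ) ^ n)]

lemma exists_two_div_pi_mul_abs_sub_le_abs_cos {φ : ℝ} (hφ : 0 ≤ φ) :
    ∃ j : ℕ, j * Real.pi ≤ φ ∧ 2 / Real.pi * |φ - (2 * j + 1) * (Real.pi / 2)| ≤ |Real.cos φ| := by
  have hlower := Nat.floor_le (show 0 ≤ φ / Real.pi by positivity)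
  have hupper := Nat.lt_floor_add_one (φ / Real.pi)
  rw [le_div_iff₀ Real.pi_pos] at hlower
  rw [div_lt_iff₀ Real.pi_pos] at hupper
  refine ⟨⌊φ / Real.pi⌋₊, hlower, ?_⟩
  set δ := φ - (2 * ⌊φ / Real.pi⌋₊ + 1) * (Real.pi / 2) with hδ
  have hsin : |Real.sin δ| = |Real.cos φ| := by
    rw [show φ = δ + Real.pi / 2 + ⌊φ / Real.pi⌋₊ * Real.pi by rw [hδ]; ring,
      Real.cos_add_nat_mul_pi, Real.cos_add_pi_div_two, abs_mul, abs_pow, abs_neg, abs_neg, abs_one,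
      one_pow, one_mul]
  rw [← hsin]
  exact Real.mul_abs_le_abs_sin (abs_le.2 (by constructor <;> linarith))

lemma norm_exp_I_mul_sub_exp_I_mul_le (u v : ℝ) :
    ‖Complex.exp (Complex.I * u) - Complex.exp (Complex.I * v)‖ ≤ |u - v| := by
  have hfactor : Complex.exp (Complex.I * u) - Complex.exp (Complex.I * v) =
      Complex.exp (Complex.I * v) * (Complex.exp (Complex.I * (u - v : ℝ)) - 1) := by
    rw [mul_sub, ← Complex.exp_add]
    push_cast
    ring_nf
  rw [hfactor, norm_mul, mul_comm Complex.I v, Complex.norm_exp_ofReal_mul_I, one_mul]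
  exact Real.norm_exp_I_mul_ofReal_sub_one_le

lemma sq_div_eq_exp_I_mul (hq : 0 < q) (hnorm : α * starRingEnd ℂ α = q) :
    α ^ 2 / q = Complex.exp (Complex.I * (2 * α.arg : ℝ)) := by
  have hne : (√(q : ℝ) : ℂ) ≠ 0 := mod_cast (Real.sqrt_pos.2 (mod_cast hq)).ne'
  rw [← div_sqrt_sq hq.le]
  conv_lhs => rw [← Complex.norm_mul_exp_arg_mul_I α, norm_eq_sqrt_of_mul_conj hnorm]
  rw [mul_div_cancel_left₀ _ hne, ← Complex.exp_nat_mul]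
  push_cast
  ring_nf

lemma norm_sq_div_sub_exp_le (hq : 0 < q) (hnorm : α * starRingEnd ℂ α = q) (hn : 8 ≤ n) (m : ℕ) :
    ‖α ^ 2 / q - Complex.exp (2 * Real.pi * Complex.I * m / n)‖ ≤
      2 / Real.pi * |n * α.arg / 2 - m * (Real.pi / 2)| := by
  have hn0 : (8 : ℝ) ≤ n := mod_cast hn
  calc _ = ‖Complex.exp (Complex.I * (2 * α.arg : ℝ)) -
        Complex.exp (Complex.I * (2 * Real.pi * m / n : ℝ))‖ := by
        rw [sq_div_eq_exp_I_mul hq hnorm]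
        congr 3
        push_cast
        ring
    _ ≤ |2 * α.arg - 2 * Real.pi * m / n| := norm_exp_I_mul_sub_exp_I_mul_le _ _
    _ = 4 / n * |n * α.arg / 2 - m * (Real.pi / 2)| := by
        rw [← abs_of_pos (show (0 : ℝ) < 4 / n by positivity), ← abs_mul]
        congr 1
        field_simp
        ring
    _ ≤ 2 / Real.pi * |n * α.arg / 2 - m * (Real.pi / 2)| := by
        gcongr ?_ * _
        rw [div_le_div_iff₀ (by linarith) Real.pi_pos]
        linarith [Real.pi_lt_four]

theorem exists_norm_sub_exp_pow_four_mul_le_one (hq : 0 < q) (him : 0 ≤ α.im)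
    (hnorm : α * starRingEnd ℂ α = q) (hn : 8 ≤ n) (hodd : Odd n)
    (h : α ^ n + starRingEnd ℂ α ^ n = -((⌊2 * √(q : ℝ) ^ n⌋ : ℤ) : ℂ)) :
    ∃ m ≤ n, ‖α ^ 2 / q - Complex.exp (2 * Real.pi * Complex.I * m / n)‖ ^ 4 * (q : ℝ) ^ n ≤ 1 := by
  have harg := Complex.arg_nonneg_iff.2 him
  obtain ⟨j, hj, hcos⟩ :=
    exists_two_div_pi_mul_abs_sub_le_abs_cos (φ := n * α.arg / 2) (by positivity)
  refine ⟨2 * j + 1, ?_, ?_⟩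
  · have hjn : (2 * j : ℝ) * Real.pi ≤ n * Real.pi := by
      have := mul_le_mul_of_nonneg_left (Complex.arg_le_pi α) n.cast_nonneg (α := ℝ)
      linarith
    have hle : (2 * j : ℝ) ≤ n := le_of_mul_le_mul_right hjn Real.pi_pos
    have : 2 * j ≤ n := mod_cast hle
    obtain ⟨k, rfl⟩ := hodd
    lia
  set φ := n * α.arg / 2
  have hclose : ‖α ^ 2 / q - Complex.exp (2 * Real.pi * Complex.I * (2 * j + 1 : ℕ) / n)‖ ≤
      |Real.cos φ| :=
    (norm_sq_div_sub_exp_le hq hnorm hn _).trans (by simpa using hcos)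
  have hqn : (q : ℝ) ^ n = (√(q : ℝ) ^ n) ^ 2 := by
    rw [← pow_mul, mul_comm, pow_mul, Real.sq_sqrt (mod_cast hq.le)]
  have hsmall := four_mul_sqrt_pow_mul_cos_sq_lt_one hnorm h
  have hnonneg : 0 ≤ √(q : ℝ) ^ n * Real.cos φ ^ 2 := by positivity
  calc _ ≤ |Real.cos φ| ^ 4 * (q : ℝ) ^ n := by gcongr
    _ = (√(q : ℝ) ^ n * Real.cos φ ^ 2) ^ 2 := by
        rw [hqn, mul_pow, ← sq_abs (Real.cos φ)]
        ring
    _ ≤ 1 := pow_le_one₀ hnonneg (by linarith)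

lemma sq_div_sub_two_eq_two_mul_re (hq : 0 < q) (htrace : α + starRingEnd ℂ α = a)
    (hnorm : α * starRingEnd ℂ α = q) : (a : ℝ) ^ 2 / q - 2 = 2 * (α ^ 2 / (q : ℂ)).re := by
  have hq0 : (q : ℂ) ≠ 0 := mod_cast hq.ne'
  apply Complex.ofReal_injective
  rw [← Complex.add_conj, map_div₀, map_pow, map_intCast]
  push_cast
  rw [← htrace]
  field_simp
  rw [← hnorm]
  ring

lemma eq_or_eq_conj_of_norm_eq_one_of_re_eq {x ω : ℂ} (hx : ‖x‖ = 1) (hω : ‖ω‖ = 1)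
    (hre : x.re = ω.re) : x = ω ∨ x = starRingEnd ℂ ω := by
  have him : x.im ^ 2 = ω.im ^ 2 := by
    have hx' := Complex.sq_norm x
    have hω' := Complex.sq_norm ω
    rw [Complex.normSq_apply] at hx' hω'
    rw [hx] at hx'
    rw [hω, ← hre] at hω'
    linarith
  rcases sq_eq_sq_iff_eq_or_eq_neg.1 him with him | him
  · exact .inl (Complex.ext hre him)
  · exact .inr (Complex.ext (by simpa using hre) (by simpa using him))

theorem bddAbove_setOf_norm_sub_pow_four_mul_pow_le (hn : 13 ≤ n) (hodd : Odd n) {ω : ℂ}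
    (hω : ω ^ n = 1) :
    BddAbove {q : ℤ | 0 < q ∧ ∃ (a : ℤ) (α : ℂ), α + starRingEnd ℂ α = a ∧
      α * starRingEnd ℂ α = q ∧ ¬IsOfFinOrder (α ^ 2 / (q : ℂ)) ∧
      ‖α ^ 2 / (q : ℂ) - ω‖ ^ 4 * (q : ℝ) ^ n ≤ 1} := by
  obtain ⟨d, rfl⟩ := hodd
  refine (bddAbove_setOf_abs_sub_pow_four_mul_pow_le (by lia) hω).mono ?_
  rintro q ⟨hq, a, α, htrace, hnorm, hord, hclose⟩
  have : (0 : ℝ) < q := mod_cast hq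
  have hωnorm := Complex.norm_eq_one_of_pow_eq_one hω (by lia)
  refine ⟨hq, a, ?_⟩
  rw [sq_div_sub_two_eq_two_mul_re hq htrace hnorm]
  constructor
  · intro heq
    refine hord (isOfFinOrder_iff_pow_eq_one.2 ⟨2 * d + 1, by lia, ?_⟩)
    rcases eq_or_eq_conj_of_norm_eq_one_of_re_eq (norm_sq_div_eq_one hq hnorm) hωnorm
      (mul_left_cancel₀ two_ne_zero heq) with h | h
    · rw [h, hω]
    · rw [h, ← map_pow, hω, map_one]
  · have habs : |2 * (α ^ 2 / (q : ℂ)).re - 2 * ω.re| ≤ 2 * ‖α ^ 2 / (q : ℂ) - ω‖ := by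
      rw [← mul_sub, abs_mul, ← Complex.sub_re, abs_two]
      exact mul_le_mul_of_nonneg_left (Complex.abs_re_le_norm _) zero_le_two
    calc _ ≤ (2 * ‖α ^ 2 / (q : ℂ) - ω‖) ^ 4 * (q : ℝ) ^ (2 * d + 1) := by gcongr
      _ = 16 * (‖α ^ 2 / (q : ℂ) - ω‖ ^ 4 * (q : ℝ) ^ (2 * d + 1)) := by ring
      _ ≤ 16 := by linarith

lemma exp_two_pi_I_mul_div_pow_eq_one (hn : n ≠ 0) (m : ℕ) :
    Complex.exp (2 * Real.pi * Complex.I * m / n) ^ n = 1 := by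
  have hn0 : (n : ℂ) ≠ 0 := mod_cast hn
  rw [← Complex.exp_nat_mul, Complex.exp_eq_one_iff]
  refine ⟨m, ?_⟩
  push_cast
  field_simp

theorem exists_forall_le_of_ordinary : ∃ U : ℤ, ∀ (q a : ℤ) (α : ℂ) (n : ℕ), 2 ≤ q →
    α + starRingEnd ℂ α = a → α * starRingEnd ℂ α = q → 0 ≤ α.im →
    ¬IsOfFinOrder (α / (√(q : ℝ) : ℂ)) → 13 ≤ n →
    α ^ n + starRingEnd ℂ α ^ n = -((⌊2 * √(q : ℝ) ^ n⌋ : ℤ) : ℂ) → q ≤ U := by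
  obtain ⟨N, hN⟩ := exists_forall_lt_of_near_rootOfUnity
  have hbdd (n m : ℕ) (hn : 13 ≤ n ∧ Odd n) := bddAbove_setOf_norm_sub_pow_four_mul_pow_le hn.1 hn.2
    (exp_two_pi_I_mul_div_pow_eq_one (by lia : n ≠ 0) m)
  choose! U hU using hbdd
  obtain ⟨V, hV⟩ := (((Set.finite_lt_nat N).prod (Set.finite_le_nat N)).image
    fun nm => U nm.1 nm.2).bddAbove
  refine ⟨V, fun q a α n hq htrace hnorm him hord hn h => ?_⟩
  have hq0 : 0 < q := by lia
  rcases n.even_or_odd with heven | hodd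
  · exact absurd (isOfFinOrder_div_sqrt_of_even hq0 hnorm (by lia) heven h) hord
  have hord' : ¬IsOfFinOrder (α ^ 2 / (q : ℂ)) := fun hfin =>
    hord (IsOfFinOrder.of_pow (div_sqrt_sq (α := α) hq0.le ▸ hfin) two_ne_zero)
  obtain ⟨m, hmn, hclose⟩ :=
    exists_norm_sub_exp_pow_four_mul_le_one hq0 him hnorm (by lia) hodd h
  have hcast : (q.toNat : ℝ) = q := mod_cast Int.toNat_of_nonneg hq0.le
  have hnN : n < N := hN _ q.toNat n m (by lia) (hasLiouvilleBound_sq_div hq0 htrace hnorm)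
    (norm_sq_div_eq_one hq0 hnorm) hord' hmn (by rwa [hcast])
  exact (hU n m ⟨hn, hodd⟩ ⟨hq0, a, α, htrace, hnorm, hord', hclose⟩).trans
    (hV ⟨(n, m), ⟨hnN, hmn.trans hnN.le⟩, rfl⟩)

end Frobenius

end OrdinaryPairs

/-- There are only finitely many ordinary pairs `(q, a₁)` (with `q ≥ 2`,
`a₁² ≤ 4q`) such that `−aₙ = ⌊2·q^{n/2}⌋` for some integer `n ≥ 13`. -/
theorem finitely_many_ordinary_pairs :
    {p : ℤ × ℤ | 2 ≤ p.1 ∧ p.2 ^ 2 ≤ 4 * p.1 ∧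
      ∃ α : ℂ, α ^ 2 - p.2 * α + p.1 = 0 ∧ 0 ≤ α.im ∧
        (¬ ∃ k : ℕ, 0 < k ∧ (α / (Real.sqrt p.1 : ℂ)) ^ k = 1) ∧
        ∃ n : ℕ, 13 ≤ n ∧
          α ^ n + (starRingEnd ℂ) α ^ n = -((⌊2 * Real.sqrt p.1 ^ n⌋ : ℤ) : ℂ)}.Finite := by
  obtain ⟨U, hU⟩ := OrdinaryPairs.exists_forall_le_of_ordinary
  refine ((Set.finite_Icc 2 U).prod (Set.finite_Icc (-(4 * U)) (4 * U))).subset ?_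
  rintro ⟨q, a⟩ ⟨hq, hqa, α, hα, him, hord, n, hn, h⟩
  obtain ⟨htrace, hnorm⟩ := OrdinaryPairs.add_conj_and_mul_conj_of_sq_le hqa hα
  rw [← isOfFinOrder_iff_pow_eq_one] at hord
  have hqU : q ≤ U := hU q a α n hq htrace hnorm him hord hn h
  have habs : |a| ≤ 4 * U := by
    dsimp only at hq hqa
    exact abs_le_of_sq_le_sq (by nlinarith) (by lia)
  exact ⟨⟨hq, hqU⟩, abs_le.1 habs⟩
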